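/- For every j₀ ∈ ℚ there exists a constant c > 0, depending only on j₀, with the following property: for every elliptic curve E over ℚ with j-invariant equal to j₀, every integer N ≥ 1, and every sequence P₁,…,P_N of affine points of E(ℚ) whose x-coordinates form a non-trivial arithmetic progression, or whose y-coordinates form a non-trivial arithmetic progression, one has 1 + rank E(ℚ) ≥ c · log N. -/

import Mathlib

open scoped TensorProduct

/-- The rank of an abelian group `G`, i.e. `dim_ℚ (G ⊗_ℤ ℚ)`. -/
noncomputable def grpRank (G : Type*) [AddCommGroup G] : ℕ :=
  Module.finrank ℚ (ℚ ⊗[ℤ] G)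

/-- `u 0, …, u (N-1)` is a non-trivial arithmetic progression: there are `a` and `b ≠ 0`
with `uᵢ = a + i·b` (for the `1`-based index `i`). -/
def IsNontrivAP {F : Type*} [Field F] {N : ℕ} (u : Fin N → F) : Prop :=
  ∃ a b : F, b ≠ 0 ∧ ∀ i : Fin N, u i = a + (((i : ℕ) + 1 : ℕ) : F) * b

namespace APRank
open Function

/-! ### Places of `ℚ` -/

/-- Places of `ℚ`: `none` is the archimedean one. -/
abbrev Pl := Option (NumberField.FinitePlace ℚ)

/-- The absolute value at a place. -/
noncomputable def av : Pl → AbsoluteValue ℚ ℝ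
  | none => Rat.AbsoluteValue.real
  | some v => v.val

lemma av_none (q : ℚ) : av none q = |(q : ℝ)| := by
  simp [av, Rat.AbsoluteValue.real_eq_abs]

lemma av_some (v : NumberField.FinitePlace ℚ) (q : ℚ) : av (some v) q = v q := rfl

lemma av_some_add_le (v : NumberField.FinitePlace ℚ) (x y : ℚ) :
    av (some v) (x + y) ≤ max (av (some v) x) (av (some v) y) :=
  NumberField.FinitePlace.add_le v x y

lemma av_some_int_le (v : NumberField.FinitePlace ℚ) (n : ℤ) : av (some v) (n : ℚ) ≤ 1 := by
  have hna : IsNonarchimedean (av (some v)) := av_some_add_le v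
  exact hna.apply_intCast_le_one

lemma hasFiniteSupport_of_some {f : Pl → ℝ} (h : HasFiniteSupport (fun v => f (some v))) :
    HasFiniteSupport f := by
  have h2 : (Function.support f) ⊆ insert none (Option.some '' (support fun v => f (some v))) := by
    intro v hv
    cases v with
    | none => simp
    | some w => right; exact ⟨w, hv, rfl⟩
  exact Set.Finite.subset ((Set.Finite.image _ h).insert none) h2

lemma hfs_some {f : Pl → ℝ} (h : HasFiniteSupport f) :
    HasFiniteSupport (fun v => f (some v)) :=
  Set.Finite.preimage (f := Option.some) (Option.some_injective _).injOn h

lemma hfm_av {q : ℚ} (hq : q ≠ 0) :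
    HasFiniteMulSupport (fun v : NumberField.FinitePlace ℚ => v q) :=
  NumberField.FinitePlace.hasFiniteMulSupport hq

lemma hfs_comp {q : ℚ} (hq : q ≠ 0) (g : ℝ → ℝ) (hg : g 1 = 0) :
    HasFiniteSupport (fun v : Pl => g (av v q)) := by
  apply hasFiniteSupport_of_some
  refine Set.Finite.subset (hfm_av hq) ?_
  intro v hv
  simp only [mem_support, mem_mulSupport, av_some] at *
  intro h; rw [h] at hv; exact hv hg

lemma hfs_log {q : ℚ} (hq : q ≠ 0) : HasFiniteSupport (fun v : Pl => Real.log (av v q)) :=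
  hfs_comp hq _ Real.log_one

lemma prodFormula {q : ℚ} (hq : q ≠ 0) : ∑ᶠ v : Pl, Real.log (av v q) = 0 := by
  rw [finsum_option (hfs_some (hfs_log hq))]
  have h := NumberField.prod_abs_eq_one hq
  have h1 : (∏ w : NumberField.InfinitePlace ℚ, w q ^ w.mult) = |(q:ℝ)| := by
    rw [Fintype.prod_subsingleton _ Rat.infinitePlace]
    simp [Rat.infinitePlace_apply, NumberField.InfinitePlace.mult, Rat.isReal_infinitePlace]
  rw [h1] at h
  have hf : (mulSupport (fun v : NumberField.FinitePlace ℚ => v q)).Finite := hfm_av hq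
  have hpos : ∀ v : NumberField.FinitePlace ℚ, v q ≠ 0 := fun v => by
    simpa using hq
  have h2 : ∑ᶠ v : NumberField.FinitePlace ℚ, Real.log (v q)
      = Real.log (∏ᶠ v : NumberField.FinitePlace ℚ, v q) := by
    rw [finprod_eq_prod_of_mulSupport_subset (s := Set.Finite.toFinset hf) _ (by simp),
      finsum_eq_sum_of_support_subset (s := Set.Finite.toFinset hf), Real.log_prod]
    · intro v _; exact hpos v
    · intro v hv
      simp only [mem_support, Set.Finite.coe_toFinset, mem_mulSupport] at *
      intro h; rw [h] at hv; simp at hv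
  simp only [av_none, av_some]
  rw [h2]
  have hq' : |(q:ℝ)| ≠ 0 := by simpa using hq
  rw [← Real.log_mul hq' (by intro h0; rw [h0] at h; simp at h), h, Real.log_one]

/-- log height in terms of places -/
lemma logHeight_pl (q : ℚ) (hq : q ≠ 0) :
    ∑ᶠ v : Pl, Real.log (max (av v q) 1) = Real.log (max q.num.natAbs q.den : ℕ) := by
  rw [finsum_option (hfs_some (hfs_comp hq (fun t => Real.log (max t 1)) (by simp)))]
  have h := NumberField.logHeight₁_eq (K := ℚ) q
  rw [Rat.logHeight₁_eq_log_max, Fintype.sum_subsingleton _ Rat.infinitePlace] at h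
  rw [h]
  congr 1
  · simp [Rat.infinitePlace_apply, NumberField.InfinitePlace.mult, Rat.isReal_infinitePlace, av_none, Real.posLog_eq_log_max_one, max_comm]
  · apply finsum_congr; intro v
    rw [Real.posLog_eq_log_max_one (by positivity), max_comm]; rfl

end APRank

namespace APRank
set_option linter.unusedVariables false
set_option linter.unusedSectionVars false

/-! ### Local estimates -/

/-- Local data at one place: an absolute value, a fudge constant `τ`, a scale `w`. -/
structure Loc {F : Type*} [Field F] (v : AbsoluteValue F ℝ) (τ w : ℝ) (a b : F) : Prop where
  one_le : 1 ≤ τ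
  wpos : 0 < w
  add' : ∀ x y, v (x + y) ≤ τ * max (v x) (v y)
  nat' : ∀ n : ℕ, n ≤ 100 → v n ≤ τ
  four : 1 ≤ τ * v 4
  ha : v a ≤ τ * w ^ 4
  hb : v b ≤ τ * w ^ 6
  disc : v (4 * a ^ 3 + 27 * b ^ 2) = w ^ 12

/-- `|x| ≤ τ ^ k * B`. -/
def Bd {F : Type*} [Field F] (v : AbsoluteValue F ℝ) (τ : ℝ) (k : ℕ) (B : ℝ) (x : F) : Prop :=
  v x ≤ τ ^ k * B

/-- local size of a point -/
noncomputable def mu {F : Type*} [Field F] (v : AbsoluteValue F ℝ) (w : ℝ) (x : F) : ℝ :=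
  max (Real.sqrt (v x)) w

section
variable {F : Type*} [Field F] {v : AbsoluteValue F ℝ} {τ w : ℝ} {a b : F}

lemma le_mu_sq (v : AbsoluteValue F ℝ) (w : ℝ) (x : F) : v x ≤ mu v w x ^ 2 := by
  have h1 : Real.sqrt (v x) ≤ mu v w x := le_max_left _ _
  calc v x = Real.sqrt (v x) ^ 2 := (Real.sq_sqrt (v.nonneg x)).symm
    _ ≤ _ := pow_le_pow_left₀ (Real.sqrt_nonneg _) h1 2

lemma w_le_mu (v : AbsoluteValue F ℝ) (w : ℝ) (x : F) : w ≤ mu v w x := le_max_right _ _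

lemma mu_sq_mul_le (hw : 0 ≤ w) {x : F} {s B : ℝ} (hs : 0 ≤ s) (h1 : v x * s ≤ B)
    (h2 : w ^ 2 * s ≤ B) : mu v w x ^ 2 * s ≤ B := by
  unfold mu
  rcases max_cases (Real.sqrt (v x)) w with h | h
  · rw [h.1, Real.sq_sqrt (v.nonneg x)]; exact h1
  · rw [h.1]; exact h2

lemma mu_sq_eq (hw : 0 ≤ w) {x : F} (h : w ^ 2 ≤ v x) : mu v w x ^ 2 = v x := by
  have : w ≤ Real.sqrt (v x) := Real.le_sqrt_of_sq_le h
  unfold mu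
  rw [max_eq_left this, Real.sq_sqrt (v.nonneg x)]

namespace Loc
variable (L : Loc v τ w a b)
include L

lemma τpos : 0 < τ := lt_of_lt_of_le one_pos L.one_le

lemma mu_pos (x : F) : 0 < mu v w x := lt_of_lt_of_le L.wpos (w_le_mu v w x)

lemma pow_le_pow {k l : ℕ} (h : k ≤ l) : τ ^ k ≤ τ ^ l := pow_le_pow_right₀ L.one_le h

lemma one_le_pow (k : ℕ) : 1 ≤ τ ^ k := one_le_pow₀ L.one_le

lemma Bnonneg {k : ℕ} {B : ℝ} {x : F} (h : Bd v τ k B x) : 0 ≤ B := by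
  have h0 := v.nonneg x
  have := pow_pos L.τpos k
  unfold Bd at h
  by_contra hB
  push Not at hB
  nlinarith

lemma bmono {k l : ℕ} {B B' : ℝ} {x : F} (h : Bd v τ k B x) (hk : k ≤ l) (hB : B ≤ B') :
    Bd v τ l B' x := by
  have h0 := L.Bnonneg h
  exact le_trans h (mul_le_mul (L.pow_le_pow hk) hB h0 (pow_pos L.τpos l).le)

lemma badd {k l : ℕ} {B : ℝ} {x y : F} (hx : Bd v τ k B x) (hy : Bd v τ l B y) :
    Bd v τ (k + l + 1) B (x + y) := by
  have h1 : v x ≤ τ ^ (k + l) * B := L.bmono hx (by omega) le_rfl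
  have h2 : v y ≤ τ ^ (k + l) * B := L.bmono hy (by omega) le_rfl
  have h3 := L.add' x y
  have : τ * max (v x) (v y) ≤ τ * (τ ^ (k + l) * B) :=
    mul_le_mul_of_nonneg_left (max_le h1 h2) L.τpos.le
  unfold Bd
  calc _ ≤ _ := h3
    _ ≤ _ := this
    _ = _ := by ring

lemma bneg {k : ℕ} {B : ℝ} {x : F} (hx : Bd v τ k B x) : Bd v τ k B (-x) := by
  unfold Bd at *; rwa [v.map_neg]

lemma bsub {k l : ℕ} {B : ℝ} {x y : F} (hx : Bd v τ k B x) (hy : Bd v τ l B y) :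
    Bd v τ (k + l + 1) B (x - y) := by
  rw [sub_eq_add_neg]; exact L.badd hx (L.bneg hy)

lemma bmul {k l : ℕ} {B B' : ℝ} {x y : F} (hx : Bd v τ k B x) (hy : Bd v τ l B' y) :
    Bd v τ (k + l) (B * B') (x * y) := by
  unfold Bd at *
  rw [v.map_mul]
  have := pow_pos L.τpos k
  calc _ ≤ (τ ^ k * B) * (τ ^ l * B') :=
        mul_le_mul hx hy (v.nonneg _) ((v.nonneg x).trans hx)
    _ = _ := by ring

lemma bnat {n : ℕ} {k : ℕ} {B : ℝ} {x : F} (hn : n ≤ 100) (hx : Bd v τ k B x) :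
    Bd v τ (k + 1) B (n * x) := by
  have h1 : Bd v τ 1 1 (n : F) := by simpa [Bd] using L.nat' n hn
  have := L.bmul h1 hx
  rwa [one_mul, add_comm] at this

lemma bnum (n : ℕ) [n.AtLeastTwo] (hn : n ≤ 100) {k : ℕ} {B : ℝ} {x : F} (hx : Bd v τ k B x) :
    Bd v τ (k + 1) B (OfNat.ofNat n * x) := by
  have := L.bnat hn hx
  rwa [show (OfNat.ofNat n : F) = ((n : ℕ) : F) from (Nat.cast_ofNat).symm]

/-- homogeneous multiplication -/
lemma hmul {M : ℝ} {k l d e f : ℕ} {x y : F} (hx : Bd v τ k (M ^ d) x) (hy : Bd v τ l (M ^ e) y)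
    (hf : d + e = f := by rfl) :
    Bd v τ (k + l) (M ^ f) (x * y) := by
  subst hf
  rw [pow_add]; exact L.bmul hx hy

lemma hpow {M : ℝ} {k d : ℕ} {x : F} (hx : Bd v τ k (M ^ d) x) (n : ℕ) {f : ℕ}
    (hf : d * n = f := by rfl) :
    Bd v τ (k * n) (M ^ f) (x ^ n) := by
  subst hf
  unfold Bd at *
  rw [v.map_pow, pow_mul, pow_mul, ← mul_pow]
  exact pow_le_pow_left₀ (v.nonneg x) hx n

lemma hx {M : ℝ} {x : F} (hM : mu v w x ≤ M) : Bd v τ 0 (M ^ 2) x := by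
  unfold Bd
  simpa using (le_mu_sq v w x).trans (pow_le_pow_left₀ (L.mu_pos x).le hM 2)

lemma bha {M : ℝ} (hM : w ≤ M) : Bd v τ 1 (M ^ 4) a := by
  refine L.bmono (k := 1) (B := w ^ 4) (by simpa [Bd] using L.ha) le_rfl ?_
  exact pow_le_pow_left₀ L.wpos.le hM 4

lemma bhb {M : ℝ} (hM : w ≤ M) : Bd v τ 1 (M ^ 6) b := by
  refine L.bmono (k := 1) (B := w ^ 6) (by simpa [Bd] using L.hb) le_rfl ?_
  exact pow_le_pow_left₀ L.wpos.le hM 6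

lemma bsq {k d : ℕ} {M : ℝ} (hM : 0 ≤ M) {x : F} (h : Bd v τ (k * 2) (M ^ (d * 2)) (x ^ 2)) :
    Bd v τ k (M ^ d) x := by
  unfold Bd at *
  rw [v.map_pow, pow_mul, pow_mul, ← mul_pow] at h
  exact (le_abs_self _).trans (abs_le_of_sq_le_sq h (by have := L.τpos; positivity))

/-- B1 -/
lemma hy {M : ℝ} {x y : F} (h : y ^ 2 = x ^ 3 + a * x + b) (hM : mu v w x ≤ M) :
    Bd v τ 3 (M ^ 3) y := by
  have hw := (w_le_mu v w x).trans hM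
  have hx := L.hx hM
  apply L.bsq ((L.mu_pos x).le.trans hM)
  rw [h]
  exact L.bmono (L.badd (L.badd (L.hpow hx 3) (L.hmul (L.bha hw) hx)) (L.bhb hw)) (by norm_num) le_rfl

/-- B2 -/
lemma add_bound {M : ℝ} {x y x' y' x3 : F} (h : y ^ 2 = x ^ 3 + a * x + b)
    (h' : y' ^ 2 = x' ^ 3 + a * x' + b) (hM : mu v w x ≤ M) (hM' : mu v w x' ≤ M)
    (h3 : x3 * (x - x') ^ 2 = (y - y') ^ 2 - (x + x') * (x - x') ^ 2) :
    mu v w x3 ^ 2 * v (x - x') ^ 2 ≤ τ ^ 40 * M ^ 6 := by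
  have hw := (w_le_mu v w x).trans hM
  have hx := L.hx hM
  have hx' := L.hx hM'
  have e : x3 * (x - x') ^ 2 = (x + x') * (x * x' + a) + 2 * b - 2 * (y * y') := by
    rw [h3]; linear_combination h + h'
  have hM0 : 0 ≤ M := (L.mu_pos x).le.trans hM
  have key : Bd v τ 40 (M ^ 6) (x3 * (x - x') ^ 2) := by
    rw [e]
    exact L.bmono (L.bsub (L.badd (L.hmul (L.badd hx hx') (L.badd (L.hmul hx hx') (L.bha hw)))
      (L.bnum 2 (by norm_num) (L.bhb hw))) (L.bnum 2 (by norm_num) (L.hmul (L.hy h hM) (L.hy h' hM'))))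
      (by norm_num) le_rfl
  apply mu_sq_mul_le L.wpos.le (by positivity)
  · rw [← v.map_pow, ← v.map_mul]; exact key
  · have h2 : Bd v τ 40 (M ^ 4) ((x - x') ^ 2) :=
      L.bmono (L.hpow (L.bsub hx hx') 2) (by norm_num) le_rfl
    unfold Bd at h2
    rw [v.map_pow] at h2
    calc w ^ 2 * v (x - x') ^ 2 ≤ M ^ 2 * (τ ^ 40 * M ^ 4) :=
          mul_le_mul (pow_le_pow_left₀ L.wpos.le hw 2) h2 (by positivity) (by positivity)
      _ = _ := by ring

/-- strict dominance -/
lemma dom {k : ℕ} {x y z : F} {B : ℝ} (e : x = y + z) (hz : v z ≤ τ ^ k * B) (hB : τ ^ (k + 1) * B < v x) :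
    v x ≤ τ * v y := by
  have h := L.add' y z
  rw [← e] at h
  rcases max_cases (v y) (v z) with h1 | h1
  · rwa [h1.1] at h
  · rw [h1.1] at h
    exfalso
    have : τ * v z ≤ τ * (τ ^ k * B) := mul_le_mul_of_nonneg_left hz L.τpos.le
    have e2 : τ * (τ ^ k * B) = τ ^ (k + 1) * B := by ring
    linarith

end Loc
end
end APRank

namespace APRank
set_option linter.unusedVariables false
set_option linter.unusedSectionVars false
section
variable {F : Type*} [Field F] {v : AbsoluteValue F ℝ} {τ w : ℝ} {a b : F}
namespace Loc
variable (L : Loc v τ w a b)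
include L

/-- B3 -/
lemma dbl_le {x y x2 : F} (h : y ^ 2 = x ^ 3 + a * x + b)
    (h2 : x2 * (4 * y ^ 2) = x ^ 4 - 2 * (a * x ^ 2) - 8 * (b * x) + a ^ 2) :
    mu v w x2 ^ 2 * v (4 * y ^ 2) ≤ τ ^ 40 * mu v w x ^ 8 := by
  have hw := w_le_mu v w x
  have hx := L.hx (le_refl (mu v w x))
  apply mu_sq_mul_le L.wpos.le (v.nonneg _)
  · rw [← v.map_mul, h2]
    exact L.bmono (L.badd (L.bsub (L.bsub (L.hpow hx 4)
      (L.bnum 2 (by norm_num) (L.hmul (L.bha hw) (L.hpow hx 2))))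
      (L.bnum 8 (by norm_num) (L.hmul (L.bhb hw) hx))) (L.hpow (L.bha hw) 2)) (by norm_num) le_rfl
  · have h3 : Bd v τ 40 (mu v w x ^ 6) (4 * y ^ 2) :=
      L.bmono (L.bnum 4 (by norm_num) (L.hpow (L.hy h le_rfl) 2)) (by norm_num) le_rfl
    have hm := (L.mu_pos x).le
    calc w ^ 2 * v (4 * y ^ 2) ≤ mu v w x ^ 2 * (τ ^ 40 * mu v w x ^ 6) :=
          mul_le_mul (pow_le_pow_left₀ L.wpos.le hw 2) h3 (v.nonneg _) (by positivity)
      _ = _ := by ring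

lemma bself (x : F) : Bd v τ 0 (v x) x := by simp [Bd]
lemma bselfpow (x : F) (n : ℕ) : Bd v τ 0 (v x ^ n) (x ^ n) := by simp [Bd]

/-- large `x` : `x ^ 3` is dominated by `y ^ 2` -/
lemma large_y {M : ℝ} (hwM : w ≤ M) {x y : F} (h : y ^ 2 = x ^ 3 + a * x + b)
    (hl : τ ^ 10 * M ^ 2 < v x) : v x ^ 3 ≤ τ * v y ^ 2 := by
  have hM : 0 < M := L.wpos.trans_le hwM
  have hX : M ^ 2 ≤ v x := by
    refine le_trans ?_ hl.le
    have := L.one_le_pow 10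
    nlinarith [sq_nonneg M]
  have hX0 : 0 < v x := lt_of_lt_of_le (by positivity) hX
  have e : x ^ 3 = y ^ 2 + (-(a * x) - b) := by rw [h]; ring
  rw [← v.map_pow, ← v.map_pow]
  refine L.dom (k := 9) (B := M ^ 2 * v x ^ 2) e ?_ ?_
  · refine L.bmono (L.bsub (L.bneg (L.bmono (L.bmul (L.bha hwM) (L.bself x)) le_rfl ?_))
      (L.bmono (L.bhb hwM) le_rfl ?_)) (by norm_num) le_rfl
    · calc M ^ 4 * v x = M ^ 2 * (M ^ 2 * v x) := by ring
        _ ≤ M ^ 2 * (v x * v x) := by gcongr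
        _ = _ := by ring
    · calc M ^ 6 = M ^ 2 * (M ^ 2) ^ 2 := by ring
        _ ≤ M ^ 2 * (v x) ^ 2 := by gcongr
  · rw [v.map_pow]
    calc τ ^ (9 + 1) * (M ^ 2 * v x ^ 2) = (τ ^ 10 * M ^ 2) * v x ^ 2 := by ring
      _ < v x * v x ^ 2 := by gcongr
      _ = _ := by ring

lemma large_F {x : F}
    (hl : τ ^ 20 * w ^ 2 < v x) :
    v x ^ 4 ≤ τ * v (x ^ 4 - 2 * (a * x ^ 2) - 8 * (b * x) + a ^ 2) := by
  have hw0 := L.wpos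
  have hX : w ^ 2 ≤ v x := by
    refine le_trans ?_ hl.le
    have := L.one_le_pow 20
    nlinarith [sq_nonneg w]
  have hX0 : 0 < v x := lt_of_lt_of_le (by positivity) hX
  have e : x ^ 4 = (x ^ 4 - 2 * (a * x ^ 2) - 8 * (b * x) + a ^ 2)
    + (2 * (a * x ^ 2) + 8 * (b * x) - a ^ 2) := by ring
  rw [← v.map_pow]
  refine L.dom (k := 19) (B := w ^ 2 * v x ^ 3) e ?_ ?_
  · refine L.bmono (L.bsub (L.badd (L.bnum 2 (by norm_num)
      (L.bmono (L.bmul (L.bha le_rfl) (L.bselfpow x 2)) le_rfl ?_))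
      (L.bnum 8 (by norm_num) (L.bmono (L.bmul (L.bhb le_rfl) (L.bself x)) le_rfl ?_)))
      (L.bmono (L.hpow (L.bha le_rfl) 2) le_rfl ?_)) (by norm_num) le_rfl
    · calc w ^ 4 * v x ^ 2 = w ^ 2 * (w ^ 2 * v x ^ 2) := by ring
        _ ≤ w ^ 2 * (v x * v x ^ 2) := by gcongr
        _ = _ := by ring
    · calc w ^ 6 * v x = w ^ 2 * ((w ^ 2) ^ 2 * v x) := by ring
        _ ≤ w ^ 2 * ((v x) ^ 2 * v x) := by gcongr
        _ = _ := by ring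
    · calc w ^ (4 * 2) = w ^ 2 * (w ^ 2) ^ 3 := by ring
        _ ≤ w ^ 2 * (v x) ^ 3 := by gcongr
  · rw [v.map_pow]
    calc τ ^ (19 + 1) * (w ^ 2 * v x ^ 3) = (τ ^ 20 * w ^ 2) * v x ^ 3 := by ring
      _ < v x * v x ^ 3 := by gcongr
      _ = _ := by ring

lemma mu_small {M : ℝ} (hwM : w ≤ M) {k : ℕ} {x : F} (h : v x ≤ τ ^ k * M ^ 2) :
    mu v w x ^ 2 ≤ τ ^ k * M ^ 2 := by
  have := mu_sq_mul_le (v := v) (w := w) (s := 1) (B := τ ^ k * M ^ 2) L.wpos.le (x := x) zero_le_one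
    (by simpa using h) ?_
  · simpa using this
  · have h1 := L.one_le_pow k
    have h2 := pow_le_pow_left₀ L.wpos.le hwM 2
    nlinarith [sq_nonneg w, sq_nonneg M]

/-- B4b -/
lemma mu_of_y_zero {x : F} (h : 0 = x ^ 3 + a * x + b) : mu v w x ^ 2 ≤ τ ^ 10 * w ^ 2 := by
  apply L.mu_small le_rfl
  by_contra hl
  push Not at hl
  have := L.large_y (y := 0) le_rfl (by simpa using h) hl
  have hx : 0 < v x := lt_of_le_of_lt (by have := L.τpos; positivity) hl
  simp at this
  have : 0 < v x ^ 3 := by positivity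
  linarith

/-- B4 -/
lemma le_dbl {x y x2 : F} (h : y ^ 2 = x ^ 3 + a * x + b)
    (h2 : x2 * (4 * y ^ 2) = x ^ 4 - 2 * (a * x ^ 2) - 8 * (b * x) + a ^ 2) :
    mu v w x ^ 8 ≤ τ ^ 200 * (mu v w x2 ^ 2 * v (4 * y ^ 2)) := by
  have hw0 := L.wpos
  have hτ := L.τpos
  have hx2 := le_mu_sq v w x2
  have hm2 := L.mu_pos x2
  have hFle : v (x ^ 4 - 2 * (a * x ^ 2) - 8 * (b * x) + a ^ 2) ≤ mu v w x2 ^ 2 * v (4 * y ^ 2) := by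
    rw [← h2, v.map_mul]; gcongr
  by_cases hl : τ ^ 20 * w ^ 2 < v x
  · have h3 := L.large_F hl
    have h4 : mu v w x ^ 2 = v x := mu_sq_eq L.wpos.le (by
      refine le_trans ?_ hl.le
      have := L.one_le_pow 20
      nlinarith [sq_nonneg w])
    calc mu v w x ^ 8 = (mu v w x ^ 2) ^ 4 := by ring
      _ = v x ^ 4 := by rw [h4]
      _ ≤ τ ^ 1 * (mu v w x2 ^ 2 * v (4 * y ^ 2)) := by
        rw [pow_one]; exact h3.trans (by gcongr)
      _ ≤ _ := by gcongr; exact L.one_le; norm_num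
  · push Not at hl
    have hm := L.mu_small le_rfl hl
    have hbx : Bd v τ 20 (w ^ 2) x := hl
    have hm8 : mu v w x ^ 8 ≤ τ ^ 80 * w ^ 8 := by
      calc mu v w x ^ 8 = (mu v w x ^ 2) ^ 4 := by ring
        _ ≤ (τ ^ 20 * w ^ 2) ^ 4 := by gcongr
        _ = _ := by ring
    have e : 4 * a ^ 3 + 27 * b ^ 2 = (3 * x ^ 2 + 4 * a) * (x ^ 4 - 2 * (a * x ^ 2) - 8 * (b * x) + a ^ 2)
      - (3 * x ^ 3 - 5 * (a * x) - 27 * b) * y ^ 2 := by rw [h]; ring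
    have d1 : Bd v τ 60 (w ^ 4) (3 * x ^ 2 + 4 * a) :=
      L.bmono (L.badd (L.bnum 3 (by norm_num) (L.hpow hbx 2)) (L.bnum 4 (by norm_num) (L.bha le_rfl)))
        (by norm_num) le_rfl
    have d2 : Bd v τ 100 (w ^ 6) (3 * x ^ 3 - 5 * (a * x) - 27 * b) :=
      L.bmono (L.bsub (L.bsub (L.bnum 3 (by norm_num) (L.hpow hbx 3))
        (L.bnum 5 (by norm_num) (L.hmul (L.bha le_rfl) hbx))) (L.bnum 27 (by norm_num) (L.bhb le_rfl)))
        (by norm_num) le_rfl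
    unfold Bd at d1 d2
    set Fx := x ^ 4 - 2 * (a * x ^ 2) - 8 * (b * x) + a ^ 2 with hFx
    have h5 := L.add' ((3 * x ^ 2 + 4 * a) * Fx) (-((3 * x ^ 3 - 5 * (a * x) - 27 * b) * y ^ 2))
    rw [← sub_eq_add_neg, ← e, L.disc, v.map_neg, v.map_mul, v.map_mul] at h5
    set G := mu v w x2 ^ 2 * v (4 * y ^ 2) with hG
    have hG0 : 0 ≤ G := by have := v.nonneg (4 * y ^ 2); positivity
    have hy4 : v (y ^ 2) * w ^ 2 ≤ τ * G := by
      have h6 := L.four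
      have h7 : v (y ^ 2) ≤ τ * v (4 * y ^ 2) := by
        rw [v.map_mul]
        have := v.nonneg (y ^ 2)
        nlinarith
      calc v (y ^ 2) * w ^ 2 ≤ (τ * v (4 * y ^ 2)) * mu v w x2 ^ 2 := by
            have := w_le_mu v w x2
            have := v.nonneg (4 * y ^ 2)
            gcongr
        _ = _ := by rw [hG]; ring
    have h8 : w ^ 12 ≤ τ * (τ ^ 101 * (w ^ 4 * G)) := by
      refine h5.trans ?_
      gcongr
      apply max_le
      · calc _ ≤ (τ ^ 60 * w ^ 4) * G := by gcongr
          _ = τ ^ 60 * (w ^ 4 * G) := by ring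
          _ ≤ _ := by
            gcongr
            · exact L.one_le
            · norm_num
      · calc _ ≤ (τ ^ 100 * w ^ 6) * v (y ^ 2) := by gcongr
          _ = τ ^ 100 * w ^ 4 * (v (y ^ 2) * w ^ 2) := by ring
          _ ≤ τ ^ 100 * w ^ 4 * (τ * G) := by gcongr
          _ = _ := by ring
    have h9 : w ^ 8 ≤ τ ^ 102 * G := by
      have : w ^ 4 * w ^ 8 ≤ w ^ 4 * (τ ^ 102 * G) := by
        calc _ = w ^ 12 := by ring
          _ ≤ _ := h8
          _ = _ := by ring
      exact le_of_mul_le_mul_left this (by positivity)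
    calc _ ≤ _ := hm8
      _ ≤ τ ^ 80 * (τ ^ 102 * G) := by gcongr
      _ = τ ^ 182 * G := by ring
      _ ≤ _ := by
        gcongr
        · exact L.one_le
        · norm_num

end Loc
end
end APRank

namespace APRank
set_option linter.unusedVariables false
set_option linter.unusedSectionVars false

/-- Determinant with a column of ones. -/
def dt {F : Type*} [Field F] (x y z p q r : F) : F := x * (q - r) + y * (r - p) + z * (p - q)

section
variable {F : Type*} [Field F] {v : AbsoluteValue F ℝ} {τ w : ℝ} {a b : F}
namespace Loc
variable (L : Loc v τ w a b)
include L

lemma τle {k l : ℕ} (h : k ≤ l) {B : ℝ} (hB : 0 ≤ B) : τ ^ k * B ≤ τ ^ l * B :=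
  mul_le_mul_of_nonneg_right (L.pow_le_pow h) hB

lemma M_le_of_large {M : ℝ} (hwM : w ≤ M) {k : ℕ} {x : F} (hl : τ ^ k * M ^ 2 < v x) :
    M ^ 2 ≤ v x ∧ M ≤ mu v w x ∧ mu v w x ^ 2 = v x := by
  have h1 : M ^ 2 ≤ v x := by
    refine le_trans ?_ hl.le
    have := L.one_le_pow k
    nlinarith [sq_nonneg M]
  refine ⟨h1, (Real.le_sqrt_of_sq_le h1).trans (le_max_left _ _), mu_sq_eq L.wpos.le ?_⟩
  exact (pow_le_pow_left₀ L.wpos.le hwM 2).trans h1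

/-- B5' -/
lemma large_add {M : ℝ} {x y q r x3 : F} (h : y ^ 2 = x ^ 3 + a * x + b)
    (h' : r ^ 2 = q ^ 3 + a * q + b) (hM : mu v w q ≤ M) (hl : τ ^ 10 * M ^ 2 < v x)
    (h3 : x ≠ q → x3 * (x - q) ^ 2 = (y - r) ^ 2 - (x + q) * (x - q) ^ 2) :
    v (x3 - q) * mu v w x ≤ τ ^ 40 * M ^ 3 ∧ mu v w x3 ≤ τ ^ 21 * M := by
  have hwM := (w_le_mu v w q).trans hM
  have hM0 : 0 < M := L.wpos.trans_le hwM
  have hτ := L.τpos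
  obtain ⟨h1, h2, h4⟩ := L.M_le_of_large hwM hl
  have hq := L.hx hM
  have hxq : v x ≤ τ * v (x - q) := by
    refine L.dom (k := 0) (B := M ^ 2) (by ring : x = (x - q) + q) hq ?_
    exact lt_of_le_of_lt (L.τle (by norm_num) (by positivity)) hl
  have hX0 : 0 < v x := lt_of_lt_of_le (by positivity) h1
  have hne : x ≠ q := by
    rintro rfl
    simp at hxq
    exact absurd hX0 (by simp [hxq])
  set m := mu v w x with hm
  have hm0 : 0 < m := L.mu_pos x
  have e : (x3 - q) * (x - q) ^ 2 = 3 * (x * q ^ 2) + a * x + a * q + 2 * b - q ^ 3 - 2 * (y * r) := by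
    have := h3 hne
    linear_combination this + h + h'
  have hx := L.hx (le_refl m)
  have hy := L.hy h (le_refl m)
  have hr := L.hy h' hM
  have key : Bd v τ 30 (m ^ 3 * M ^ 3) ((x3 - q) * (x - q) ^ 2) := by
    rw [e]
    have i1 : M ^ 6 ≤ m ^ 3 * M ^ 3 := by
      calc M ^ 6 = M ^ 3 * M ^ 3 := by ring
        _ ≤ m ^ 3 * M ^ 3 := by gcongr
    have i2 : m ^ 2 * M ^ 4 ≤ m ^ 3 * M ^ 3 := by
      calc m ^ 2 * M ^ 4 = m ^ 2 * M * M ^ 3 := by ring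
        _ ≤ m ^ 2 * m * M ^ 3 := by gcongr
        _ = _ := by ring
    exact L.bmono (L.bsub (L.bsub (L.badd (L.badd (L.badd (L.bnum 3 (by norm_num)
      (L.bmono (L.bmul hx (L.hpow hq 2)) le_rfl i2))
      (L.bmono (L.bmul (L.bha hwM) hx) le_rfl (by rw [mul_comm]; exact i2)))
      (L.bmono (L.hmul (L.bha hwM) hq) le_rfl i1))
      (L.bmono (L.bnum 2 (by norm_num) (L.bhb hwM)) le_rfl i1))
      (L.bmono (L.hpow hq 3) le_rfl i1)) (L.bnum 2 (by norm_num) (L.bmul hy hr))) (by norm_num) le_rfl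
  have hfirst : v (x3 - q) * m ≤ τ ^ 32 * M ^ 3 := by
    unfold Bd at key
    rw [v.map_mul, v.map_pow] at key
    have k2 : v (x3 - q) * v x ^ 2 ≤ τ ^ 2 * (v (x3 - q) * v (x - q) ^ 2) := by
      calc v (x3 - q) * v x ^ 2 ≤ v (x3 - q) * (τ * v (x - q)) ^ 2 := by
            have := v.nonneg (x3 - q); gcongr
        _ = _ := by ring
    rw [← h4] at k2
    have k3 : m ^ 3 * (v (x3 - q) * m) ≤ m ^ 3 * (τ ^ 32 * M ^ 3) := by
      calc m ^ 3 * (v (x3 - q) * m) = v (x3 - q) * (m ^ 2) ^ 2 := by ring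
        _ ≤ _ := k2
        _ ≤ τ ^ 2 * (τ ^ 30 * (m ^ 3 * M ^ 3)) := by gcongr
        _ = _ := by ring
    exact le_of_mul_le_mul_left k3 (by positivity)
  refine ⟨hfirst.trans (L.τle (by norm_num) (by positivity)), ?_⟩
  have h5 : Bd v τ 32 (M ^ 2) (x3 - q) := by
    unfold Bd
    have : M * v (x3 - q) ≤ M * (τ ^ 32 * M ^ 2) := by
      calc M * v (x3 - q) ≤ m * v (x3 - q) := by
            have := v.nonneg (x3 - q); gcongr
        _ = v (x3 - q) * m := by ring
        _ ≤ _ := hfirst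
        _ = _ := by ring
    exact le_of_mul_le_mul_left this hM0
  have h6 : Bd v τ 42 (M ^ 2) x3 := by
    have := L.bmono (l := 42) (L.badd h5 hq) (by norm_num) le_rfl
    simpa using this
  have h7 := L.mu_small hwM h6
  have : mu v w x3 ^ 2 ≤ (τ ^ 21 * M) ^ 2 := by
    calc _ ≤ _ := h7
      _ = _ := by ring
  exact (le_abs_self _).trans (abs_le_of_sq_le_sq this (by positivity))

/-- B5 -/
lemma x_relation {M n : ℝ} (hn : 1 ≤ n) {x y q r q' r' x2 x3 n1 n2 n3 : F}
    (h : y ^ 2 = x ^ 3 + a * x + b)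
    (h' : r ^ 2 = q ^ 3 + a * q + b) (h'' : r' ^ 2 = q' ^ 3 + a * q' + b)
    (hM : mu v w q ≤ M) (hM' : mu v w q' ≤ M)
    (h2 : x ≠ q → x2 * (x - q) ^ 2 = (y - r) ^ 2 - (x + q) * (x - q) ^ 2)
    (h3 : x ≠ q' → x3 * (x - q') ^ 2 = (y - r') ^ 2 - (x + q') * (x - q') ^ 2)
    (hr : dt x x2 x3 n1 n2 n3 = 0)
    (hn1 : v (n2 - n3) ≤ n) (hn2 : v (n3 - n1) ≤ n) (hn3 : v (n1 - n2) ≤ n) :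
    mu v w x ^ 2 * v (n2 - n3) ≤ τ ^ 50 * (n * M ^ 2) := by
  have hwM := (w_le_mu v w q).trans hM
  have hM0 : 0 < M := L.wpos.trans_le hwM
  have hτ := L.τpos
  have hn0 : 0 ≤ n := by linarith
  by_cases hl : τ ^ 10 * M ^ 2 < v x
  · have a2 := (L.large_add h h' hM hl h2).2
    have a3 := (L.large_add h h'' hM' hl h3).2
    obtain ⟨_, _, h4⟩ := L.M_le_of_large hwM hl
    rw [h4, ← v.map_mul]
    have e : x * (n2 - n3) = -(x2 * (n3 - n1)) - x3 * (n1 - n2) := by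
      unfold dt at hr; linear_combination hr
    have b2 : Bd v τ 0 n (n3 - n1) := by simpa [Bd] using hn2
    have b3 : Bd v τ 0 n (n1 - n2) := by simpa [Bd] using hn3
    have := L.bsub (L.bneg (L.bmul (L.hx a2) b2)) (L.bmul (L.hx a3) b3)
    rw [← e] at this
    unfold Bd at this
    calc _ ≤ _ := this
      _ = τ ^ 43 * (n * M ^ 2) := by ring
      _ ≤ _ := L.τle (by norm_num) (by positivity)
  · push Not at hl
    have := L.mu_small hwM hl
    calc _ ≤ (τ ^ 10 * M ^ 2) * n := by gcongr
      _ = τ ^ 10 * (n * M ^ 2) := by ring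
      _ ≤ _ := L.τle (by norm_num) (by positivity)

/-- B8 -/
lemma x_interp {M n : ℝ} (hn : 1 ≤ n) {x x' xk d d' d'' : F}
    (hM : mu v w x ≤ M) (hM' : mu v w x' ≤ M) (hr : xk * d = d' * x' - d'' * x)
    (hd : v d ≤ n) (hd' : v d' ≤ n) (hd'' : v d'' ≤ n) :
    mu v w xk ^ 2 * v d ≤ τ ^ 50 * (n * M ^ 2) := by
  have hwM := (w_le_mu v w x).trans hM
  have hM0 : 0 < M := L.wpos.trans_le hwM
  have hτ := L.τpos
  have hn0 : 0 ≤ n := by linarith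
  apply mu_sq_mul_le L.wpos.le (v.nonneg _)
  · rw [← v.map_mul, hr]
    have b2 : Bd v τ 0 n d' := by simpa [Bd] using hd'
    have b3 : Bd v τ 0 n d'' := by simpa [Bd] using hd''
    exact L.bmono (L.bsub (L.bmul b2 (L.hx hM')) (L.bmul b3 (L.hx hM))) (by norm_num) le_rfl
  · calc w ^ 2 * v d ≤ M ^ 2 * n := by
          have := L.wpos; gcongr
      _ = τ ^ 0 * (n * M ^ 2) := by ring
      _ ≤ _ := L.τle (by norm_num) (by positivity)

lemma bdt {k : ℕ} {B n : ℝ} {x2 x3 x4 m2 m3 m4 : F} (h2 : Bd v τ k B x2) (h3 : Bd v τ k B x3)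
    (h4 : Bd v τ k B x4) (g2 : v m2 ≤ n) (g3 : v m3 ≤ n) (g4 : v m4 ≤ n) :
    Bd v τ (3 * k + 5) (n * B) (dt x2 x3 x4 m2 m3 m4) := by
  have f2 : Bd v τ 0 n m2 := by simpa [Bd] using g2
  have f3 : Bd v τ 0 n m3 := by simpa [Bd] using g3
  have f4 : Bd v τ 0 n m4 := by simpa [Bd] using g4
  unfold dt
  exact L.bmono (L.badd (L.badd (L.bmul h2 (L.bsub f3 f4)) (L.bmul h3 (L.bsub f4 f2)))
    (L.bmul h4 (L.bsub f2 f3))) (by omega) (by rw [mul_comm])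

/-- B7 -/
lemma y_relation {M n : ℝ} (hn : 1 ≤ n) {x y x2 y2 x3 y3 x4 y4 m2 m3 m4 l ν : F}
    (h : y ^ 2 = x ^ 3 + a * x + b)
    (h2 : y2 ^ 2 = x2 ^ 3 + a * x2 + b)
    (h3 : y3 ^ 2 = x3 ^ 3 + a * x3 + b)
    (h4 : y4 ^ 2 = x4 ^ 3 + a * x4 + b)
    (hM2 : mu v w x2 ≤ M) (hM3 : mu v w x3 ≤ M) (hM4 : mu v w x4 ≤ M)
    (r2 : y2 = y + l * (x2 - x) + ν * m2) (r3 : y3 = y + l * (x3 - x) + ν * m3)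
    (r4 : y4 = y + l * (x4 - x) + ν * m4)
    (g2 : v m2 ≤ n) (g3 : v m3 ≤ n) (g4 : v m4 ≤ n) :
    mu v w x * v (dt x2 x3 x4 m2 m3 m4) ≤ τ ^ 50 * (n * M ^ 3) := by
  have hwM := (w_le_mu v w x2).trans hM2
  have hM0 : 0 < M := L.wpos.trans_le hwM
  have hτ := L.τpos
  have hn0 : 0 ≤ n := by linarith
  have hD := L.bdt (L.hx hM2) (L.hx hM3) (L.hx hM4) g2 g3 g4
  by_cases hl : τ ^ 10 * M ^ 2 < v x
  · obtain ⟨h5, h6, h7⟩ := L.M_le_of_large hwM hl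
    have h8 := L.large_y hwM h hl
    rw [← h7] at h8
    set m := mu v w x with hm
    have hm0 : 0 < m := L.mu_pos x
    have hmy : m ^ 3 ≤ τ * v y := by
      have : (m ^ 3) ^ 2 ≤ (τ * v y) ^ 2 := by
        calc (m ^ 3) ^ 2 = (m ^ 2) ^ 3 := by ring
          _ ≤ _ := h8
          _ = τ * (1 * v y ^ 2) := by ring
          _ ≤ τ * (τ * v y ^ 2) := by have := L.one_le; gcongr
          _ = _ := by ring
      exact (le_abs_self _).trans (abs_le_of_sq_le_sq this (by have := v.nonneg y; positivity))
    have e : y * dt x2 x3 x4 m2 m3 m4 = x * dt y2 y3 y4 m2 m3 m4 +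
        (x2 * (y4 * m3 - y3 * m4) + x3 * (y2 * m4 - y4 * m2) + x4 * (y3 * m2 - y2 * m3)) := by
      rw [r2, r3, r4]; unfold dt; ring
    have c2 := L.hy h2 hM2
    have c3 := L.hy h3 hM3
    have c4 := L.hy h4 hM4
    have f2 : Bd v τ 0 n m2 := by simpa [Bd] using g2
    have f3 : Bd v τ 0 n m3 := by simpa [Bd] using g3
    have f4 : Bd v τ 0 n m4 := by simpa [Bd] using g4
    have b1 := L.bmul (L.hx (le_refl m)) (L.bdt c2 c3 c4 g2 g3 g4)
    have b2 := L.badd (L.badd (L.bmul (L.hx hM2) (L.bsub (L.bmul c4 f3) (L.bmul c3 f4)))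
      (L.bmul (L.hx hM3) (L.bsub (L.bmul c2 f4) (L.bmul c4 f2))))
      (L.bmul (L.hx hM4) (L.bsub (L.bmul c3 f2) (L.bmul c2 f3)))
    have b3 := L.bmono (B' := m ^ 2 * (n * M ^ 3)) b2 le_rfl (by
      calc M ^ 2 * (M ^ 3 * n) = M ^ 2 * (n * M ^ 3) := by ring
        _ ≤ _ := by gcongr)
    have b4 := L.badd b1 b3
    rw [← e] at b4
    have b5 := L.bmono (l := 45) b4 (by norm_num) le_rfl
    unfold Bd at b5
    rw [v.map_mul] at b5
    have : m ^ 2 * (m * v (dt x2 x3 x4 m2 m3 m4)) ≤ m ^ 2 * (τ ^ 46 * (n * M ^ 3)) := by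
      calc _ = m ^ 3 * v (dt x2 x3 x4 m2 m3 m4) := by ring
        _ ≤ (τ * v y) * v (dt x2 x3 x4 m2 m3 m4) := by
          have := v.nonneg (dt x2 x3 x4 m2 m3 m4); gcongr
        _ = τ * (v y * v (dt x2 x3 x4 m2 m3 m4)) := by ring
        _ ≤ τ * (τ ^ 45 * (m ^ 2 * (n * M ^ 3))) := by gcongr
        _ = _ := by ring
    exact (le_of_mul_le_mul_left this (by positivity)).trans (L.τle (by norm_num) (by positivity))
  · push Not at hl
    have h1 := L.mu_small hwM hl
    have h2 : mu v w x ≤ τ ^ 5 * M := by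
      have : mu v w x ^ 2 ≤ (τ ^ 5 * M) ^ 2 := by
        calc _ ≤ _ := h1
          _ = _ := by ring
      exact (le_abs_self _).trans (abs_le_of_sq_le_sq this (by positivity))
    unfold Bd at hD
    calc _ ≤ (τ ^ 5 * M) * (τ ^ (3 * 0 + 5) * (n * M ^ 2)) := by gcongr
      _ = τ ^ 10 * (n * M ^ 3) := by ring
      _ ≤ _ := L.τle (by norm_num) (by positivity)

/-- B6 -/
lemma y_relation' {M n : ℝ} (hn : 1 ≤ n) {x y x2 y2 x3 y3 x4 y4 q2 t2 q3 t3 q4 t4 m2 m3 m4 l ν : F}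
    (h : y ^ 2 = x ^ 3 + a * x + b)
    (h2 : y2 ^ 2 = x2 ^ 3 + a * x2 + b)
    (h3 : y3 ^ 2 = x3 ^ 3 + a * x3 + b)
    (h4 : y4 ^ 2 = x4 ^ 3 + a * x4 + b)
    (k2 : t2 ^ 2 = q2 ^ 3 + a * q2 + b)
    (k3 : t3 ^ 2 = q3 ^ 3 + a * q3 + b)
    (k4 : t4 ^ 2 = q4 ^ 3 + a * q4 + b)
    (hM2 : mu v w q2 ≤ M) (hM3 : mu v w q3 ≤ M) (hM4 : mu v w q4 ≤ M)
    (s2 : x ≠ q2 → x2 * (x - q2) ^ 2 = (y - t2) ^ 2 - (x + q2) * (x - q2) ^ 2)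
    (s3 : x ≠ q3 → x3 * (x - q3) ^ 2 = (y - t3) ^ 2 - (x + q3) * (x - q3) ^ 2)
    (s4 : x ≠ q4 → x4 * (x - q4) ^ 2 = (y - t4) ^ 2 - (x + q4) * (x - q4) ^ 2)
    (r2 : y2 = y + l * (x2 - x) + ν * m2) (r3 : y3 = y + l * (x3 - x) + ν * m3)
    (r4 : y4 = y + l * (x4 - x) + ν * m4)
    (g2 : v m2 ≤ n) (g3 : v m3 ≤ n) (g4 : v m4 ≤ n) :
    mu v w x * v (dt q2 q3 q4 m2 m3 m4) ≤ τ ^ 400 * (n * M ^ 3) := by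
  have hwM := (w_le_mu v w q2).trans hM2
  have hM0 : 0 < M := L.wpos.trans_le hwM
  have hτ := L.τpos
  have hn0 : 0 ≤ n := by linarith
  have hD := L.bdt (L.hx hM2) (L.hx hM3) (L.hx hM4) g2 g3 g4
  by_cases hl : τ ^ 10 * M ^ 2 < v x
  · have a2 := L.large_add h k2 hM2 hl s2
    have a3 := L.large_add h k3 hM3 hl s3
    have a4 := L.large_add h k4 hM4 hl s4
    have c1 := L.y_relation hn h h2 h3 h4 a2.2 a3.2 a4.2 r2 r3 r4 g2 g3 g4
    set m := mu v w x with hm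
    have hm0 : 0 < m := L.mu_pos x
    have e : ∀ x2 q2 : F, v (x2 - q2) * m ≤ τ ^ 40 * M ^ 3 → Bd v τ 40 (M ^ 3 / m) (x2 - q2) := by
      intro x2 q2 h
      unfold Bd
      rw [← mul_div_assoc, le_div_iff₀ hm0]; exact h
    have c2 := L.bdt (e _ _ a2.1) (e _ _ a3.1) (e _ _ a4.1) g2 g3 g4
    have e2 : dt q2 q3 q4 m2 m3 m4 = dt x2 x3 x4 m2 m3 m4
      - dt (x2 - q2) (x3 - q3) (x4 - q4) m2 m3 m4 := by unfold dt; ring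
    have c3 : Bd v τ 125 (n * (M ^ 3 / m)) (dt x2 x3 x4 m2 m3 m4) := by
      unfold Bd
      rw [← mul_div_assoc, ← mul_div_assoc, le_div_iff₀ hm0, mul_comm]
      calc _ ≤ _ := c1
        _ = τ ^ 113 * (n * M ^ 3) := by ring
        _ ≤ _ := L.τle (by norm_num) (by positivity)
    have c4 := L.bmono (l := 400) (L.bsub c3 c2) (by norm_num) le_rfl
    rw [← e2] at c4
    unfold Bd at c4
    rw [← mul_div_assoc, ← mul_div_assoc, le_div_iff₀ hm0, mul_comm] at c4
    exact c4
  · push Not at hl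
    have h1 := L.mu_small hwM hl
    have h2 : mu v w x ≤ τ ^ 5 * M := by
      have : mu v w x ^ 2 ≤ (τ ^ 5 * M) ^ 2 := by
        calc _ ≤ _ := h1
          _ = _ := by ring
      exact (le_abs_self _).trans (abs_le_of_sq_le_sq this (by positivity))
    unfold Bd at hD
    calc _ ≤ (τ ^ 5 * M) * (τ ^ (3 * 0 + 5) * (n * M ^ 2)) := by gcongr
      _ = τ ^ 10 * (n * M ^ 3) := by ring
      _ ≤ _ := L.τle (by norm_num) (by positivity)

end Loc
end
end APRank

namespace APRank
set_option linter.unusedVariables false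
set_option linter.unusedSectionVars false
open Function

/-! ### Global heights -/

/-- sum over all places -/
noncomputable def S : (Pl →₀ ℝ) →ₗ[ℝ] ℝ := Finsupp.lsum ℝ (fun _ => LinearMap.id)

lemma S_apply (f : Pl →₀ ℝ) : S f = ∑ᶠ v, f v := by
  rw [finsum_eq_sum_of_support_subset (s := f.support) _ (by simp)]
  simp [S, Finsupp.sum]

lemma S_nonneg {f : Pl →₀ ℝ} (h : ∀ v, 0 ≤ f v) : 0 ≤ S f := by
  rw [S_apply]; exact finsum_nonneg h

/-- a finitely supported function, as a `Finsupp` -/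
noncomputable def mk (f : Pl → ℝ) (hf : (support f).Finite) : Pl →₀ ℝ := Finsupp.ofSupportFinite f hf

@[simp] lemma mk_apply (f : Pl → ℝ) (hf : (support f).Finite) (v : Pl) : mk f hf v = f v := rfl

/-- log of absolute values -/
noncomputable def lq (q : ℚ) : Pl →₀ ℝ :=
  mk (fun v => Real.log (av v q)) (by
    by_cases hq : q = 0
    · subst hq; simp
    · exact hfs_log hq)

lemma lq_apply (q : ℚ) (v : Pl) : lq q v = Real.log (av v q) := rfl

lemma S_lq {q : ℚ} (hq : q ≠ 0) : S (lq q) = 0 := by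
  rw [S_apply]; exact prodFormula hq

/-- `max 1 |q|` -/
noncomputable def mx (q : ℚ) (v : Pl) : ℝ := max (av v q) 1

lemma one_le_mx (q : ℚ) (v : Pl) : 1 ≤ mx q v := le_max_right _ _
lemma le_mx (q : ℚ) (v : Pl) : av v q ≤ mx q v := le_max_left _ _

lemma mx_fin (q : ℚ) : (support (fun v => Real.log (mx q v))).Finite := by
  by_cases hq : q = 0
  · subst hq; simp [mx]
  · exact hfs_comp hq (fun t => Real.log (max t 1)) (by simp)

/-- a constant at the infinite place -/
noncomputable def cs (n : ℝ) : Pl → ℝ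
  | none => n
  | some _ => 1

lemma cs_fin (n : ℝ) : (support (fun v => Real.log (cs n v))).Finite := by
  apply hasFiniteSupport_of_some
  simp [cs, HasFiniteSupport]

/-- log of `cs` -/
noncomputable def lc (n : ℝ) : Pl →₀ ℝ := mk _ (cs_fin n)

lemma S_lc (n : ℝ) : S (lc n) = Real.log n := by
  rw [S_apply, finsum_eq_single _ none]
  · rfl
  · intro v hv
    cases v with
    | none => exact absurd rfl hv
    | some v => simp [lc, cs]

lemma one_le_cs {n : ℝ} (hn : 1 ≤ n) (v : Pl) : 1 ≤ cs n v := by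
  cases v <;> simp [cs, hn]

lemma av_int_le_cs {n : ℝ} {k : ℤ} (hk : |(k : ℝ)| ≤ n) (v : Pl) : av v (k : ℚ) ≤ cs n v := by
  cases v with
  | none => simpa [av_none, cs] using hk
  | some v => exact av_some_int_le v k

/-- the fudge factor -/
noncomputable def tau (j : ℚ) (v : Pl) : ℝ :=
  cs 100 v * mx (1 / 4) v * mx (j / 6912) v * mx ((1728 - j) / 46656) v

lemma tau_fin (j : ℚ) : (support (fun v => Real.log (tau j v))).Finite := by
  refine Set.Finite.subset (((cs_fin 100).union (mx_fin (1 / 4))).union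
    ((mx_fin (j / 6912)).union (mx_fin ((1728 - j) / 46656)))) ?_
  intro v hv
  by_contra h
  simp only [Set.mem_union, mem_support, not_or, not_not] at h
  apply hv
  have h1 := one_le_cs (n := 100) (by norm_num) v
  have h2 := one_le_mx (1 / 4) v
  have h3 := one_le_mx (j / 6912) v
  have h4 := one_le_mx ((1728 - j) / 46656) v
  simp only [tau]
  rw [Real.log_mul (by positivity) (by positivity), Real.log_mul (by positivity) (by positivity),
    Real.log_mul (by positivity) (by positivity), h.1.1, h.1.2, h.2.1, h.2.2]
  simp

/-- log of the fudge factor -/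
noncomputable def lt (j : ℚ) : Pl →₀ ℝ := mk _ (tau_fin j)

/-- the total constant -/
noncomputable def TT (j : ℚ) : ℝ := S (lt j)

/-- discriminant -/
def dsc (a b : ℚ) : ℚ := 4 * a ^ 3 + 27 * b ^ 2

/-- scale -/
noncomputable def wv (a b : ℚ) (v : Pl) : ℝ := (av v (dsc a b)) ^ (1 / 12 : ℝ)

lemma av_add_le (v : Pl) (x y : ℚ) : av v (x + y) ≤ cs 100 v * max (av v x) (av v y) := by
  cases v with
  | none =>
    have h := (av none).add_le x y
    have h1 := le_max_left (av none x) (av none y)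
    have h2 := le_max_right (av none x) (av none y)
    have := (av none).nonneg x
    simp only [cs]
    nlinarith
  | some v => simpa [cs] using av_some_add_le v x y

/-- hypotheses -/
structure GD (a b j : ℚ) : Prop where
  d0 : dsc a b ≠ 0
  hj : j * dsc a b = 6912 * a ^ 3

section
variable {a b j : ℚ} (G : GD a b j)
include G

lemma GD.wpos (v : Pl) : 0 < wv a b v := by
  have : 0 < av v (dsc a b) := (av v).pos G.d0
  unfold wv; positivity

lemma GD.w12 (v : Pl) : av v (dsc a b) = wv a b v ^ 12 := by
  have : 0 < av v (dsc a b) := (av v).pos G.d0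
  unfold wv
  rw [← Real.rpow_natCast, ← Real.rpow_mul this.le]
  norm_num

lemma GD.logw (v : Pl) : Real.log (wv a b v) = (1 / 12) * lq (dsc a b) v := by
  have : 0 < av v (dsc a b) := (av v).pos G.d0
  unfold wv
  rw [Real.log_rpow this]; rfl

lemma GD.loc (v : Pl) : Loc (av v) (tau j v) (wv a b v) a b := by
  have h1 := one_le_cs (n := 100) (by norm_num) v
  have h2 := one_le_mx (1 / 4) v
  have h3 := one_le_mx (j / 6912) v
  have h4 := one_le_mx ((1728 - j) / 46656) v
  have g2 := le_mx (1 / 4) v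
  have g3 := le_mx (j / 6912) v
  have g4 := le_mx ((1728 - j) / 46656) v
  set c := cs 100 v
  set m2 := mx (1 / 4) v
  set m3 := mx (j / 6912) v
  set m4 := mx ((1728 - j) / 46656) v
  have hτ : tau j v = c * m2 * m3 * m4 := rfl
  have p12 : 1 ≤ c * m2 := one_le_mul_of_one_le_of_one_le h1 h2
  have p123 : 1 ≤ c * m2 * m3 := one_le_mul_of_one_le_of_one_le p12 h3
  have p1234 : 1 ≤ c * m2 * m3 * m4 := one_le_mul_of_one_le_of_one_le p123 h4
  have hc : c ≤ c * m2 * m3 * m4 := by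
    have h34 := one_le_mul_of_one_le_of_one_le h3 h4
    have := one_le_mul_of_one_le_of_one_le h2 h34
    nlinarith
  have hm2 : m2 ≤ c * m2 * m3 * m4 := by
    have h34 := one_le_mul_of_one_le_of_one_le h3 h4
    have := one_le_mul_of_one_le_of_one_le h1 h34
    nlinarith
  have hm3 : m3 ≤ c * m2 * m3 * m4 := by
    have := one_le_mul_of_one_le_of_one_le p12 h4
    nlinarith
  have hm4 : m4 ≤ c * m2 * m3 * m4 := by nlinarith
  have hw := G.wpos v
  have hw12 := G.w12 v
  refine ⟨?_, hw, ?_, ?_, ?_, ?_, ?_, hw12⟩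
  · rw [hτ]; exact p1234
  · intro x y
    refine (av_add_le v x y).trans ?_
    rw [hτ]
    have := ((av v).nonneg x).trans (le_max_left (av v x) (av v y))
    gcongr
  · intro n hn
    rw [hτ]
    refine le_trans ?_ hc
    have := av_int_le_cs (n := 100) (k := n) (by simpa using (by exact_mod_cast hn : (n:ℝ) ≤ 100)) v
    simpa using this
  · rw [hτ]
    have : av v (1 / 4) * av v 4 = 1 := by rw [← (av v).map_mul]; norm_num
    have h0 := (av v).nonneg 4
    calc 1 = av v (1 / 4) * av v 4 := this.symm
      _ ≤ _ := by gcongr; exact g2.trans hm2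
  · rw [hτ]
    have e : a ^ 3 = (j / 6912) * dsc a b := by
      have := G.hj; linear_combination -(1/6912) * this
    have : av v a ^ 3 ≤ (m3 * wv a b v ^ 4) ^ 3 := by
      rw [← (av v).map_pow, e, (av v).map_mul, hw12]
      calc _ ≤ m3 * wv a b v ^ 12 := by gcongr
        _ ≤ m3 ^ 3 * wv a b v ^ 12 := by
          gcongr
          calc m3 = m3 ^ 1 := by ring
            _ ≤ m3 ^ 3 := pow_le_pow_right₀ h3 (by norm_num)
        _ = _ := by ring
    have := le_of_pow_le_pow_left₀ (by norm_num) (by positivity) this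
    refine this.trans ?_
    gcongr
  · rw [hτ]
    have e : b ^ 2 = ((1728 - j) / 46656) * dsc a b := by
      have := G.hj; unfold dsc at *; linear_combination (1/46656) * this
    have : av v b ^ 2 ≤ (m4 * wv a b v ^ 6) ^ 2 := by
      rw [← (av v).map_pow, e, (av v).map_mul, hw12]
      calc _ ≤ m4 * wv a b v ^ 12 := by gcongr
        _ ≤ m4 ^ 2 * wv a b v ^ 12 := by
          gcongr
          calc m4 = m4 ^ 1 := by ring
            _ ≤ m4 ^ 2 := pow_le_pow_right₀ h4 (by norm_num)
        _ = _ := by ring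
    have := le_of_pow_le_pow_left₀ (by norm_num) (by positivity) this
    refine this.trans ?_
    gcongr
end

/-- local size at a place -/
noncomputable def mv (a b x : ℚ) (v : Pl) : ℝ := mu (av v) (wv a b v) x

lemma mv_fin (a b x : ℚ) : (support (fun v => Real.log (mv a b x v))).Finite := by
  by_cases h0 : dsc a b = 0
  · have hw : ∀ v, wv a b v = 0 := fun v => by
      simp [wv, h0]
    have : ∀ v, mv a b x v = Real.sqrt (av v x) := fun v => by
      simp [mv, mu, hw]
    simp only [this]
    by_cases hx : x = 0
    · simp [hx]
    · exact hfs_comp hx (fun t => Real.log (Real.sqrt t)) (by simp)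
  · by_cases hx : x = 0
    · have : ∀ v, mv a b x v = wv a b v := fun v => by
        simp only [mv, mu, hx, map_zero, Real.sqrt_zero]
        exact max_eq_right (by unfold wv; positivity)
      simp only [this]
      exact hfs_comp h0 (fun t => Real.log (t ^ (1 / 12 : ℝ))) (by simp)
    · refine Set.Finite.subset ((hfs_comp hx (fun t => t - 1) (by simp)).union
        (hfs_comp h0 (fun t => t - 1) (by simp))) ?_
      intro v hv
      by_contra h
      simp only [Set.mem_union, mem_support, not_or, not_not, sub_eq_zero] at h
      apply hv
      simp [mv, mu, wv, h.1, h.2]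

/-- log of local size -/
noncomputable def lm (a b x : ℚ) : Pl →₀ ℝ := mk _ (mv_fin a b x)

/-- height of an x-coordinate -/
noncomputable def hX (a b x : ℚ) : ℝ := 2 * S (lm a b x)

section
variable {a b j : ℚ} (G : GD a b j)
include G

lemma GD.TT_nonneg : 0 ≤ TT j := S_nonneg fun v => Real.log_nonneg (G.loc v).one_le

lemma GD.Sw : S ((1 / 12 : ℝ) • lq (dsc a b)) = 0 := by
  rw [map_smul, S_lq G.d0, smul_zero]

/-- passing from local to global -/
lemma GD.globalize {f g : Pl →₀ ℝ} (h : ∀ v, f v ≤ g v) : S f ≤ S g := by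
  have := S_nonneg (f := g - f) (fun v => by simpa using h v)
  rw [map_sub] at this; linarith

lemma GD.mvpos (x : ℚ) (v : Pl) : 0 < mv a b x v := (G.loc v).mu_pos x

lemma GD.hX_nonneg (x : ℚ) : 0 ≤ hX a b x := by
  have : S ((1 / 12 : ℝ) • lq (dsc a b)) ≤ S (lm a b x) := by
    apply G.globalize
    intro v
    rw [Finsupp.smul_apply, smul_eq_mul, ← G.logw v]
    exact Real.log_le_log (G.wpos v) (w_le_mu _ _ _)
  rw [G.Sw] at this
  unfold hX; linarith

end
end APRank

namespace APRank
set_option linter.unusedVariables false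
set_option linter.unusedSectionVars false
set_option linter.unusedSimpArgs false
open Function

lemma le_prod2 {w m m' : ℝ} (hw : 0 < w) (h : w ≤ m) (h' : w ≤ m') :
    m ≤ m * m' / w ∧ m' ≤ m * m' / w := by
  constructor <;> rw [le_div_iff₀ hw] <;> nlinarith

lemma le_prod3 {w m m' m'' : ℝ} (hw : 0 < w) (h : w ≤ m) (h' : w ≤ m') (h'' : w ≤ m'') :
    m ≤ m * m' * m'' / w ^ 2 ∧ m' ≤ m * m' * m'' / w ^ 2 ∧ m'' ≤ m * m' * m'' / w ^ 2 := by
  have c1 := hw.trans_le h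
  have c2 := hw.trans_le h'
  have c3 := hw.trans_le h''
  have a1 : w * w ≤ m' * m'' := by gcongr
  have a2 : w * w ≤ m * m'' := by gcongr
  have a3 : w * w ≤ m * m' := by gcongr
  refine ⟨?_, ?_, ?_⟩ <;> rw [le_div_iff₀ (by positivity)] <;> nlinarith

section
variable {a b j : ℚ} (G : GD a b j)
include G

lemma GD.w_le (x : ℚ) (v : Pl) : wv a b v ≤ mv a b x v := w_le_mu _ _ _

lemma GD.log_prod2 (x x' : ℚ) (v : Pl) :
    Real.log (mv a b x v * mv a b x' v / wv a b v) =
      lm a b x v + lm a b x' v - (1 / 12) * lq (dsc a b) v := by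
  have h1 := (G.mvpos x v).ne'
  have h2 := (G.mvpos x' v).ne'
  have h3 := (G.wpos v).ne'
  rw [Real.log_div (by positivity) h3, Real.log_mul h1 h2, G.logw]; rfl

lemma GD.log_prod3 (x x' x'' : ℚ) (v : Pl) :
    Real.log (mv a b x v * mv a b x' v * mv a b x'' v / wv a b v ^ 2) =
      lm a b x v + lm a b x' v + lm a b x'' v - (1 / 6) * lq (dsc a b) v := by
  have h1 := (G.mvpos x v).ne'
  have h2 := (G.mvpos x' v).ne'
  have h4 := (G.mvpos x'' v).ne'
  have h3 := (G.wpos v).ne'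
  rw [Real.log_div (by positivity) (by positivity), Real.log_mul (by positivity) h4,
    Real.log_mul h1 h2, Real.log_pow, G.logw]
  simp only [lm, mk_apply]; push_cast; ring

lemma GD.taupos (v : Pl) : 0 < tau j v := (G.loc v).τpos

/-- G1 -/
lemma GD.add_le {x y x' y' x3 : ℚ} (h : y ^ 2 = x ^ 3 + a * x + b)
    (h' : y' ^ 2 = x' ^ 3 + a * x' + b) (hne : x ≠ x')
    (h3 : x3 * (x - x') ^ 2 = (y - y') ^ 2 - (x + x') * (x - x') ^ 2) :
    hX a b x3 ≤ 3 * hX a b x + 3 * hX a b x' + 40 * TT j := by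
  have hne' : x - x' ≠ 0 := sub_ne_zero.2 hne
  have key : S ((2 : ℝ) • lm a b x3 + (2 : ℝ) • lq (x - x')) ≤
      S ((40 : ℝ) • lt j + (6 : ℝ) • (lm a b x + lm a b x' - (1 / 12 : ℝ) • lq (dsc a b))) := by
    apply G.globalize
    intro v
    obtain ⟨m1, m2⟩ := le_prod2 (G.wpos v) (G.w_le x v) (G.w_le x' v)
    have loc := (G.loc v).add_bound h h' m1 m2 h3
    have p1 : 0 < mv a b x3 v := G.mvpos x3 v
    have p2 : 0 < av v (x - x') := (av v).pos hne'
    have p3 := G.taupos v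
    have p4 : 0 < mv a b x v * mv a b x' v / wv a b v :=
      div_pos (mul_pos (G.mvpos x v) (G.mvpos x' v)) (G.wpos v)
    have := Real.log_le_log (mul_pos (pow_pos p1 2) (pow_pos p2 2)) loc
    rw [Real.log_mul (by positivity) (by positivity), Real.log_mul (by positivity) (by positivity),
      Real.log_pow, Real.log_pow, Real.log_pow, Real.log_pow, G.log_prod2] at this
    simpa [lm, lt, lq_apply] using this
  simp only [map_add, map_sub, map_smul, S_lq hne', S_lq G.d0, smul_eq_mul] at key
  unfold hX TT
  linarith

/-- G2 -/
lemma GD.dbl_le {x y x2 : ℚ} (h : y ^ 2 = x ^ 3 + a * x + b) (hy : y ≠ 0)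
    (h2 : x2 * (4 * y ^ 2) = x ^ 4 - 2 * (a * x ^ 2) - 8 * (b * x) + a ^ 2) :
    hX a b x2 ≤ 4 * hX a b x + 40 * TT j := by
  have hne : 4 * y ^ 2 ≠ 0 := by positivity
  have key : S ((2 : ℝ) • lm a b x2 + lq (4 * y ^ 2)) ≤
      S ((40 : ℝ) • lt j + (8 : ℝ) • lm a b x) := by
    apply G.globalize
    intro v
    have loc : mv a b x2 v ^ 2 * av v (4 * y ^ 2) ≤ tau j v ^ 40 * mv a b x v ^ 8 :=
      (G.loc v).dbl_le h h2
    have p1 := G.mvpos x2 v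
    have p1' := G.mvpos x v
    have p2 : 0 < av v (4 * y ^ 2) := (av v).pos hne
    have p3 := G.taupos v
    have := Real.log_le_log (mul_pos (pow_pos p1 2) p2) loc
    rw [Real.log_mul (by positivity) (by positivity), Real.log_mul (by positivity) (pow_pos p1' 8).ne',
      Real.log_pow, Real.log_pow, Real.log_pow] at this
    simpa only [lm, lt, lq_apply, Finsupp.add_apply, Finsupp.smul_apply, mk_apply, smul_eq_mul,
      Nat.cast_ofNat] using this
  simp only [map_add, map_sub, map_smul, S_lq hne, S_lq G.d0, smul_eq_mul] at key
  unfold hX TT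
  linarith

/-- G3 -/
lemma GD.le_dbl {x y x2 : ℚ} (h : y ^ 2 = x ^ 3 + a * x + b) (hy : y ≠ 0)
    (h2 : x2 * (4 * y ^ 2) = x ^ 4 - 2 * (a * x ^ 2) - 8 * (b * x) + a ^ 2) :
    4 * hX a b x ≤ hX a b x2 + 200 * TT j := by
  have hne : 4 * y ^ 2 ≠ 0 := by positivity
  have key : S ((8 : ℝ) • lm a b x) ≤
      S ((200 : ℝ) • lt j + ((2 : ℝ) • lm a b x2 + lq (4 * y ^ 2))) := by
    apply G.globalize
    intro v
    have loc : mv a b x v ^ 8 ≤ tau j v ^ 200 * (mv a b x2 v ^ 2 * av v (4 * y ^ 2)) :=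
      (G.loc v).le_dbl h h2
    have p1 := G.mvpos x2 v
    have p1' := G.mvpos x v
    have p2 : 0 < av v (4 * y ^ 2) := (av v).pos hne
    have p3 := G.taupos v
    have := Real.log_le_log (pow_pos p1' 8) loc
    rw [Real.log_mul (by positivity) (mul_pos (pow_pos p1 2) p2).ne', Real.log_mul (pow_pos p1 2).ne' p2.ne',
      Real.log_pow, Real.log_pow, Real.log_pow] at this
    simpa only [lm, lt, lq_apply, Finsupp.add_apply, Finsupp.smul_apply, mk_apply, smul_eq_mul,
      Nat.cast_ofNat] using this
  simp only [map_add, map_sub, map_smul, S_lq hne, S_lq G.d0, smul_eq_mul] at key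
  unfold hX TT
  linarith

/-- G4 -/
lemma GD.y_zero {x : ℚ} (h : 0 = x ^ 3 + a * x + b) : hX a b x ≤ 10 * TT j := by
  have key : S ((2 : ℝ) • lm a b x) ≤
      S ((10 : ℝ) • lt j + (2 : ℝ) • ((1 / 12 : ℝ) • lq (dsc a b))) := by
    apply G.globalize
    intro v
    have loc := (G.loc v).mu_of_y_zero h
    have p1' := G.mvpos x v
    have p3 := G.taupos v
    have p4 := G.wpos v
    have := Real.log_le_log (pow_pos p1' 2) loc
    rw [Real.log_mul (by positivity) (by positivity),
      Real.log_pow, Real.log_pow, Real.log_pow, G.logw] at this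
    simpa only [lm, lt, lq_apply, Finsupp.add_apply, Finsupp.smul_apply, mk_apply, smul_eq_mul,
      Nat.cast_ofNat] using this
  simp only [map_add, map_sub, map_smul, S_lq G.d0, smul_eq_mul] at key
  unfold hX TT
  linarith

/-- G5 -/
lemma GD.x_relation {N : ℝ} (hN : 1 ≤ N) {x y q r q' r' x2 x3 : ℚ} {n1 n2 n3 : ℤ}
    (h : y ^ 2 = x ^ 3 + a * x + b)
    (h' : r ^ 2 = q ^ 3 + a * q + b) (h'' : r' ^ 2 = q' ^ 3 + a * q' + b)
    (h2 : x ≠ q → x2 * (x - q) ^ 2 = (y - r) ^ 2 - (x + q) * (x - q) ^ 2)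
    (h3 : x ≠ q' → x3 * (x - q') ^ 2 = (y - r') ^ 2 - (x + q') * (x - q') ^ 2)
    (hr : dt x x2 x3 (n1 : ℚ) n2 n3 = 0) (hne : n2 ≠ n3)
    (hn1 : |((n2 - n3 : ℤ) : ℝ)| ≤ N) (hn2 : |((n3 - n1 : ℤ) : ℝ)| ≤ N)
    (hn3 : |((n1 - n2 : ℤ) : ℝ)| ≤ N) :
    hX a b x ≤ hX a b q + hX a b q' + Real.log N + 50 * TT j := by
  have hne' : ((n2 : ℚ) - n3) ≠ 0 := sub_ne_zero.2 (by exact_mod_cast hne)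
  have key : S ((2 : ℝ) • lm a b x + lq ((n2 : ℚ) - n3)) ≤
      S ((50 : ℝ) • lt j + (lc N + (2 : ℝ) • (lm a b q + lm a b q' - (1 / 12 : ℝ) • lq (dsc a b)))) := by
    apply G.globalize
    intro v
    obtain ⟨m1, m2⟩ := le_prod2 (G.wpos v) (G.w_le q v) (G.w_le q' v)
    have loc := (G.loc v).x_relation (one_le_cs hN v) h h' h'' m1 m2 h2 h3 hr
      (by simpa using av_int_le_cs hn1 v) (by simpa using av_int_le_cs hn2 v)
      (by simpa using av_int_le_cs hn3 v)
    have p1 : 0 < mv a b x v := G.mvpos x v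
    have p2 : 0 < av v ((n2 : ℚ) - n3) := (av v).pos hne'
    have p3 := G.taupos v
    have p5 : 0 < cs N v := lt_of_lt_of_le one_pos (one_le_cs hN v)
    have p4 : 0 < mv a b q v * mv a b q' v / wv a b v :=
      div_pos (mul_pos (G.mvpos q v) (G.mvpos q' v)) (G.wpos v)
    have := Real.log_le_log (mul_pos (pow_pos p1 2) p2) loc
    rw [Real.log_mul (by positivity) (by positivity), Real.log_mul (by positivity) (by positivity),
      Real.log_mul p5.ne' (by positivity),
      Real.log_pow, Real.log_pow, Real.log_pow, G.log_prod2] at this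
    simpa [lm, lt, lq_apply, lc] using this
  simp only [map_add, map_sub, map_smul, S_lq hne', S_lq G.d0, smul_eq_mul, S_lc] at key
  unfold hX TT
  linarith

/-- G8 -/
lemma GD.x_interp {N : ℝ} (hN : 1 ≤ N) {x x' xk : ℚ} {d d' d'' : ℤ}
    (hr : xk * d = d' * x' - d'' * x) (hne : d ≠ 0)
    (hd : |(d : ℝ)| ≤ N) (hd' : |(d' : ℝ)| ≤ N) (hd'' : |(d'' : ℝ)| ≤ N) :
    hX a b xk ≤ hX a b x + hX a b x' + Real.log N + 50 * TT j := by
  have hne' : (d : ℚ) ≠ 0 := by exact_mod_cast hne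
  have key : S ((2 : ℝ) • lm a b xk + lq (d : ℚ)) ≤
      S ((50 : ℝ) • lt j + (lc N + (2 : ℝ) • (lm a b x + lm a b x' - (1 / 12 : ℝ) • lq (dsc a b)))) := by
    apply G.globalize
    intro v
    obtain ⟨m1, m2⟩ := le_prod2 (G.wpos v) (G.w_le x v) (G.w_le x' v)
    have loc := (G.loc v).x_interp (one_le_cs hN v) m1 m2 hr
      (av_int_le_cs hd v) (av_int_le_cs hd' v) (av_int_le_cs hd'' v)
    have p1 : 0 < mv a b xk v := G.mvpos xk v
    have p2 : 0 < av v (d : ℚ) := (av v).pos hne'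
    have p3 := G.taupos v
    have p5 : 0 < cs N v := lt_of_lt_of_le one_pos (one_le_cs hN v)
    have p4 : 0 < mv a b x v * mv a b x' v / wv a b v :=
      div_pos (mul_pos (G.mvpos x v) (G.mvpos x' v)) (G.wpos v)
    have := Real.log_le_log (mul_pos (pow_pos p1 2) p2) loc
    rw [Real.log_mul (by positivity) (by positivity), Real.log_mul (by positivity) (by positivity),
      Real.log_mul p5.ne' (by positivity),
      Real.log_pow, Real.log_pow, Real.log_pow, G.log_prod2] at this
    simpa [lm, lt, lq_apply, lc] using this
  simp only [map_add, map_sub, map_smul, S_lq hne', S_lq G.d0, smul_eq_mul, S_lc] at key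
  unfold hX TT
  linarith

lemma GD.glob3 {N : ℝ} (hN : 1 ≤ N) {k : ℕ} {x q2 q3 q4 d : ℚ} (hne' : d ≠ 0)
    (hloc : ∀ v, mv a b x v * av v d ≤ tau j v ^ k *
      (cs N v * (mv a b q2 v * mv a b q3 v * mv a b q4 v / wv a b v ^ 2) ^ 3)) :
    hX a b x ≤ 3 * (hX a b q2 + hX a b q3 + hX a b q4) + 2 * Real.log N + 2 * k * TT j := by
  have key : S (lm a b x + lq d) ≤
      S ((k : ℝ) • lt j + (lc N + (3 : ℝ) • (lm a b q2 + lm a b q3 + lm a b q4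
        - (1 / 6 : ℝ) • lq (dsc a b)))) := by
    apply G.globalize
    intro v
    have loc := hloc v
    have p1 : 0 < mv a b x v := G.mvpos x v
    have p2 : 0 < av v d := (av v).pos hne'
    have p3 := G.taupos v
    have p5 : 0 < cs N v := lt_of_lt_of_le one_pos (one_le_cs hN v)
    have p4 : 0 < mv a b q2 v * mv a b q3 v * mv a b q4 v / wv a b v ^ 2 :=
      div_pos (mul_pos (mul_pos (G.mvpos q2 v) (G.mvpos q3 v)) (G.mvpos q4 v)) (pow_pos (G.wpos v) 2)
    have := Real.log_le_log (mul_pos p1 p2) loc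
    rw [Real.log_mul (by positivity) (by positivity), Real.log_mul (by positivity) (by positivity),
      Real.log_mul p5.ne' (by positivity),
      Real.log_pow, Real.log_pow, G.log_prod3] at this
    simpa [lm, lt, lq_apply, lc] using this
  simp only [map_add, map_sub, map_smul, S_lq hne', S_lq G.d0, smul_eq_mul, S_lc] at key
  unfold hX TT
  linarith

/-- G7 -/
lemma GD.y_relation {N : ℝ} (hN : 1 ≤ N) {x y x2 y2 x3 y3 x4 y4 l ν : ℚ} {m2 m3 m4 : ℤ}
    (h : y ^ 2 = x ^ 3 + a * x + b)
    (h2 : y2 ^ 2 = x2 ^ 3 + a * x2 + b)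
    (h3 : y3 ^ 2 = x3 ^ 3 + a * x3 + b)
    (h4 : y4 ^ 2 = x4 ^ 3 + a * x4 + b)
    (r2 : y2 = y + l * (x2 - x) + ν * m2) (r3 : y3 = y + l * (x3 - x) + ν * m3)
    (r4 : y4 = y + l * (x4 - x) + ν * m4)
    (g2 : |(m2 : ℝ)| ≤ N) (g3 : |(m3 : ℝ)| ≤ N) (g4 : |(m4 : ℝ)| ≤ N)
    (hne : dt x2 x3 x4 (m2 : ℚ) m3 m4 ≠ 0) :
    hX a b x ≤ 3 * (hX a b x2 + hX a b x3 + hX a b x4) + 2 * Real.log N + 100 * TT j := by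
  have := G.glob3 (k := 50) hN hne (x := x) (q2 := x2) (q3 := x3) (q4 := x4) (fun v => by
    obtain ⟨m1, m2, m3⟩ := le_prod3 (G.wpos v) (G.w_le x2 v) (G.w_le x3 v) (G.w_le x4 v)
    exact (G.loc v).y_relation (one_le_cs hN v) h h2 h3 h4 m1 m2 m3 r2 r3 r4
      (av_int_le_cs g2 v) (av_int_le_cs g3 v) (av_int_le_cs g4 v))
  push_cast at this
  linarith

/-- G6 -/
lemma GD.y_relation' {N : ℝ} (hN : 1 ≤ N) {x y x2 y2 x3 y3 x4 y4 q2 t2 q3 t3 q4 t4 l ν : ℚ}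
    {m2 m3 m4 : ℤ}
    (h : y ^ 2 = x ^ 3 + a * x + b)
    (h2 : y2 ^ 2 = x2 ^ 3 + a * x2 + b)
    (h3 : y3 ^ 2 = x3 ^ 3 + a * x3 + b)
    (h4 : y4 ^ 2 = x4 ^ 3 + a * x4 + b)
    (k2 : t2 ^ 2 = q2 ^ 3 + a * q2 + b)
    (k3 : t3 ^ 2 = q3 ^ 3 + a * q3 + b)
    (k4 : t4 ^ 2 = q4 ^ 3 + a * q4 + b)
    (s2 : x ≠ q2 → x2 * (x - q2) ^ 2 = (y - t2) ^ 2 - (x + q2) * (x - q2) ^ 2)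
    (s3 : x ≠ q3 → x3 * (x - q3) ^ 2 = (y - t3) ^ 2 - (x + q3) * (x - q3) ^ 2)
    (s4 : x ≠ q4 → x4 * (x - q4) ^ 2 = (y - t4) ^ 2 - (x + q4) * (x - q4) ^ 2)
    (r2 : y2 = y + l * (x2 - x) + ν * m2) (r3 : y3 = y + l * (x3 - x) + ν * m3)
    (r4 : y4 = y + l * (x4 - x) + ν * m4)
    (g2 : |(m2 : ℝ)| ≤ N) (g3 : |(m3 : ℝ)| ≤ N) (g4 : |(m4 : ℝ)| ≤ N)
    (hne : dt q2 q3 q4 (m2 : ℚ) m3 m4 ≠ 0) :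
    hX a b x ≤ 3 * (hX a b q2 + hX a b q3 + hX a b q4) + 2 * Real.log N + 800 * TT j := by
  have := G.glob3 (k := 400) hN hne (x := x) (q2 := q2) (q3 := q3) (q4 := q4) (fun v => by
    obtain ⟨m1, m2, m3⟩ := le_prod3 (G.wpos v) (G.w_le q2 v) (G.w_le q3 v) (G.w_le q4 v)
    exact (G.loc v).y_relation' (one_le_cs hN v) h h2 h3 h4 k2 k3 k4 m1 m2 m3 s2 s3 s4 r2 r3 r4
      (av_int_le_cs g2 v) (av_int_le_cs g3 v) (av_int_le_cs g4 v))
  push_cast at this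
  linarith

/-- heights of x-coordinates versus naive heights -/
lemma GD.hX_eq (x : ℚ) (hx : x ≠ 0) : 6 * hX a b x =
    Real.log (max (x ^ 6 / dsc a b).num.natAbs (x ^ 6 / dsc a b).den : ℕ) := by
  have hq : x ^ 6 / dsc a b ≠ 0 := div_ne_zero (pow_ne_zero _ hx) G.d0
  rw [← logHeight_pl _ hq]
  have e : S ((12 : ℝ) • (lm a b x - (1 / 12 : ℝ) • lq (dsc a b))) = 6 * hX a b x := by
    simp only [map_smul, map_sub, S_lq G.d0, smul_eq_mul, hX]; ring
  rw [← e, S_apply]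
  apply finsum_congr
  intro v
  have hw := G.wpos v
  have hm := G.mvpos x v
  simp only [Finsupp.smul_apply, Finsupp.sub_apply, smul_eq_mul]
  rw [← G.logw v]
  have : lm a b x v = Real.log (mv a b x v) := rfl
  rw [this, ← Real.log_div hm.ne' hw.ne']
  have : (12 : ℝ) = (12 : ℕ) := by norm_num
  rw [this, ← Real.log_pow]
  congr 1
  rw [map_div₀, (av v).map_pow, G.w12 v, div_pow]
  have h12 : 0 < wv a b v ^ 12 := pow_pos hw 12
  have : mv a b x v ^ 12 = max (av v x ^ 6) (wv a b v ^ 12) := by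
    unfold mv mu
    have h0 := (av v).nonneg x
    have e1 : av v x ^ 6 = Real.sqrt (av v x) ^ 12 := by
      rw [show (12 : ℕ) = 2 * 6 from rfl, pow_mul, Real.sq_sqrt h0]
    rw [e1]
    rcases le_total (Real.sqrt (av v x)) (wv a b v) with h | h
    · rw [max_eq_right h, max_eq_right (by gcongr)]
    · rw [max_eq_left h, max_eq_left (by gcongr)]
  rw [this, ← max_div_div_right h12.le, div_self h12.ne']

end
end APRank

namespace APRank
set_option linter.unusedVariables false
set_option linter.unusedSectionVars false
set_option linter.unusedSimpArgs false
open Function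

/-- An abstract description of the group of points of `y² = x³ + a x + b`:
`Pt P x y` says that `P` is the affine point `(x, y)`. -/
structure EC {F Γ : Type*} [Field F] [AddCommGroup Γ] (a b : F) (Pt : Γ → F → F → Prop) : Prop where
  zero : ∀ x y, ¬ Pt 0 x y
  ex : ∀ P, P ≠ 0 → ∃ x y, Pt P x y
  uniq : ∀ {P x y x' y'}, Pt P x y → Pt P x' y' → x = x' ∧ y = y'
  inj : ∀ {P Q x y}, Pt P x y → Pt Q x y → P = Q
  curve : ∀ {P x y}, Pt P x y → y ^ 2 = x ^ 3 + a * x + b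
  surj : ∀ {x y}, y ^ 2 = x ^ 3 + a * x + b → ∃ P, Pt P x y
  neg : ∀ {P x y}, Pt P x y → Pt (-P) x (-y)
  add : ∀ {P Q x y x' y'}, Pt P x y → Pt Q x' y' → x ≠ x' →
    Pt (P + Q) (((y - y') / (x - x')) ^ 2 - x - x')
      (-(((y - y') / (x - x')) * ((((y - y') / (x - x')) ^ 2 - x - x') - x) + y))
  dbl : ∀ {P x y}, Pt P x y → y ≠ 0 →
    Pt (P + P) (((3 * x ^ 2 + a) / (2 * y)) ^ 2 - 2 * x)
      (-(((3 * x ^ 2 + a) / (2 * y)) * ((((3 * x ^ 2 + a) / (2 * y)) ^ 2 - 2 * x) - x) + y))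

namespace EC
section
variable {F Γ : Type*} [Field F] [AddCommGroup Γ] {a b : F} {Pt : Γ → F → F → Prop}
  (E : EC a b Pt)
include E

lemma ne_zero {P : Γ} {x y : F} (h : Pt P x y) : P ≠ 0 := by
  rintro rfl; exact E.zero _ _ h

lemma eq_or_neg {P Q : Γ} {x y y' : F} (h : Pt P x y) (h' : Pt Q x y') : P = Q ∨ P = -Q := by
  have h1 := E.curve h
  have h2 := E.curve h'
  rw [← h2] at h1
  rcases sq_eq_sq_iff_eq_or_eq_neg.1 h1 with e | e
  · left; subst e; exact E.inj h h'
  · right; subst e; exact E.inj h (E.neg h')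

lemma dbl_zero {P : Γ} {x : F} (h : Pt P x 0) : P + P = 0 := by
  have := E.neg h
  rw [neg_zero] at this
  have := E.inj h this
  nth_rewrite 2 [this]; simp

lemma add_x {P Q R : Γ} {x y x' y' x3 y3 : F} (h : Pt P x y) (h' : Pt Q x' y') (hR : Pt R x3 y3)
    (e : R = P + Q) (hne : x ≠ x') :
    x3 * (x - x') ^ 2 = (y - y') ^ 2 - (x + x') * (x - x') ^ 2 := by
  subst e
  have := (E.uniq hR (E.add h h' hne)).1
  have h0 : x - x' ≠ 0 := sub_ne_zero.2 hne
  rw [this]; field_simp; ring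

lemma dbl_x {P R : Γ} {x y x3 y3 : F} (h2 : (2 : F) ≠ 0) (h : Pt P x y) (hR : Pt R x3 y3)
    (e : R = P + P) (hne : y ≠ 0) :
    x3 * (4 * y ^ 2) = x ^ 4 - 2 * (a * x ^ 2) - 8 * (b * x) + a ^ 2 := by
  subst e
  have := (E.uniq hR (E.dbl h hne)).1
  have hc := E.curve h
  have : x3 * (4 * y ^ 2) = (3 * x ^ 2 + a) ^ 2 - 8 * x * y ^ 2 := by
    rw [this]; field_simp; ring
  rw [this, hc]; ring

end
end EC

section
variable {Γ : Type*} [AddCommGroup Γ] {a b j : ℚ} {Pt : Γ → ℚ → ℚ → Prop}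

open Classical in
/-- the height on the group -/
noncomputable def ht (a b : ℚ) (Pt : Γ → ℚ → ℚ → Prop) (P : Γ) : ℝ :=
  if h : ∃ x y, Pt P x y then hX a b h.choose else 0

variable (E : EC a b Pt) (G : GD a b j)
include E

lemma EC.ht_eq {P : Γ} {x y : ℚ} (h : Pt P x y) : ht a b Pt P = hX a b x := by
  have h' : ∃ x y, Pt P x y := ⟨x, y, h⟩
  unfold ht
  rw [dif_pos h']
  obtain ⟨z, hz⟩ := h'.choose_spec
  rw [(E.uniq h hz).1]

lemma EC.ht_zero : ht a b Pt 0 = 0 := by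
  unfold ht
  rw [dif_neg]
  rintro ⟨x, y, h⟩
  exact E.zero _ _ h

lemma EC.ht_neg (P : Γ) : ht a b Pt (-P) = ht a b Pt P := by
  by_cases hP : P = 0
  · simp [hP]
  · obtain ⟨x, y, h⟩ := E.ex P hP
    rw [E.ht_eq h, E.ht_eq (E.neg h)]

include G

lemma EC.ht_nonneg (P : Γ) : 0 ≤ ht a b Pt P := by
  by_cases hP : P = 0
  · rw [hP, E.ht_zero]
  · obtain ⟨x, y, h⟩ := E.ex P hP
    rw [E.ht_eq h]; exact G.hX_nonneg x

lemma EC.ht_dbl_le (P : Γ) : ht a b Pt (P + P) ≤ 4 * ht a b Pt P + 200 * TT j := by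
  have hT := G.TT_nonneg
  by_cases hP : P = 0
  · simp [hP, E.ht_zero, hT]
  obtain ⟨x, y, h⟩ := E.ex P hP
  by_cases hy : y = 0
  · subst hy
    rw [E.dbl_zero h, E.ht_zero]
    have := E.ht_nonneg G P
    positivity
  · have h2 := E.dbl h hy
    rw [E.ht_eq h, E.ht_eq h2]
    have := G.dbl_le (E.curve h) hy (E.dbl_x two_ne_zero h h2 rfl hy)
    linarith

lemma EC.le_ht_dbl (P : Γ) : 4 * ht a b Pt P ≤ ht a b Pt (P + P) + 200 * TT j := by
  have hT := G.TT_nonneg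
  by_cases hP : P = 0
  · simp [hP, E.ht_zero, hT]
  obtain ⟨x, y, h⟩ := E.ex P hP
  by_cases hy : y = 0
  · subst hy
    rw [E.dbl_zero h, E.ht_zero, E.ht_eq h]
    have := G.y_zero (by simpa using E.curve h)
    linarith
  · have h2 := E.dbl h hy
    rw [E.ht_eq h, E.ht_eq h2]
    exact G.le_dbl (E.curve h) hy (E.dbl_x two_ne_zero h h2 rfl hy)

lemma EC.ht_add_le (P Q : Γ) :
    ht a b Pt (P + Q) ≤ 3 * ht a b Pt P + 3 * ht a b Pt Q + 200 * TT j := by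
  have hT := G.TT_nonneg
  have p1 := E.ht_nonneg G P
  have p2 := E.ht_nonneg G Q
  by_cases hP : P = 0
  · subst hP; rw [zero_add]; linarith
  by_cases hQ : Q = 0
  · subst hQ; rw [add_zero]; linarith
  obtain ⟨x, y, h⟩ := E.ex P hP
  obtain ⟨x', y', h'⟩ := E.ex Q hQ
  by_cases hx : x = x'
  · subst hx
    rcases E.eq_or_neg h h' with e | e
    · subst e
      have := E.ht_dbl_le G P
      linarith
    · rw [e, neg_add_cancel, E.ht_zero, E.ht_neg]; positivity
  · have h3 := E.add h h' hx
    have := G.add_le (E.curve h) (E.curve h') hx (E.add_x h h' h3 rfl hx)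
    rw [E.ht_eq h, E.ht_eq h', E.ht_eq h3]
    linarith

/-- counting points of bounded height -/
lemma EC.ht_count (s : Finset Γ) {t : ℝ} (ht0 : 0 ≤ t) (hs : ∀ P ∈ s, ht a b Pt P ≤ t) :
    (s.card : ℝ) ≤ 100 * Real.exp (12 * t) := by
  classical
  set R : ℕ := ⌊Real.exp (6 * t)⌋₊ with hR
  have hR1 : (R : ℝ) ≤ Real.exp (6 * t) := Nat.floor_le (Real.exp_pos _).le
  -- the coordinates
  have hxy : ∀ P : Γ, ∃ c : ℚ × ℚ, P ≠ 0 → Pt P c.1 c.2 := by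
    intro P
    by_cases hP : P = 0
    · exact ⟨0, fun h => absurd hP h⟩
    · obtain ⟨x, y, h⟩ := E.ex P hP
      exact ⟨(x, y), fun _ => h⟩
  choose c hc using hxy
  let f : Γ → ℤ × ℕ × SignType × SignType := fun P =>
    (((c P).1 ^ 6 / dsc a b).num, ((c P).1 ^ 6 / dsc a b).den, SignType.sign (c P).1,
      SignType.sign (c P).2)
  let t' : Finset (ℤ × ℕ × SignType × SignType) :=
    Finset.Icc (-(R : ℤ)) R ×ˢ (Finset.range (R + 1) ×ˢ (Finset.univ ×ˢ Finset.univ))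
  have hone : 1 ≤ R := by
    rw [hR]
    apply Nat.le_floor
    simpa using Real.one_le_exp (by positivity : 0 ≤ 6 * t)
  have hmaps : ∀ P ∈ s.erase 0, f P ∈ t' := by
    intro P hP
    rw [Finset.mem_erase] at hP
    have h := hc P hP.1
    have hle := hs P hP.2
    rw [E.ht_eq h] at hle
    simp only [t', f, Finset.mem_product, Finset.mem_Icc, Finset.mem_range, Finset.mem_univ, and_true]
    by_cases hx : (c P).1 = 0
    · rw [hx]; simp; omega
    · have h6 := G.hX_eq _ hx
      set q := (c P).1 ^ 6 / dsc a b
      have hpos : (0 : ℝ) < (max q.num.natAbs q.den : ℕ) := by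
        have := q.den_pos
        exact_mod_cast lt_of_lt_of_le this (le_max_right _ _)
      have h7 : ((max q.num.natAbs q.den : ℕ) : ℝ) ≤ Real.exp (6 * t) := by
        rw [← Real.log_le_iff_le_exp hpos, ← h6]; linarith
      have h8 : max q.num.natAbs q.den ≤ R := Nat.le_floor h7
      have h9 := (le_max_left _ _).trans h8
      have h10 := (le_max_right _ _).trans h8
      refine ⟨⟨?_, ?_⟩, ?_⟩ <;> omega
  have hinj : Set.InjOn f (s.erase 0 : Finset Γ) := by
    intro P hP Q hQ hPQ
    simp only [Finset.coe_erase, Set.mem_sdiff, Set.mem_singleton_iff] at hP hQ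
    have h := hc P hP.2
    have h' := hc Q hQ.2
    simp only [f, Prod.mk.injEq] at hPQ
    obtain ⟨e1, e2, e3, e4⟩ := hPQ
    have eq := Rat.ext e1 e2
    have e6 : (c P).1 ^ 6 = (c Q).1 ^ 6 := by
      have := G.d0
      field_simp at eq
      exact eq
    have sgn : ∀ u v : ℚ, |u| = |v| → SignType.sign u = SignType.sign v → u = v := by
      intro u v h1 h2
      rw [← sign_mul_abs u, ← sign_mul_abs v, h1, h2]
    have ex : (c P).1 = (c Q).1 := by
      apply sgn _ _ _ e3
      have : |(c P).1| ^ 6 = |(c Q).1| ^ 6 := by rw [← abs_pow, ← abs_pow, e6]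
      exact (pow_left_inj₀ (abs_nonneg _) (abs_nonneg _) (by norm_num)).1 this
    have ey : (c P).2 = (c Q).2 := by
      apply sgn _ _ _ e4
      rw [← sq_eq_sq_iff_abs_eq_abs, E.curve h, E.curve h', ex]
    rw [ex, ey] at h
    exact E.inj h h'
  have hcard := Finset.card_le_card_of_injOn f hmaps hinj
  have h1 : s.card ≤ (s.erase 0).card + 1 := by
    have := Finset.pred_card_le_card_erase (s := s) (a := (0 : Γ))
    omega
  have h2 : t'.card = (2 * R + 1) * ((R + 1) * 9) := by
    simp only [t', Finset.card_product, Int.card_Icc, Finset.card_range, Finset.card_univ]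
    have : Fintype.card SignType = 3 := by decide
    rw [this]
    congr 1
    omega
  have h3 : s.card ≤ 100 * R ^ 2 := by nlinarith
  calc (s.card : ℝ) ≤ 100 * (R : ℝ) ^ 2 := by exact_mod_cast h3
    _ ≤ 100 * (Real.exp (6 * t)) ^ 2 := by gcongr
    _ = _ := by rw [← Real.exp_nat_mul]; congr 2; push_cast; ring

/-- X relation for points -/
lemma EC.x_rel {N : ℝ} (hN : 1 ≤ N) {P P2 P3 : Γ} {x y x2 y2 x3 y3 : ℚ} {n1 n2 n3 : ℤ}
    (h : Pt P x y) (h2 : Pt P2 x2 y2) (h3 : Pt P3 x3 y3) (ne2 : P2 ≠ P) (ne3 : P3 ≠ P)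
    (hr : dt x x2 x3 (n1 : ℚ) n2 n3 = 0) (hne : n2 ≠ n3)
    (hn1 : |((n2 - n3 : ℤ) : ℝ)| ≤ N) (hn2 : |((n3 - n1 : ℤ) : ℝ)| ≤ N)
    (hn3 : |((n1 - n2 : ℤ) : ℝ)| ≤ N) :
    ht a b Pt P ≤ ht a b Pt (P2 - P) + ht a b Pt (P3 - P) + Real.log N + 50 * TT j := by
  obtain ⟨q, r, k⟩ := E.ex _ (sub_ne_zero.2 ne2)
  obtain ⟨q', r', k'⟩ := E.ex _ (sub_ne_zero.2 ne3)
  rw [E.ht_eq h, E.ht_eq k, E.ht_eq k']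
  exact G.x_relation hN (E.curve h) (E.curve k) (E.curve k') (E.add_x h k h2 (by abel))
    (E.add_x h k' h3 (by abel)) hr hne hn1 hn2 hn3

/-- Y relation for points -/
lemma EC.y_rel {N : ℝ} (hN : 1 ≤ N) {P P2 P3 P4 : Γ} {x y x2 y2 x3 y3 x4 y4 l ν : ℚ} {m2 m3 m4 : ℤ}
    {q2 t2 q3 t3 q4 t4 : ℚ}
    (h : Pt P x y) (h2 : Pt P2 x2 y2) (h3 : Pt P3 x3 y3) (h4 : Pt P4 x4 y4)
    (k2 : Pt (P2 - P) q2 t2) (k3 : Pt (P3 - P) q3 t3) (k4 : Pt (P4 - P) q4 t4)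
    (r2 : y2 = y + l * (x2 - x) + ν * m2) (r3 : y3 = y + l * (x3 - x) + ν * m3)
    (r4 : y4 = y + l * (x4 - x) + ν * m4)
    (g2 : |(m2 : ℝ)| ≤ N) (g3 : |(m3 : ℝ)| ≤ N) (g4 : |(m4 : ℝ)| ≤ N)
    (hne : dt q2 q3 q4 (m2 : ℚ) m3 m4 ≠ 0) :
    ht a b Pt P ≤ 3 * (ht a b Pt (P2 - P) + ht a b Pt (P3 - P) + ht a b Pt (P4 - P))
      + 2 * Real.log N + 800 * TT j := by
  rw [E.ht_eq h, E.ht_eq k2, E.ht_eq k3, E.ht_eq k4]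
  exact G.y_relation' hN (E.curve h) (E.curve h2) (E.curve h3) (E.curve h4) (E.curve k2)
    (E.curve k3) (E.curve k4) (E.add_x h k2 h2 (by abel)) (E.add_x h k3 h3 (by abel))
    (E.add_x h k4 h4 (by abel)) r2 r3 r4 g2 g3 g4 hne

end
end APRank

namespace APRank
set_option linter.unusedVariables false
set_option linter.unusedSectionVars false
set_option linter.unusedSimpArgs false

/-! ### Packing -/

/-- abstract height axioms -/
structure HtD {Γ : Type*} [AddCommGroup Γ] (h : Γ → ℝ) (A : ℝ) : Prop where
  A0 : 0 ≤ A
  nonneg : ∀ P, 0 ≤ h P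
  zero : h 0 = 0
  neg : ∀ P, h (-P) = h P
  dbl_le : ∀ P, h (P + P) ≤ 4 * h P + A
  le_dbl : ∀ P, 4 * h P ≤ h (P + P) + A
  add_le : ∀ P Q, h (P + Q) ≤ 3 * h P + 3 * h Q + A
  count : ∀ (s : Finset Γ) (t : ℝ), 0 ≤ t → (∀ P ∈ s, h P ≤ t) → (s.card : ℝ) ≤ 100 * Real.exp (12 * t)

lemma EC.htD {Γ : Type*} [AddCommGroup Γ] {a b j : ℚ} {Pt : Γ → ℚ → ℚ → Prop}
    (E : EC a b Pt) (G : GD a b j) : HtD (ht a b Pt) (200 * TT j) where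
  A0 := by have := G.TT_nonneg; positivity
  nonneg := E.ht_nonneg G
  zero := E.ht_zero
  neg := E.ht_neg
  dbl_le := E.ht_dbl_le G
  le_dbl := E.le_ht_dbl G
  add_le := E.ht_add_le G
  count := fun s t h0 hs => E.ht_count G s h0 hs

namespace HtD
variable {Γ : Type*} [AddCommGroup Γ] {h : Γ → ℝ} {A : ℝ} (D : HtD h A)
include D

lemma sub_le (P Q : Γ) : h (P - Q) ≤ 3 * h P + 3 * h Q + A := by
  rw [sub_eq_add_neg, ← D.neg Q]; exact D.add_le _ _

lemma pow_le (k : ℕ) (P : Γ) : h ((2 ^ k : ℕ) • P) ≤ (4 : ℝ) ^ k * (h P + A) - A := by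
  have hA := D.A0
  induction k with
  | zero => simp
  | succ k ih =>
    have e : ((2 ^ (k + 1) : ℕ)) • P = (2 ^ k : ℕ) • P + (2 ^ k : ℕ) • P := by
      rw [← add_nsmul]; congr 1; ring
    rw [e]
    have := D.dbl_le ((2 ^ k : ℕ) • P)
    rw [pow_succ]
    linarith

lemma le_pow (k : ℕ) (P : Γ) : (4 : ℝ) ^ k * (h P - A) ≤ h ((2 ^ k : ℕ) • P) - A := by
  have hA := D.A0
  induction k with
  | zero => simp
  | succ k ih =>
    have e : ((2 ^ (k + 1) : ℕ)) • P = (2 ^ k : ℕ) • P + (2 ^ k : ℕ) • P := by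
      rw [← add_nsmul]; congr 1; ring
    rw [e]
    have := D.le_dbl ((2 ^ k : ℕ) • P)
    rw [pow_succ]
    linarith

/-- building many points of small height -/
lemma build {ρ R : ℝ} (hρ0 : 0 < ρ) (hρ : 4 * A ≤ ρ) {i : ℕ}
    (hi : 60 * R + 40 ≤ (4 : ℝ) ^ i) (s : Finset Γ) (hs : ∀ p ∈ s, h p ≤ R * ρ)
    (hsep : ∀ p ∈ s, ∀ q ∈ s, p ≠ q → ρ < h (p - q)) (k : ℕ) :
    ∃ B : Finset Γ, B.card = s.card ^ k ∧ ∀ e ∈ B, h e ≤ (4 : ℝ) ^ (i * k) * ρ / 20 := by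
  classical
  have hA := D.A0
  induction k with
  | zero =>
    refine ⟨{0}, by simp, ?_⟩
    intro e he
    rw [Finset.mem_singleton] at he
    rw [he, D.zero]; positivity
  | succ k ih =>
    obtain ⟨B, hB, hBh⟩ := ih
    refine ⟨(B ×ˢ s).image (fun z => z.1 + (2 ^ (i * k) : ℕ) • z.2), ?_, ?_⟩
    · rw [Finset.card_image_of_injOn, Finset.card_product, hB, pow_succ]
      rintro ⟨e, p⟩ hep ⟨e', p'⟩ hep' heq
      simp only [Finset.coe_product, Set.mem_prod, Finset.mem_coe] at hep hep'
      simp only at heq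
      have e1 : (2 ^ (i * k) : ℕ) • (p - p') = e' - e := by
        rw [nsmul_sub]
        rw [sub_eq_sub_iff_add_eq_add, add_comm, heq, add_comm]
      have hpp : p = p' := by
        by_contra hne
        have h1 := hsep p hep.2 p' hep'.2 hne
        have h2 := D.le_pow (i * k) (p - p')
        rw [e1] at h2
        have h3 := D.sub_le e' e
        have h4 := hBh e hep.1
        have h5 := hBh e' hep'.1
        have h6 : (1 : ℝ) ≤ 4 ^ (i * k) := one_le_pow₀ (by norm_num)
        set X := (4 : ℝ) ^ (i * k)
        nlinarith
      subst hpp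
      simp at heq
      rw [heq]
    · intro x hx
      rw [Finset.mem_image] at hx
      obtain ⟨⟨e, p⟩, hep, rfl⟩ := hx
      rw [Finset.mem_product] at hep
      have h1 := D.add_le e ((2 ^ (i * k) : ℕ) • p)
      have h2 := D.pow_le (i * k) p
      have h3 := hBh e hep.1
      have h4 := hs p hep.2
      have h6 : (1 : ℝ) ≤ 4 ^ (i * k) := one_le_pow₀ (by norm_num)
      rw [mul_add, pow_add, mul_one]
      simp only
      set X := (4 : ℝ) ^ (i * k)
      have h7 : X * ((60 * R + 40) * ρ) ≤ X * (4 ^ i * ρ) := by gcongr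
      have h8 : X * h p ≤ X * (R * ρ) := by gcongr
      have h9 : X * (4 * A) ≤ X * ρ := by gcongr
      nlinarith

/-- upper bound for the number of points, by pigeonhole -/
lemma packing {n : ℕ} (φ : Γ →+ (Fin n → ℤ)) (hφ : Function.Surjective φ)
    (hker : (φ.ker : Set Γ).Finite) {ρ R : ℝ} (hρ0 : 0 < ρ) (hρ : 4 * A ≤ ρ) {i : ℕ}
    (hi : 60 * R + 40 ≤ (4 : ℝ) ^ i) (s : Finset Γ) (hs : ∀ p ∈ s, h p ≤ R * ρ)
    (hsep : ∀ p ∈ s, ∀ q ∈ s, p ≠ q → ρ < h (p - q)) : s.card ≤ (2 ^ i) ^ n := by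
  classical
  have hA := D.A0
  set K := hker.toFinset with hK
  obtain ⟨τ0, hτ0⟩ : ∃ τ0 : ℝ, 0 ≤ τ0 ∧ ∀ t ∈ K, h t ≤ τ0 := by
    refine ⟨∑ t ∈ K, h t, Finset.sum_nonneg fun t _ => D.nonneg t, fun t ht => ?_⟩
    exact Finset.single_le_sum (f := h) (fun t _ => D.nonneg t) ht
  set H : ℝ := 6 * A + ρ + 3 * τ0 with hH
  have hH0 : 0 ≤ H := by have := hτ0.1; positivity
  -- the main inequality
  have main : ∀ k : ℕ, (s.card : ℝ) ^ k ≤ (((2 ^ i) ^ n : ℕ) : ℝ) ^ k *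
      (K.card * (100 * Real.exp (12 * H))) := by
    intro k
    obtain ⟨B, hB, hBh⟩ := D.build hρ0 hρ hi s hs hsep k
    set m : ℕ := 2 ^ (i * k) with hm
    haveI : NeZero m := ⟨by positivity⟩
    let ψ : Γ → (Fin n → ZMod m) := fun e l => ((φ e l : ℤ) : ZMod m)
    have hfib : ∀ z : Fin n → ZMod m, ((B.filter (fun e => ψ e = z)).card : ℝ) ≤
        K.card * (100 * Real.exp (12 * H)) := by
      intro z
      by_cases hne : (B.filter (fun e => ψ e = z)) = ∅
      · rw [hne]; simp; positivity
      obtain ⟨e0, he0⟩ := Finset.nonempty_iff_ne_empty.2 hne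
      rw [Finset.mem_filter] at he0
      have hex : ∀ e : Γ, ∃ gt : Γ × Γ, ψ e = z → gt.2 ∈ K ∧ e = e0 + m • gt.1 + gt.2 := by
        intro e
        by_cases hz : ψ e = z
        · have h1 : ∀ l, ∃ c : ℤ, φ e l - φ e0 l = m * c := by
            intro l
            have : ((φ e l : ℤ) : ZMod m) = ((φ e0 l : ℤ) : ZMod m) := by
              have := congrFun (hz.trans he0.2.symm) l
              exact this
            rw [ZMod.intCast_eq_intCast_iff_dvd_sub] at this
            obtain ⟨c, hc⟩ := this
            exact ⟨-c, by linear_combination -hc⟩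
          choose c hc using h1
          obtain ⟨g, hg⟩ := hφ c
          refine ⟨(g, e - e0 - m • g), fun _ => ⟨?_, by simp only; abel⟩⟩
          rw [hK, Set.Finite.mem_toFinset]
          simp only [SetLike.mem_coe, AddMonoidHom.mem_ker]
          ext l
          simp only [map_sub, map_nsmul, hg, Pi.sub_apply, Pi.smul_apply, Pi.zero_apply, hc]
          simp
        · exact ⟨0, fun h => absurd h hz⟩
      choose gt hgt using hex
      -- the set of g's
      let T := (B.filter (fun e => ψ e = z)).image (fun e => (gt e).1)
      have hT : ∀ g ∈ T, h g ≤ H := by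
        intro g hg
        simp only [T, Finset.mem_image, Finset.mem_filter] at hg
        obtain ⟨e, ⟨heB, hez⟩, rfl⟩ := hg
        obtain ⟨htK, heq⟩ := hgt e hez
        have e1 : m • (gt e).1 = (e - e0) - (gt e).2 := by
          nth_rewrite 2 [heq]; abel
        have h1 := D.le_pow (i * k) (gt e).1
        rw [← hm, e1] at h1
        have h2 := D.sub_le (e - e0) (gt e).2
        have h3 := D.sub_le e e0
        have h4 := hBh e heB
        have h5 := hBh e0 he0.1
        have h7 := hτ0.2 _ htK
        have h6 : (1 : ℝ) ≤ 4 ^ (i * k) := one_le_pow₀ (by norm_num)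
        have h8 := hτ0.1
        set X := (4 : ℝ) ^ (i * k)
        have h9 : X * (h (gt e).1 - A) ≤ X * (H - A) := by
          have : 1 * (5 * A + 3 * τ0) ≤ X * (5 * A + 3 * τ0) := by gcongr
          have e2 : X * (H - A) = X * (5 * A + 3 * τ0) + X * ρ := by rw [hH]; ring
          nlinarith
        have := le_of_mul_le_mul_left h9 (by linarith)
        linarith
      have hTc := D.count T H hH0 hT
      have hcard : (B.filter (fun e => ψ e = z)).card ≤ (T ×ˢ K).card := by
        apply Finset.card_le_card_of_injOn gt
        · intro e he
          rw [Finset.mem_coe] at he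
          have hz := (Finset.mem_filter.1 he).2
          rw [Finset.mem_coe, Finset.mem_product]
          exact ⟨Finset.mem_image_of_mem _ he, (hgt e hz).1⟩
        · intro e he e' he' hee
          have hz := (Finset.mem_filter.1 (Finset.mem_coe.1 he)).2
          have hz' := (Finset.mem_filter.1 (Finset.mem_coe.1 he')).2
          rw [(hgt e hz).2, (hgt e' hz').2, hee]
      rw [Finset.card_product] at hcard
      calc ((B.filter (fun e => ψ e = z)).card : ℝ) ≤ T.card * K.card := by exact_mod_cast hcard
        _ ≤ (100 * Real.exp (12 * H)) * K.card := by gcongr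
        _ = _ := by ring
    have hsum : B.card = ∑ z : Fin n → ZMod m, (B.filter (fun e => ψ e = z)).card :=
      Finset.card_eq_sum_card_fiberwise (fun _ _ => Finset.mem_univ _)
    have hcardZ : Fintype.card (Fin n → ZMod m) = ((2 ^ i) ^ n) ^ k := by
      rw [Fintype.card_fun, ZMod.card, Fintype.card_fin, hm]
      rw [← pow_mul, ← pow_mul, ← pow_mul]; congr 1; ring
    calc (s.card : ℝ) ^ k = (B.card : ℝ) := by rw [hB]; push_cast; rfl
      _ = ∑ z : Fin n → ZMod m, ((B.filter (fun e => ψ e = z)).card : ℝ) := by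
        rw [hsum]; push_cast; rfl
      _ ≤ ∑ z : Fin n → ZMod m, (K.card * (100 * Real.exp (12 * H))) :=
        Finset.sum_le_sum fun z _ => hfib z
      _ = _ := by
        rw [Finset.sum_const, Finset.card_univ, hcardZ, nsmul_eq_mul]; push_cast; rfl
  by_contra hlt
  push Not at hlt
  set q : ℕ := (2 ^ i) ^ n with hq
  have hq0 : 0 < q := by positivity
  have hratio : 1 < (s.card : ℝ) / q := by
    rw [one_lt_div (by exact_mod_cast hq0)]; exact_mod_cast hlt
  obtain ⟨k, hk⟩ := pow_unbounded_of_one_lt (K.card * (100 * Real.exp (12 * H))) hratio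
  have := main k
  rw [div_pow, lt_div_iff₀ (by positivity)] at hk
  linarith

/-- the covering lemma -/
lemma cover {n : ℕ} (φ : Γ →+ (Fin n → ℤ)) (hφ : Function.Surjective φ)
    (hker : (φ.ker : Set Γ).Finite) {ρ R : ℝ} (hρ0 : 0 < ρ) (hρ : 4 * A ≤ ρ) {i : ℕ}
    (hi : 60 * R + 40 ≤ (4 : ℝ) ^ i) (s : Finset Γ) (hs : ∀ p ∈ s, h p ≤ R * ρ)
    (hne : s.Nonempty) :
    ∃ c ∈ s, ∃ t ⊆ s, (∀ p ∈ t, h (p - c) ≤ ρ) ∧ s.card ≤ (2 ^ i) ^ n * t.card := by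
  classical
  -- maximal separated subset
  let P : Finset Γ → Prop := fun t => ∀ p ∈ t, ∀ q ∈ t, p ≠ q → ρ < h (p - q)
  obtain ⟨t, ht, hmax⟩ := Finset.exists_max_image (s.powerset.filter P) Finset.card
    ⟨∅, by simp [P]⟩
  rw [Finset.mem_filter, Finset.mem_powerset] at ht
  have hcov : ∀ p ∈ s, ∃ c ∈ t, h (p - c) ≤ ρ := by
    intro p hp
    by_contra hcon
    push Not at hcon
    have hpt : p ∉ t := by
      intro hpt
      have := hcon p hpt
      rw [sub_self, D.zero] at this
      linarith
    have hmem : insert p t ∈ s.powerset.filter P := by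
      rw [Finset.mem_filter, Finset.mem_powerset]
      refine ⟨Finset.insert_subset hp ht.1, ?_⟩
      intro a ha b hb hab
      rw [Finset.mem_insert] at ha hb
      rcases ha with rfl | ha <;> rcases hb with rfl | hb
      · exact absurd rfl hab
      · exact hcon b hb
      · rw [← D.neg, neg_sub]; exact hcon a ha
      · exact ht.2 a ha b hb hab
    have := hmax _ hmem
    rw [Finset.card_insert_of_notMem hpt] at this
    omega
  have hcard := D.packing φ hφ hker hρ0 hρ hi t (fun p hp => hs p (ht.1 hp)) ht.2
  have htne : t.Nonempty := by
    obtain ⟨p, hp⟩ := hne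
    obtain ⟨c, hc, _⟩ := hcov p hp
    exact ⟨c, hc⟩
  obtain ⟨c, hc, hcmax⟩ := Finset.exists_max_image t
    (fun c => (s.filter (fun p => h (p - c) ≤ ρ)).card) htne
  refine ⟨c, ht.1 hc, s.filter (fun p => h (p - c) ≤ ρ), Finset.filter_subset _ _, ?_, ?_⟩
  · intro p hp; exact (Finset.mem_filter.1 hp).2
  · have h1 : s ⊆ t.biUnion (fun c => s.filter (fun p => h (p - c) ≤ ρ)) := by
      intro p hp
      obtain ⟨c, hc, hpc⟩ := hcov p hp
      rw [Finset.mem_biUnion]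
      exact ⟨c, hc, Finset.mem_filter.2 ⟨hp, hpc⟩⟩
    calc s.card ≤ _ := Finset.card_le_card h1
      _ ≤ t.card * (s.filter (fun p => h (p - c) ≤ ρ)).card :=
        Finset.card_biUnion_le_card_mul _ _ _ (fun c' hc' => hcmax c' hc')
      _ ≤ _ := Nat.mul_le_mul_right _ hcard

end HtD
end APRank

namespace APRank
set_option linter.unusedVariables false
set_option linter.unusedSectionVars false
set_option linter.unusedSimpArgs false

/-! ### The arithmetic progression arguments -/

section
variable {Γ : Type*} [AddCommGroup Γ] {h : Γ → ℝ} {A : ℝ}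

lemma HtD.dich (D : HtD h A) {n : ℕ} (φ : Γ →+ (Fin n → ℤ)) (hφ : Function.Surjective φ)
    (hker : (φ.ker : Set Γ).Finite) {L R C H : ℝ} {i : ℕ} (hL0 : 0 < L) (hL : 96 * A ≤ L)
    (hR : 1 ≤ R) (hC : 1 ≤ C) (hH : 0 ≤ H) (hi : 60 * (48 * R * C) + 40 ≤ (4 : ℝ) ^ i)
    (S : Finset ℤ) (P : ℤ → Γ) (hP : Set.InjOn P S)
    (hs : ∀ k ∈ S, h (P k) ≤ R * (H + L)) :
    (S.card : ℝ) ≤ (2 ^ i) ^ n * (100 * Real.exp (L / 2)) ∨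
    (C * L < H ∧ ∃ c ∈ S, ∃ t ⊆ S, (∀ k ∈ t, h (P k - P c) ≤ H / C) ∧
      (S.card : ℝ) ≤ (2 ^ i) ^ n * t.card) := by
  classical
  have hA := D.A0
  rcases S.eq_empty_or_nonempty with rfl | hne
  · left; simp; positivity
  -- transfer
  have key : ∀ ρ : ℝ, 0 < ρ → 4 * A ≤ ρ → R * (H + L) ≤ (48 * R * C) * ρ →
      ∃ c ∈ S, ∃ t ⊆ S, (∀ k ∈ t, h (P k - P c) ≤ ρ) ∧ (S.card : ℝ) ≤ (2 ^ i) ^ n * t.card := by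
    intro ρ h0 h4 hb
    obtain ⟨c, hc, t, ht, h1, h2⟩ := D.cover φ hφ hker h0 h4 hi (S.image P)
      (by
        intro p hp
        obtain ⟨k, hk, rfl⟩ := Finset.mem_image.1 hp
        exact (hs k hk).trans hb) (hne.image P)
    obtain ⟨c', hc', rfl⟩ := Finset.mem_image.1 hc
    refine ⟨c', hc', S.filter (fun k => P k ∈ t), Finset.filter_subset _ _, ?_, ?_⟩
    · intro k hk
      exact h1 _ (Finset.mem_filter.1 hk).2
    · rw [Finset.card_image_of_injOn hP] at h2
      have : t.card ≤ (S.filter (fun k => P k ∈ t)).card := by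
        have : t ⊆ (S.filter (fun k => P k ∈ t)).image P := by
          intro p hp
          obtain ⟨k, hk, rfl⟩ := Finset.mem_image.1 (ht hp)
          exact Finset.mem_image.2 ⟨k, Finset.mem_filter.2 ⟨hk, hp⟩, rfl⟩
        exact (Finset.card_le_card this).trans Finset.card_image_le
      have h3 : S.card ≤ (2 ^ i) ^ n * (S.filter (fun k => P k ∈ t)).card :=
        h2.trans (Nat.mul_le_mul_left _ this)
      exact_mod_cast h3
  by_cases hcase : C * L < H
  · right
    have hC0 : 0 < C := by linarith
    have hLH : L < H / C := by rw [lt_div_iff₀ hC0]; linarith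
    refine ⟨hcase, key (H / C) (by linarith) (by linarith) ?_⟩
    have e : 48 * R * C * (H / C) = 48 * R * H := by field_simp
    rw [e]
    have : L ≤ H := by nlinarith
    nlinarith
  · left
    push Not at hcase
    obtain ⟨c, hc, t, ht, h1, h2⟩ := key (L / 24) (by linarith) (by linarith) (by
      have : H + L ≤ 2 * (C * L) := by nlinarith
      nlinarith)
    refine h2.trans ?_
    gcongr
    have hcard : (t.image (fun k => P k - P c)).card = t.card := by
      apply Finset.card_image_of_injOn
      intro u hu v hv huv
      exact hP (ht hu) (ht hv) (sub_left_injective huv)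
    have := D.count (t.image (fun k => P k - P c)) (L / 24) (by linarith) (by
      intro p hp
      obtain ⟨k, hk, rfl⟩ := Finset.mem_image.1 hp
      exact h1 k hk)
    rw [hcard] at this
    have e : 12 * (L / 24) = L / 2 := by ring
    rwa [e] at this
end

section
variable {Γ : Type*} [AddCommGroup Γ] {a b j : ℚ} {Pt : Γ → ℚ → ℚ → Prop}
  (E : EC a b Pt) (G : GD a b j) {n : ℕ} (φ : Γ →+ (Fin n → ℤ)) (hφ : Function.Surjective φ)
    (hker : (φ.ker : Set Γ).Finite)

lemma absle {N : ℕ} {k l : ℤ} (hk : k ∈ Finset.Icc (1 : ℤ) N) (hl : l ∈ Finset.Icc (1 : ℤ) N) :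
    |((k - l : ℤ) : ℝ)| ≤ N := by
  rw [Finset.mem_Icc] at hk hl
  have : |k - l| ≤ N := by rw [abs_le]; constructor <;> omega
  exact_mod_cast this

include E G hφ hker

lemma propX {N : ℕ} (hN : 1 ≤ N) {S : Finset ℤ} (hS : S ⊆ Finset.Icc (1 : ℤ) N) {P : ℤ → Γ}
    {X Y : ℤ → ℚ} (hP : ∀ k ∈ S, Pt (P k) (X k) (Y k)) {α β : ℚ} (hβ : β ≠ 0)
    (hX : ∀ k ∈ S, X k = α + β * k) {L : ℝ} (hLe : L = Real.log N + (20000 * TT j + 1)) :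
    (S.card : ℝ) ≤ 102 * (2 ^ 8) ^ n * Real.exp (L / 2) := by
  classical
  have hN' : (1 : ℝ) ≤ N := by exact_mod_cast hN
  have hT := G.TT_nonneg
  have hlog : 0 ≤ Real.log N := Real.log_nonneg hN'
  have hL0 : 0 < L := by rw [hLe]; positivity
  have hexp : 1 ≤ Real.exp (L / 2) := Real.one_le_exp (by linarith)
  have hpow : (1 : ℝ) ≤ (2 ^ 8) ^ n := one_le_pow₀ (by norm_num)
  have hprod : (1 : ℝ) ≤ (2 ^ 8) ^ n * Real.exp (L / 2) := one_le_mul_of_one_le_of_one_le hpow hexp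
  have hinj : ∀ k ∈ S, ∀ l ∈ S, P k = P l → k = l := by
    intro k hk l hl e
    have h1 := hP k hk
    rw [e] at h1
    have := (E.uniq h1 (hP l hl)).1
    rw [hX k hk, hX l hl] at this
    have : (k : ℚ) = l := mul_left_cancel₀ hβ (add_left_cancel this)
    exact_mod_cast this
  rcases S.eq_empty_or_nonempty with rfl | hne
  · simp; positivity
  set h := ht a b Pt with hh
  obtain ⟨k0, hk0, hmin0⟩ := Finset.exists_min_image S (fun k => h (P k)) hne
  have hcard := Finset.card_erase_add_one hk0
  rcases (S.erase k0).eq_empty_or_nonempty with h0 | hne1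
  · rw [h0, Finset.card_empty] at hcard
    rw [← hcard]; push_cast; nlinarith
  obtain ⟨k1, hk1, hmin1⟩ := Finset.exists_min_image (S.erase k0) (fun k => h (P k)) hne1
  have hk1S := Finset.mem_of_mem_erase hk1
  have hsub : ∀ k ∈ S.erase k0, k ∈ S := fun k hk => Finset.mem_of_mem_erase hk
  have hD := E.htD G
  have hbd : ∀ k ∈ S.erase k0, h (P k) ≤ 2 * (h (P k1) + L) := by
    intro k hk
    have hkS := hsub k hk
    have := G.x_interp hN' (x := X k0) (x' := X k1) (xk := X k) (d := k1 - k0) (d' := k - k0)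
      (d'' := k - k1) (by
        rw [hX k hkS, hX k0 hk0, hX k1 hk1S]; push_cast; ring)
      (by have := Finset.ne_of_mem_erase hk1; omega)
      (absle (hS hk1S) (hS hk0)) (absle (hS hkS) (hS hk0)) (absle (hS hkS) (hS hk1S))
    rw [← E.ht_eq (hP _ hkS), ← E.ht_eq (hP _ hk0), ← E.ht_eq (hP _ hk1S)] at this
    have h2 := hmin0 k1 hk1S
    simp only [← hh] at this h2
    linarith
  have hmain : ((S.erase k0).card : ℝ) ≤ 101 * (2 ^ 8) ^ n * Real.exp (L / 2) := by
    rcases hD.dich φ hφ hker (L := L) (R := 2) (C := 8) (H := h (P k1)) (i := 8) hL0 (by linarith)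
      (by norm_num) (by norm_num) (hD.nonneg _) (by norm_num) (S.erase k0) P
      (fun k hk l hl e => hinj k (hsub k hk) l (hsub l hl) e) hbd with hc | ⟨hc, c, hcS, t, ht, h1, h2⟩
    · nlinarith
    · have htc : t.card ≤ 3 := by
        by_contra hcon
        push Not at hcon
        have h3 : 2 < (t.erase c).card + 1 := by
          have := Finset.pred_card_le_card_erase (s := t) (a := c); omega
        obtain ⟨u, hu, v, hv, huv⟩ := Finset.one_lt_card.1 (show 1 < (t.erase c).card by omega)
        have hu' := Finset.mem_of_mem_erase hu
        have hv' := Finset.mem_of_mem_erase hv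
        have huS := hsub _ (ht hu')
        have hvS := hsub _ (ht hv')
        have hcS' := hsub _ hcS
        have := E.x_rel G hN' (n1 := c) (n2 := u) (n3 := v) (hP c hcS') (hP u huS) (hP v hvS)
          (fun e => Finset.ne_of_mem_erase hu (hinj _ huS _ hcS' e))
          (fun e => Finset.ne_of_mem_erase hv (hinj _ hvS _ hcS' e))
          (by rw [hX c hcS', hX u huS, hX v hvS]; unfold dt; ring) huv
          (absle (hS huS) (hS hvS)) (absle (hS hvS) (hS hcS')) (absle (hS hcS') (hS huS))
        have b1 := h1 u hu'
        have b2 := h1 v hv'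
        have b3 := hmin1 c hcS
        simp only [← hh] at this b3
        linarith
      have : (t.card : ℝ) ≤ 3 := by exact_mod_cast htc
      calc _ ≤ ((2 : ℝ) ^ 8) ^ n * t.card := h2
        _ ≤ (2 ^ 8) ^ n * 3 := by gcongr
        _ ≤ _ := by nlinarith
  rw [← hcard]
  push_cast
  linarith

lemma propXc {N : ℕ} (hN : 1 ≤ N) {S : Finset ℤ} (hS : S ⊆ Finset.Icc (1 : ℤ) N) {P : ℤ → Γ}
    {X Y : ℤ → ℚ} (hP : ∀ k ∈ S, Pt (P k) (X k) (Y k)) (hinj : Set.InjOn P S)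
    (hcol : ∀ k ∈ S, ∀ l ∈ S, ∀ m ∈ S, dt (X k) (X l) (X m) (k : ℚ) l m = 0)
    {L : ℝ} (hLe : L = Real.log N + (20000 * TT j + 1)) :
    (S.card : ℝ) ≤ 102 * (2 ^ 8) ^ n * Real.exp (L / 2) := by
  classical
  have hN' : (1 : ℝ) ≤ N := by exact_mod_cast hN
  have hT := G.TT_nonneg
  have hlog : 0 ≤ Real.log N := Real.log_nonneg hN'
  have hL0 : 0 < L := by rw [hLe]; positivity
  have hexp : 1 ≤ Real.exp (L / 2) := Real.one_le_exp (by linarith)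
  have hpow : (1 : ℝ) ≤ (2 ^ 8) ^ n := one_le_pow₀ (by norm_num)
  have hprod : (1 : ℝ) ≤ (2 ^ 8) ^ n * Real.exp (L / 2) := one_le_mul_of_one_le_of_one_le hpow hexp
  by_cases hc : S.card ≤ 1
  · have : (S.card : ℝ) ≤ 1 := by exact_mod_cast hc
    linarith
  push Not at hc
  obtain ⟨u, hu, v, hv, huv⟩ := Finset.one_lt_card.1 hc
  have huv' : (u : ℚ) - v ≠ 0 := sub_ne_zero.2 (by exact_mod_cast huv)
  by_cases hβ : X u = X v
  · have hconst : ∀ k ∈ S, X k = X u := by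
      intro k hk
      have := hcol k hk u hu v hv
      unfold dt at this
      rw [← hβ] at this
      have h1 : (X k - X u) * ((u : ℚ) - v) = 0 := by linear_combination this
      rcases mul_eq_zero.1 h1 with h | h
      · linarith
      · exact absurd h huv'
    have hsub : S.image P ⊆ {P u, -P u} := by
      intro p hp
      obtain ⟨k, hk, rfl⟩ := Finset.mem_image.1 hp
      have h1 := hP k hk
      rw [hconst k hk] at h1
      rcases E.eq_or_neg h1 (hP u hu) with e | e <;> simp [e]
    have h2 := Finset.card_le_card hsub
    rw [Finset.card_image_of_injOn hinj] at h2
    have h3 := h2.trans Finset.card_le_two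
    have : (S.card : ℝ) ≤ 2 := by exact_mod_cast h3
    linarith
  · refine propX E G φ hφ hker hN hS hP (α := X u - (X u - X v) / (u - v) * u)
      (β := (X u - X v) / (u - v)) (div_ne_zero (sub_ne_zero.2 hβ) huv') ?_ hLe
    intro k hk
    have := hcol k hk u hu v hv
    unfold dt at this
    field_simp
    linear_combination this

lemma propY {N : ℕ} (hN : 1 ≤ N) {P : ℤ → Γ}
    {X Y : ℤ → ℚ} (hP : ∀ k ∈ Finset.Icc (1 : ℤ) N, Pt (P k) (X k) (Y k)) {l μ ν : ℚ} (hν : ν ≠ 0)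
    (hY : ∀ k ∈ Finset.Icc (1 : ℤ) N, Y k = l * X k + μ + ν * k) {L : ℝ}
    (hLe : L = Real.log N + (20000 * TT j + 1)) :
    (N : ℝ) ≤ 205 * (2 ^ 18) ^ n * Real.exp (L / 2) := by
  classical
  have hN' : (1 : ℝ) ≤ N := by exact_mod_cast hN
  have hT := G.TT_nonneg
  have hlog : 0 ≤ Real.log N := Real.log_nonneg hN'
  have hL0 : 0 < L := by rw [hLe]; positivity
  have hexp : 1 ≤ Real.exp (L / 2) := Real.one_le_exp (by linarith)
  have hpow : (1 : ℝ) ≤ (2 ^ 8) ^ n := one_le_pow₀ (by norm_num)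
  have hpow' : (1 : ℝ) ≤ (2 ^ 10) ^ n := one_le_pow₀ (by norm_num)
  have hpp : ((2 : ℝ) ^ 18) ^ n = (2 ^ 10) ^ n * (2 ^ 8) ^ n := by rw [← mul_pow]; norm_num
  have hprod : (1 : ℝ) ≤ (2 ^ 8) ^ n * Real.exp (L / 2) := one_le_mul_of_one_le_of_one_le hpow hexp
  have hprod2 : ((2 : ℝ) ^ 8) ^ n * Real.exp (L / 2) ≤ (2 ^ 18) ^ n * Real.exp (L / 2) := by
    gcongr <;> norm_num
  set S := Finset.Icc (1 : ℤ) N with hSdef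
  have hScard : (S.card : ℝ) = N := by simp [hSdef]
  have hinj : ∀ k ∈ S, ∀ m ∈ S, P k = P m → k = m := by
    intro k hk m hm e
    have h1 := hP k hk
    rw [e] at h1
    obtain ⟨e1, e2⟩ := E.uniq h1 (hP m hm)
    rw [hY k hk, hY m hm, e1] at e2
    have : (k : ℚ) = m := mul_left_cancel₀ hν (add_left_cancel e2)
    exact_mod_cast this
  set h := ht a b Pt with hh
  have hD := E.htD G
  rw [← hScard]
  by_cases hcol : ∀ k ∈ S, ∀ l ∈ S, ∀ m ∈ S, dt (X k) (X l) (X m) (k : ℚ) l m = 0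
  · have := propXc E G φ hφ hker hN subset_rfl hP hinj hcol hLe
    nlinarith
  push Not at hcol
  -- minimal height of a noncollinear triple
  set TS : Finset (ℤ × ℤ × ℤ) := (S ×ˢ S ×ˢ S).filter
    (fun t => dt (X t.1) (X t.2.1) (X t.2.2) (t.1 : ℚ) t.2.1 t.2.2 ≠ 0) with hTS
  have hTSne : TS.Nonempty := by
    obtain ⟨k, hk, l, hl, m, hm, hne⟩ := hcol
    exact ⟨(k, l, m), by simp [hTS, hk, hl, hm, hne]⟩
  obtain ⟨⟨k2, k3, k4⟩, hmem, hmin⟩ := Finset.exists_min_image TS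
    (fun t => max (h (P t.1)) (max (h (P t.2.1)) (h (P t.2.2)))) hTSne
  simp only [hTS, Finset.mem_filter, Finset.mem_product] at hmem
  obtain ⟨⟨hk2, hk3, hk4⟩, hne⟩ := hmem
  set H := max (h (P k2)) (max (h (P k3)) (h (P k4))) with hH
  have hH0 : 0 ≤ H := le_trans (hD.nonneg _) (le_max_left _ _)
  have hH2 : h (P k2) ≤ H := le_max_left _ _
  have hH3 : h (P k3) ≤ H := (le_max_left _ _).trans (le_max_right _ _)
  have hH4 : h (P k4) ≤ H := (le_max_right _ _).trans (le_max_right _ _)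
  have hsplit := Finset.card_filter_add_card_filter_not (s := S) (fun k => h (P k) < H)
  set S1 := S.filter (fun k => h (P k) < H) with hS1
  set S2 := S.filter (fun k => ¬ h (P k) < H) with hS2
  have hS1s : ∀ k ∈ S1, k ∈ S := fun k hk => (Finset.mem_filter.1 hk).1
  have hS2s : ∀ k ∈ S2, k ∈ S := fun k hk => (Finset.mem_filter.1 hk).1
  have hb1 : (S1.card : ℝ) ≤ 102 * (2 ^ 8) ^ n * Real.exp (L / 2) := by
    refine propXc E G φ hφ hker hN (S := S1) (fun k hk => hS1s k hk) (fun k hk => hP k (hS1s k hk))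
      (fun k hk m hm e => hinj k (hS1s k hk) m (hS1s m hm) e) ?_ hLe
    intro k hk l hl m hm
    by_contra hcon
    have := hmin (k, l, m) (by simp [hTS, hS1s k hk, hS1s l hl, hS1s m hm, hcon])
    have e1 := (Finset.mem_filter.1 hk).2
    have e2 := (Finset.mem_filter.1 hl).2
    have e3 := (Finset.mem_filter.1 hm).2
    exact absurd this (not_le.2 (max_lt e1 (max_lt e2 e3)))
  have hrel : ∀ k ∈ S, ∀ m ∈ S, Y m = Y k + l * (X m - X k) + ν * ((m - k : ℤ) : ℚ) := by
    intro k hk m hm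
    rw [hY k hk, hY m hm]; push_cast; ring
  have hbd : ∀ k ∈ S2, h (P k) ≤ 9 * (H + L) := by
    intro k hk
    have hkS := hS2s k hk
    have := G.y_relation hN' (E.curve (hP k hkS)) (E.curve (hP k2 hk2)) (E.curve (hP k3 hk3))
      (E.curve (hP k4 hk4)) (hrel k hkS k2 hk2) (hrel k hkS k3 hk3) (hrel k hkS k4 hk4)
      (absle hk2 hkS) (absle hk3 hkS) (absle hk4 hkS) (by
        intro e; apply hne; rw [← e]; unfold dt; push_cast; ring)
    rw [← E.ht_eq (hP _ hkS), ← E.ht_eq (hP _ hk2), ← E.ht_eq (hP _ hk3), ← E.ht_eq (hP _ hk4)] at this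
    simp only [← hh] at this
    linarith
  have hb2 : (S2.card : ℝ) ≤ 103 * (2 ^ 18) ^ n * Real.exp (L / 2) := by
    rcases hD.dich φ hφ hker (L := L) (R := 9) (C := 12) (H := H) (i := 10) hL0 (by linarith)
      (by norm_num) (by norm_num) hH0 (by norm_num) S2 P
      (fun k hk l hl e => hinj k (hS2s k hk) l (hS2s l hl) e) hbd with hc | ⟨hc, c, hcS2, t, ht, h1, h2⟩
    · refine hc.trans ?_
      have : ((2 : ℝ) ^ 10) ^ n ≤ (2 ^ 18) ^ n := by gcongr <;> norm_num
      have h3 := mul_le_mul_of_nonneg_right this (Real.exp_pos (L / 2)).le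
      have h4 : 0 ≤ ((2 : ℝ) ^ 18) ^ n * Real.exp (L / 2) := by positivity
      linarith
    · have hcS := hS2s c hcS2
      have htS : ∀ k ∈ t, k ∈ S := fun k hk => hS2s k (ht hk)
      have hteS : ∀ k ∈ t.erase c, k ∈ S := fun k hk => htS k (Finset.mem_of_mem_erase hk)
      have hne0 : ∀ k ∈ t.erase c, P k - P c ≠ 0 := by
        intro k hk e
        exact Finset.ne_of_mem_erase hk (hinj k (hteS k hk) c hcS (sub_eq_zero.1 e))
      have hex : ∀ k : ℤ, ∃ q : ℚ × ℚ, k ∈ t.erase c → Pt (P k - P c) q.1 q.2 := by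
        intro k
        by_cases hk : k ∈ t.erase c
        · obtain ⟨q, r, hq⟩ := E.ex _ (hne0 k hk)
          exact ⟨(q, r), fun _ => hq⟩
        · exact ⟨(0, 0), fun h => absurd h hk⟩
      choose q hq using hex
      have hte : ((t.erase c).card : ℝ) ≤ 102 * (2 ^ 8) ^ n * Real.exp (L / 2) := by
        refine propXc E G φ hφ hker hN (S := t.erase c) (fun k hk => hteS k hk)
          (P := fun k => P k - P c) (X := fun k => (q k).1) (Y := fun k => (q k).2)
          (fun k hk => hq k hk)
          (fun k hk m hm e => hinj k (hteS k hk) m (hteS m hm) (sub_left_injective e)) ?_ hLe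
        intro k hk l' hl m hm
        by_contra hcon
        have := E.y_rel G hN' (hP c hcS) (hP k (hteS k hk)) (hP l' (hteS l' hl)) (hP m (hteS m hm))
          (hq k hk) (hq l' hl) (hq m hm) (hrel c hcS k (hteS k hk)) (hrel c hcS l' (hteS l' hl))
          (hrel c hcS m (hteS m hm)) (absle (hteS k hk) hcS) (absle (hteS l' hl) hcS)
          (absle (hteS m hm) hcS) (by
            intro e; apply hcon; rw [← e]; unfold dt; push_cast; ring)
        have b1 := h1 k (Finset.mem_of_mem_erase hk)
        have b2 := h1 l' (Finset.mem_of_mem_erase hl)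
        have b3 := h1 m (Finset.mem_of_mem_erase hm)
        have b4 : H ≤ h (P c) := not_lt.1 (Finset.mem_filter.1 hcS2).2
        simp only [← hh] at this
        linarith
      have htc : (t.card : ℝ) ≤ (t.erase c).card + 1 := by
        have := Finset.pred_card_le_card_erase (s := t) (a := c)
        have : t.card ≤ (t.erase c).card + 1 := by omega
        exact_mod_cast this
      calc _ ≤ ((2 : ℝ) ^ 10) ^ n * t.card := h2
        _ ≤ (2 ^ 10) ^ n * (103 * ((2 ^ 8) ^ n * Real.exp (L / 2))) := by gcongr; linarith
        _ = _ := by rw [hpp]; ring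
  have : (S.card : ℝ) = S1.card + S2.card := by exact_mod_cast hsplit.symm
  rw [this]
  nlinarith

/-- final bound -/
lemma final_bound {N : ℕ} (hN : 1 ≤ N)
    (hb : (N : ℝ) ≤ 205 * (2 ^ 18) ^ n * Real.exp ((Real.log N + (20000 * TT j + 1)) / 2)) :
    Real.log N ≤ (20000 * TT j + 41) * (1 + n) := by
  have hN' : (0 : ℝ) < N := by exact_mod_cast hN
  have hT := G.TT_nonneg
  have h1 := Real.log_le_log hN' hb
  rw [Real.log_mul (by positivity) (by positivity), Real.log_mul (by positivity) (by positivity),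
    Real.log_exp, Real.log_pow, Real.log_pow] at h1
  have h2 : Real.log 2 ≤ 1 := by have := Real.log_two_lt_d9; linarith
  have h3 : Real.log 205 ≤ 8 := by
    have : Real.log 205 ≤ Real.log (2 ^ 8) := Real.log_le_log (by norm_num) (by norm_num)
    rw [Real.log_pow] at this
    push_cast at this
    linarith
  push_cast at h1
  have h4 : (n : ℝ) * (18 * Real.log 2) ≤ n * 18 := by
    have : (0 : ℝ) ≤ n := by positivity
    nlinarith
  have : (0 : ℝ) ≤ n := by positivity
  nlinarith
end
end APRank

namespace APRank
set_option linter.unusedVariables false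
set_option linter.unusedSectionVars false
set_option linter.unusedSimpArgs false

/-! ### Finiteness of Selmer groups -/

/-- finite colouring of the set `A` modulo the subgroup `B` -/
def FC {G : Type*} [CommGroup G] (A : Set G) (B : Subgroup G) : Prop :=
  ∃ (m : ℕ) (c : G → Fin m), ∀ z ∈ A, ∀ w ∈ A, c z = c w → z / w ∈ B

lemma FC.mk {G : Type*} [CommGroup G] {A : Set G} {B : Subgroup G} {C : Type*} [Finite C]
    (c : G → C) (h : ∀ z ∈ A, ∀ w ∈ A, c z = c w → z / w ∈ B) : FC A B := by
  refine ⟨Nat.card C, fun z => Finite.equivFin C (c z), fun z hz w hw e => h z hz w hw ?_⟩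
  exact (Finite.equivFin C).injective e

lemma FC.comp {G : Type*} [CommGroup G] {A : Set G} {B C : Subgroup G} (h1 : FC A B)
    (h2 : FC (B : Set G) C) : FC A C := by
  classical
  obtain ⟨m, c, hc⟩ := h1
  obtain ⟨m', c', hc'⟩ := h2
  let r : Fin m → G := fun k => if h : ∃ z ∈ A, c z = k then h.choose else 1
  have hr : ∀ z ∈ A, r (c z) ∈ A ∧ c (r (c z)) = c z := by
    intro z hz
    have h : ∃ w ∈ A, c w = c z := ⟨z, hz, rfl⟩
    have : r (c z) = h.choose := dif_pos h
    rw [this]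
    exact h.choose_spec
  apply FC.mk (C := Fin m × Fin m') (fun z => (c z, c' (z / r (c z))))
  intro z hz w hw e
  rw [Prod.mk.injEq] at e
  obtain ⟨e1, e2⟩ := e
  obtain ⟨a1, a2⟩ := hr z hz
  obtain ⟨b1, b2⟩ := hr w hw
  have := hc' _ (hc z hz _ a1 a2.symm) _ (hc w hw _ b1 b2.symm) e2
  rw [← e1] at this
  simpa using this

section
open IsDedekindDomain FractionalIdeal nonZeroDivisors
variable (R : Type*) [CommRing R] [IsDedekindDomain R] (K : Type*) [Field K] [Algebra R K]
  [IsFractionRing R K]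

/-- order of vanishing -/
noncomputable def cnt (v : HeightOneSpectrum R) (z : K) : ℤ := count K v (spanSingleton R⁰ z)

variable {R K}
lemma cnt_mul (v : HeightOneSpectrum R) {z w : K} (hz : z ≠ 0) (hw : w ≠ 0) :
    cnt R K v (z * w) = cnt R K v z + cnt R K v w := by
  unfold cnt
  rw [← spanSingleton_mul_spanSingleton, count_mul] <;> simpa [spanSingleton_eq_zero_iff]

lemma cnt_one (v : HeightOneSpectrum R) : cnt R K v 1 = 0 := by
  unfold cnt
  rw [spanSingleton_one, count_one]

lemma cnt_inv (v : HeightOneSpectrum R) {z : K} (hz : z ≠ 0) :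
    cnt R K v z⁻¹ = - cnt R K v z := by
  have := cnt_mul v hz (inv_ne_zero hz)
  rw [mul_inv_cancel₀ hz, cnt_one] at this
  linarith

lemma val_eq (v : HeightOneSpectrum R) {z : K} (hz : z ≠ 0) :
    v.valuation K z = WithZero.exp (-(cnt R K v z)) := by
  classical
  obtain ⟨r, s, hs, rfl⟩ := IsFractionRing.div_surjective (A := R) z
  have hs0 : s ≠ 0 := nonZeroDivisors.ne_zero hs
  have hr0 : r ≠ 0 := by rintro rfl; simp at hz
  have hr : (algebraMap R K) r ≠ 0 := by simpa using hr0
  have hs' : (algebraMap R K) s ≠ 0 := by simpa using hs0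
  have key : ∀ t : R, t ≠ 0 → v.valuation K (algebraMap R K t) = WithZero.exp (-(cnt R K v (algebraMap R K t))) := by
    intro t ht
    rw [HeightOneSpectrum.valuation_of_algebraMap, HeightOneSpectrum.intValuation_if_neg v ht]
    unfold cnt
    rw [← coeIdeal_span_singleton, count_coe]
    simpa using ht
  rw [map_div₀, key r hr0, key s hs0, div_eq_mul_inv, div_eq_mul_inv, cnt_mul v hr (inv_ne_zero hs'),
    cnt_inv v hs', ← WithZero.exp_neg, ← WithZero.exp_add]
  congr 1
  ring

lemma cnt_finite (z : K) : {v : HeightOneSpectrum R | cnt R K v z ≠ 0}.Finite :=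
  finite_factors (spanSingleton R⁰ z)

variable (R K)
/-- everywhere even elements -/
def evenSub : Subgroup Kˣ where
  carrier := {z | ∀ v, Even (cnt R K v z)}
  mul_mem' := by
    intro z w hz hw v
    rw [Units.val_mul, cnt_mul v z.ne_zero w.ne_zero]
    exact (hz v).add (hw v)
  one_mem' := by intro v; rw [Units.val_one, cnt_one]; exact Even.zero
  inv_mem' := by
    intro z hz v
    rw [Units.val_inv_eq_inv_val, cnt_inv v z.ne_zero]
    exact (hz v).neg

/-- units times squares -/
def unitSub : Subgroup Kˣ :=
  (Units.map (algebraMap R K).toMonoidHom).range ⊔ (powMonoidHom (α := Kˣ) 2).range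

lemma fc1 {S : Set (HeightOneSpectrum R)} (hS : S.Finite) :
    FC {z : Kˣ | ∀ v ∉ S, Even (cnt R K v z)} (evenSub R K) := by
  have := hS.to_subtype
  apply FC.mk (C := S → ZMod 2) (fun (z : Kˣ) (v : S) => (cnt R K v (z : K) : ZMod 2))
  intro z hz w hw e v
  rw [div_eq_mul_inv, Units.val_mul, Units.val_inv_eq_inv_val,
    cnt_mul v z.ne_zero (inv_ne_zero w.ne_zero), cnt_inv v w.ne_zero, ← sub_eq_add_neg]
  by_cases hv : v ∈ S
  · have := congrFun e ⟨v, hv⟩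
    simp only at this
    rw [ZMod.intCast_eq_intCast_iff] at this
    have := this.symm.dvd
    exact even_iff_two_dvd.2 (by exact_mod_cast this)
  · exact (hz v hv).sub (hw v hv)

variable {R K} in
lemma even_sq {z : Kˣ} (hz : z ∈ evenSub R K) :
    ∃ I : (FractionalIdeal R⁰ K)ˣ, I ^ 2 = toPrincipalIdeal R K z := by
  have hz0 : spanSingleton R⁰ (z : K) ≠ 0 := by simp [spanSingleton_eq_zero_iff]
  have key : (∏ᶠ v : HeightOneSpectrum R, (v.asIdeal : FractionalIdeal R⁰ K) ^ (cnt R K v z / 2)) ^ 2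
      = spanSingleton R⁰ (z : K) := by
    rw [finprod_pow]
    · rw [← finprod_heightOneSpectrum_factorization' K hz0]
      apply finprod_congr
      intro v
      have h2 := Int.ediv_two_mul_two_of_even (hz v)
      rw [← zpow_natCast, ← zpow_mul]
      congr 1
    · apply (cnt_finite (z : K)).subset
      intro v hv h0
      apply hv
      simp [h0]
  have hne : (∏ᶠ v : HeightOneSpectrum R, (v.asIdeal : FractionalIdeal R⁰ K) ^ (cnt R K v z / 2)) ≠ 0 := by
    intro h0
    rw [h0] at key
    apply hz0
    rw [← key]; simp
  refine ⟨Units.mk0 _ hne, ?_⟩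
  ext1
  rw [Units.val_pow_eq_pow_val, Units.val_mk0, key, coe_toPrincipalIdeal]

variable {R K} in
lemma ker_principal {w : Kˣ} (hw : toPrincipalIdeal R K w = 1) :
    w ∈ (Units.map (algebraMap R K).toMonoidHom).range := by
  have key : ∀ w : Kˣ, toPrincipalIdeal R K w = 1 → ∃ r : R, algebraMap R K r = w := by
    intro w hw
    have h1 : spanSingleton R⁰ (w : K) = 1 := by
      rw [← coe_toPrincipalIdeal, hw]; rfl
    have h2 : (w : K) ∈ spanSingleton R⁰ (w : K) := mem_spanSingleton_self _ _
    rw [h1, mem_one_iff] at h2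
    exact h2
  obtain ⟨r, hr⟩ := key w hw
  obtain ⟨s, hs⟩ := key w⁻¹ (by rw [map_inv, hw, inv_one])
  have hrs : r * s = 1 := by
    apply IsFractionRing.injective R K
    rw [map_mul, hr, hs, map_one, Units.mul_inv]
  exact ⟨⟨r, s, hrs, by rw [mul_comm, hrs]⟩, by ext1; simpa using hr⟩

lemma fc2 [Finite (ClassGroup R)] : FC (evenSub R K : Set Kˣ) (unitSub R K) := by
  classical
  have : Finite ((FractionalIdeal R⁰ K)ˣ ⧸ (toPrincipalIdeal R K).range) :=
    Finite.of_equiv _ (ClassGroup.equiv K).toEquiv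
  have : ∀ z : Kˣ, ∃ I : (FractionalIdeal R⁰ K)ˣ, z ∈ evenSub R K → I ^ 2 = toPrincipalIdeal R K z := by
    intro z
    by_cases hz : z ∈ evenSub R K
    · obtain ⟨I, hI⟩ := even_sq hz
      exact ⟨I, fun _ => hI⟩
    · exact ⟨1, fun h => absurd h hz⟩
  choose I hI using this
  apply FC.mk (fun z => (QuotientGroup.mk (I z) : (FractionalIdeal R⁰ K)ˣ ⧸ (toPrincipalIdeal R K).range))
  intro z hz w hw e
  rw [eq_comm, QuotientGroup.eq] at e
  obtain ⟨t, ht⟩ := e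
  have h1 : toPrincipalIdeal R K (z / w / t ^ 2) = 1 := by
    rw [map_div, map_div, map_pow, ← hI z hz, ← hI w hw, ht]
    rw [← div_eq_inv_mul, div_pow, div_self']
  have h2 := ker_principal h1
  have : z / w = z / w / t ^ 2 * t ^ 2 := by simp
  rw [this]
  exact Subgroup.mul_mem_sup h2 ⟨t, rfl⟩

lemma fc3 [Group.FG Rˣ] : FC (unitSub R K : Set Kˣ) (powMonoidHom (α := Kˣ) 2).range := by
  classical
  have : Finite (Rˣ ⧸ (powMonoidHom (α := Rˣ) 2).range) := by
    apply CommGroup.finite_of_fg_isMulTorsion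
    intro g
    rw [isOfFinOrder_iff_pow_eq_one]
    refine ⟨2, by norm_num, ?_⟩
    induction g using QuotientGroup.induction_on with
    | H z =>
      rw [← QuotientGroup.mk_pow, QuotientGroup.eq_one_iff]
      exact ⟨z, rfl⟩
  have : ∀ z : Kˣ, ∃ u : Rˣ, z ∈ unitSub R K → ∃ t : Kˣ, z = Units.map (algebraMap R K).toMonoidHom u * t ^ 2 := by
    intro z
    by_cases hz : z ∈ unitSub R K
    · obtain ⟨_, ⟨u, rfl⟩, _, ⟨t, rfl⟩, rfl⟩ := Subgroup.mem_sup.1 hz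
      exact ⟨u, fun _ => ⟨t, rfl⟩⟩
    · exact ⟨1, fun h => absurd h hz⟩
  choose u hu using this
  apply FC.mk (fun z => (QuotientGroup.mk (u z) : Rˣ ⧸ (powMonoidHom (α := Rˣ) 2).range))
  intro z hz w hw e
  rw [eq_comm, QuotientGroup.eq] at e
  obtain ⟨s, hs⟩ := e
  obtain ⟨t, ht⟩ := hu z hz
  obtain ⟨t', ht'⟩ := hu w hw
  refine ⟨Units.map (algebraMap R K).toMonoidHom s * t / t', ?_⟩
  have hs' : u z = u w * s ^ 2 := by
    have : s ^ 2 = (u w)⁻¹ * u z := hs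
    rw [this]; simp
  rw [ht, ht', hs', map_mul, map_pow]
  simp only [powMonoidHom_apply]
  rw [div_pow, mul_pow, mul_assoc, mul_div_mul_left_eq_div]
end

lemma selmer (K : Type*) [Field K] [NumberField K]
    {S : Set (IsDedekindDomain.HeightOneSpectrum (NumberField.RingOfIntegers K))} (hS : S.Finite) :
    FC {z : Kˣ | ∀ v ∉ S, Even (cnt (NumberField.RingOfIntegers K) K v z)}
      (powMonoidHom (α := Kˣ) 2).range := by
  have : Group.FG (NumberField.RingOfIntegers K)ˣ := Group.fg_iff_monoid_fg.2 inferInstance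
  exact ((fc1 _ _ hS).comp (fc2 _ _)).comp (fc3 _ _)
end APRank

namespace APRank
set_option linter.unusedVariables false
set_option linter.unusedSectionVars false
set_option linter.unusedSimpArgs false

/-! ### Weak Mordell-Weil -/

section
open IsDedekindDomain
variable {R : Type*} [CommRing R] [IsDedekindDomain R] {K : Type*} [Field K] [Algebra R K]
  [IsFractionRing R K]

lemma even_of_sq (v : HeightOneSpectrum R) {z : K} (hz : z ≠ 0)
    (h : ∃ w, v.valuation K z = w ^ 2) : Even (cnt R K v z) := by
  obtain ⟨w, hw⟩ := h
  rw [val_eq v hz] at hw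
  have hw0 : w ≠ 0 := by
    rintro rfl
    simp at hw
  rw [← WithZero.exp_log hw0, ← WithZero.exp_nsmul, WithZero.exp_inj] at hw
  rw [even_iff_two_dvd]
  exact ⟨-WithZero.log w, by simp at hw; linarith⟩

lemma val_one_finite {z : K} (hz : z ≠ 0) :
    {v : HeightOneSpectrum R | v.valuation K z ≠ 1}.Finite := by
  apply (cnt_finite (R := R) z).subset
  intro v hv h0
  apply hv
  rw [val_eq v hz, h0]; simp

lemma val_le_finite (z : K) :
    {v : HeightOneSpectrum R | ¬ v.valuation K z ≤ 1}.Finite := by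
  by_cases hz : z = 0
  · subst hz; simp
  apply (val_one_finite hz).subset
  intro v hv h0
  exact hv h0.le

lemma val_parity (v : HeightOneSpectrum R) {a θ x y : K} (hθ : v.valuation K θ ≤ 1)
    (ha : v.valuation K a ≤ 1) (hd : v.valuation K (3 * θ ^ 2 + a) = 1)
    (hy : y ≠ 0) (h : y ^ 2 = (x - θ) * (x ^ 2 + (θ * x + (θ ^ 2 + a)))) :
    ∃ w, v.valuation K (x - θ) = w ^ 2 := by
  have hv := congrArg (v.valuation K) h
  rw [map_mul, map_pow] at hv
  have hc : v.valuation K (θ ^ 2 + a) ≤ 1 := by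
    refine (Valuation.map_add _ _ _).trans (max_le ?_ ha)
    rw [map_pow]; exact pow_le_one₀ zero_le hθ
  by_cases hx : v.valuation K x ≤ 1
  · have hxt : v.valuation K (x - θ) ≤ 1 := (Valuation.map_sub _ _ _).trans (max_le hx hθ)
    rcases eq_or_lt_of_le hxt with h1 | h1
    · exact ⟨1, by rw [h1, one_pow]⟩
    · have e : x ^ 2 + (θ * x + (θ ^ 2 + a)) = (x - θ) * (x + 2 * θ) + (3 * θ ^ 2 + a) := by ring
      have h2 : v.valuation K (x ^ 2 + (θ * x + (θ ^ 2 + a))) = 1 := by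
        rw [e, Valuation.map_add_eq_of_lt_right, hd]
        rw [hd, map_mul]
        refine mul_lt_one_of_lt_of_le h1 ?_
        refine (Valuation.map_add _ _ _).trans (max_le hx ?_)
        rw [two_mul]
        exact (Valuation.map_add _ _ _).trans (max_le hθ hθ)
      rw [h2, mul_one] at hv
      exact ⟨_, hv.symm⟩
  · push Not at hx
    have h1 : v.valuation K (x - θ) = v.valuation K x :=
      Valuation.map_sub_eq_of_lt_left _ (lt_of_le_of_lt hθ hx)
    have hx0 : v.valuation K x ≠ 0 := (lt_trans zero_lt_one hx).ne'
    have h2 : v.valuation K (x ^ 2 + (θ * x + (θ ^ 2 + a))) = v.valuation K x ^ 2 := by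
      rw [Valuation.map_add_eq_of_lt_left, map_pow]
      rw [map_pow, sq (v.valuation K x)]
      refine lt_of_le_of_lt (Valuation.map_add _ _ _) (max_lt ?_ ?_)
      · rw [map_mul]
        calc _ ≤ 1 * v.valuation K x := by gcongr
          _ < v.valuation K x * v.valuation K x := by
            exact mul_lt_mul_of_pos_right hx (lt_trans zero_lt_one hx)
      · exact lt_of_le_of_lt hc (one_lt_mul'' hx hx)
    rw [h1, h2] at hv
    refine ⟨v.valuation K y / v.valuation K x, ?_⟩
    rw [h1, div_pow, hv]
    field_simp
end

/-- colouring over one number field -/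
lemma col_field (K : Type*) [Field K] [NumberField K] {a b θ : K} (hθ : θ ^ 3 + a * θ + b = 0)
    (hd : 4 * a ^ 3 + 27 * b ^ 2 ≠ 0) : ∃ (m : ℕ) (c : K → Fin m), ∀ x y x' y' : K,
      y ^ 2 = x ^ 3 + a * x + b → y' ^ 2 = x' ^ 3 + a * x' + b → y ≠ 0 → y' ≠ 0 → c x = c x' →
      ∃ s : K, s ≠ 0 ∧ x - θ = s ^ 2 * (x' - θ) := by
  classical
  have hδ : 3 * θ ^ 2 + a ≠ 0 := by
    intro h0
    apply hd
    linear_combination (-18 * a * θ + 27 * b) * hθ + (6 * a * θ ^ 2 - 9 * b * θ + 4 * a ^ 2) * h0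
  obtain ⟨m, c, hc⟩ := selmer K (((val_le_finite θ).union (val_le_finite a)).union (val_one_finite hδ))
  refine ⟨m, fun x => if h : x - θ ≠ 0 then c (Units.mk0 (x - θ) h) else c 1, ?_⟩
  have fac : ∀ x y : K, y ^ 2 = x ^ 3 + a * x + b →
      y ^ 2 = (x - θ) * (x ^ 2 + (θ * x + (θ ^ 2 + a))) := by
    intro x y h
    linear_combination h + hθ
  have hne : ∀ x y : K, y ^ 2 = x ^ 3 + a * x + b → y ≠ 0 → x - θ ≠ 0 := by
    intro x y h hy h0
    have := fac x y h
    rw [h0, zero_mul] at this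
    exact hy (pow_eq_zero_iff (two_ne_zero) |>.1 this)
  have hmem : ∀ x y : K, ∀ h : y ^ 2 = x ^ 3 + a * x + b, ∀ hy : y ≠ 0, ∀ v ∉ ((({v | ¬ v.valuation K θ ≤ 1} ∪ {v | ¬ v.valuation K a ≤ 1}) ∪ {v | v.valuation K (3 * θ ^ 2 + a) ≠ 1}) : Set (IsDedekindDomain.HeightOneSpectrum (NumberField.RingOfIntegers K))),
      Even (cnt (NumberField.RingOfIntegers K) K v (x - θ)) := by
    intro x y h hy v hv
    simp only [Set.mem_union, Set.mem_ofPred_eq, not_or, not_not] at hv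
    exact even_of_sq v (hne x y h hy) (val_parity v hv.1.1 hv.1.2 hv.2 hy (fac x y h))
  intro x y x' y' h h' hy hy' e
  beta_reduce at e
  rw [dif_pos (hne x y h hy), dif_pos (hne x' y' h' hy')] at e
  obtain ⟨s, hs⟩ := hc (Units.mk0 _ (hne x y h hy)) (by exact hmem x y h hy) (Units.mk0 _ (hne x' y' h' hy')) (by exact hmem x' y' h' hy') e
  refine ⟨s, s.ne_zero, ?_⟩
  have := congrArg Units.val hs
  simp only [powMonoidHom_apply, Units.val_pow_eq_pow_val, Units.val_div_eq_div_val, Units.val_mk0] at this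
  rw [this, div_mul_cancel₀ _ (hne x' y' h' hy')]

section
open Polynomial

lemma sq_mod {F : Type*} [Field F] (c f : F[X]) (hf : Squarefree f)
    (h : ∀ p, Irreducible p → p ∣ f → ∃ g, p ∣ c - g ^ 2) : ∃ g, f ∣ c - g ^ 2 := by
  induction f using UniqueFactorizationMonoid.induction_on_prime with
  | h₁ => simp at hf
  | h₂ x hx => exact ⟨0, hx.dvd⟩
  | h₃ f p hf0 hp ih =>
    obtain ⟨g, hg⟩ := ih (hf.squarefree_of_dvd (dvd_mul_left _ _))
      (fun q hq hqf => h q hq (hqf.mul_left p))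
    obtain ⟨g', hg'⟩ := h p hp.irreducible (dvd_mul_right _ _)
    have hcop : IsCoprime p f := by
      rw [Irreducible.coprime_iff_not_dvd hp.irreducible]
      rintro ⟨q, rfl⟩
      exact hp.not_isUnit (hf p ⟨q, by ring⟩)
    obtain ⟨u, v, huv⟩ := hcop
    have hcop : IsCoprime p f := ⟨u, v, huv⟩
    refine ⟨g * (u * p) + g' * (v * f), hcop.mul_dvd ?_ ?_⟩
    · have : c - (g * (u * p) + g' * (v * f)) ^ 2 = (c - g' ^ 2) +
        p * (u * (g' - g) * (g' + (g * (u * p) + g' * (v * f)))) := by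
        linear_combination (-g' * (g' + (g * (u * p) + g' * (v * f)))) * huv
      rw [this]
      exact dvd_add hg' (dvd_mul_right _ _)
    · have : c - (g * (u * p) + g' * (v * f)) ^ 2 = (c - g ^ 2) +
        f * (v * (g - g') * (g + (g * (u * p) + g' * (v * f)))) := by
        linear_combination (-g * (g + (g * (u * p) + g' * (v * f)))) * huv
      rw [this]
      exact dvd_add hg (dvd_mul_right _ _)

/-- the cubic -/
noncomputable def cub (a b : ℚ) : ℚ[X] := X ^ 3 + C a * X + C b

lemma cub_monic (a b : ℚ) : (cub a b).Monic := by unfold cub; monicity!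
lemma cub_natDegree (a b : ℚ) : (cub a b).natDegree = 3 := by unfold cub; compute_degree!

lemma cub_sqf {a b : ℚ} (hd : dsc a b ≠ 0) : Squarefree (cub a b) := by
  apply Separable.squarefree
  refine ⟨C (dsc a b)⁻¹ * (-18 * C a * X + 27 * C b), C (dsc a b)⁻¹ * (6 * C a * X ^ 2 - 9 * C b * X + 4 * C a ^ 2), ?_⟩
  have h1 : derivative (cub a b) = 3 * X ^ 2 + C a := by
    have t : (C (2 : ℚ) : ℚ[X]) = 2 := rfl
    unfold cub; simp [t]; norm_num
  have h2 : C (dsc a b)⁻¹ * C (dsc a b) = 1 := by rw [← C_mul, inv_mul_cancel₀ hd, C_1]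
  have h3 : C (dsc a b) = 4 * C a ^ 3 + 27 * C b ^ 2 := by
    have t : (C (4 : ℚ) : ℚ[X]) = 4 := rfl
    have t' : (C (27 : ℚ) : ℚ[X]) = 27 := rfl
    unfold dsc; simp [t, t']
  rw [h1]
  unfold cub
  rw [h3] at h2
  linear_combination h2

lemma quad_zero {p q r : ℚ} (h0 : C p + C q * X + C r * X ^ 2 = (0 : ℚ[X])) : p = 0 ∧ q = 0 ∧ r = 0 := by
  have c0 := congrArg (fun q => coeff q 0) h0
  have c1 := congrArg (fun q => coeff q 1) h0
  have c2 := congrArg (fun q => coeff q 2) h0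
  simp [coeff_X, coeff_C, coeff_X_pow] at c0 c1 c2
  exact ⟨c0, c1, c2⟩

lemma halving_coeffs {a b x : ℚ} {g : ℚ[X]} (hg : cub a b ∣ (C x - X) - g ^ 2) :
    ∃ u v w : ℚ, x = u ^ 2 - 2 * v * w * b ∧ -1 = 2 * u * v - 2 * v * w * a - w ^ 2 * b ∧
      0 = v ^ 2 + 2 * u * w - w ^ 2 * a := by
  have hm := cub_monic a b
  set r := g %ₘ cub a b with hr
  have hdeg : r.natDegree < 3 := by
    have := natDegree_modByMonic_lt g hm (by intro h; have := cub_natDegree a b; rw [h] at this; simp at this)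
    rwa [cub_natDegree] at this
  have hr2 : cub a b ∣ (C x - X) - r ^ 2 := by
    have h1 : g = r + cub a b * (g /ₘ cub a b) := (modByMonic_add_div g (cub a b)).symm
    have h2 : (C x - X) - r ^ 2 = ((C x - X) - g ^ 2) + cub a b * ((g /ₘ cub a b) * (g + r)) := by
      linear_combination (g + r) * h1
    rw [h2]
    exact dvd_add hg (dvd_mul_right _ _)
  refine ⟨r.coeff 0, r.coeff 1, r.coeff 2, ?_⟩
  set u := r.coeff 0
  set v := r.coeff 1
  set w := r.coeff 2
  have hre : r = C u + C v * X + C w * X ^ 2 := by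
    rw [as_sum_range_C_mul_X_pow' r hdeg]
    simp [Finset.sum_range_succ, u, v, w]
  have hz : (C x - X) - r ^ 2 + cub a b * (C (w ^ 2) * X + C (2 * v * w)) =
      C (x - (u ^ 2 - 2 * v * w * b)) + C (-1 - (2 * u * v - 2 * v * w * a - w ^ 2 * b)) * X +
        C (0 - (v ^ 2 + 2 * u * w - w ^ 2 * a)) * X ^ 2 := by
    rw [hre]
    unfold cub
    simp only [C_sub, C_mul, C_add, C_pow, C_neg, C_1, C_0]
    have : (C (2 : ℚ) : ℚ[X]) = 2 := rfl
    rw [this]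
    ring
  have hdvd : cub a b ∣ C (x - (u ^ 2 - 2 * v * w * b)) + C (-1 - (2 * u * v - 2 * v * w * a - w ^ 2 * b)) * X +
        C (0 - (v ^ 2 + 2 * u * w - w ^ 2 * a)) * X ^ 2 := by
    rw [← hz]; exact dvd_add hr2 (dvd_mul_right _ _)
  have h0 := eq_zero_of_dvd_of_natDegree_lt hdvd (by
    rw [cub_natDegree]
    refine lt_of_le_of_lt (b := 2) ?_ (by norm_num)
    compute_degree)
  obtain ⟨c0, c1, c2⟩ := quad_zero h0
  refine ⟨by linarith, by linarith, by linarith⟩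

variable {Γ : Type*} [AddCommGroup Γ] {a b : ℚ} {Pt : Γ → ℚ → ℚ → Prop} (E : EC a b Pt)
include E

lemma EC.halving {P : Γ} {x y : ℚ} (h : Pt P x y) {g : ℚ[X]} (hg : cub a b ∣ (C x - X) - g ^ 2) :
    ∃ Q, P = Q + Q := by
  obtain ⟨u, v, w, e1, e2, e3⟩ := halving_coeffs hg
  have hw : w ≠ 0 := by
    rintro rfl
    have : v = 0 := by
      have : v ^ 2 = 0 := by linarith
      exact pow_eq_zero_iff (two_ne_zero) |>.1 this
    subst this
    norm_num at e2
  obtain ⟨r, rfl⟩ : ∃ r, v = r * w := ⟨v / w, by field_simp⟩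
  have hu : u = w * (a - r ^ 2) / 2 := by
    have : w * (u - w * (a - r ^ 2) / 2) = 0 := by linear_combination (-1 / 2 : ℚ) * e3
    rcases mul_eq_zero.1 this with h0 | h0
    · exact absurd h0 hw
    · linarith
  subst hu
  have hw1 : w ^ 2 * (r ^ 3 + a * r + b) = 1 := by linear_combination e2
  obtain ⟨Q, hQ⟩ := E.surj (x := r) (y := 1 / w) (by
    field_simp
    linear_combination -hw1)
  have h2 := E.dbl hQ (by positivity)
  have hx : ((3 * r ^ 2 + a) / (2 * (1 / w))) ^ 2 - 2 * r = x := by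
    rw [e1]
    field_simp
    linear_combination (8 * r) * hw1
  rw [hx] at h2
  rcases E.eq_or_neg h h2 with e | e
  · exact ⟨Q, e⟩
  · exact ⟨-Q, by rw [e]; abel⟩
end
end APRank

namespace APRank
set_option linter.unusedVariables false
set_option linter.unusedSectionVars false
set_option linter.unusedSimpArgs false

section
open Polynomial

lemma col_poly {a b : ℚ} (hd : dsc a b ≠ 0) (p : ℚ[X]) (hp : Irreducible p) (hdv : p ∣ cub a b) :
    ∃ (m : ℕ) (c : ℚ → Fin m), ∀ x y x' y' x3 : ℚ,
      y ^ 2 = x ^ 3 + a * x + b → y' ^ 2 = x' ^ 3 + a * x' + b → y ≠ 0 → y' ≠ 0 → c x = c x' →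
      x ≠ x' → x3 = ((y - y') / (x - x')) ^ 2 - x - x' → ∃ g, p ∣ (C x3 - X) - g ^ 2 := by
  have : Fact (Irreducible p) := ⟨hp⟩
  let K := AdjoinRoot p
  let f : ℚ →+* K := AdjoinRoot.of p
  have : CharZero K := charZero_of_injective_ringHom f.injective
  have : FiniteDimensional ℚ K := by
    convert (AdjoinRoot.powerBasis hp.ne_zero).finite
  have : NumberField K := ⟨⟩
  let θ : K := AdjoinRoot.root p
  have hθ : θ ^ 3 + f a * θ + f b = 0 := by
    have h1 : AdjoinRoot.mk p (cub a b) = 0 := AdjoinRoot.mk_eq_zero.2 hdv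
    unfold cub at h1
    simpa [θ, f] using h1
  have hd' : 4 * (f a) ^ 3 + 27 * (f b) ^ 2 ≠ 0 := by
    have h1 : f (dsc a b) ≠ 0 := by simpa using hd
    unfold dsc at h1
    simpa using h1
  obtain ⟨m, c, hc⟩ := col_field K hθ hd'
  refine ⟨m, fun x => c (f x), ?_⟩
  intro x y x' y' x3 h h' hy hy' e hx h3
  have cur : ∀ x y : ℚ, y ^ 2 = x ^ 3 + a * x + b → (f y) ^ 2 = (f x) ^ 3 + f a * f x + f b := by
    intro x y h
    have := congrArg f h
    simpa using this
  obtain ⟨s, hs, hs'⟩ := hc (f x) (f y) (f x') (f y') (cur _ _ h) (cur _ _ h') (by simpa using hy)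
    (by simpa using hy') e
  have hx0 : x - x' ≠ 0 := sub_ne_zero.2 hx
  set l := (y - y') / (x - x') with hl
  have hl' : l * (x - x') = y - y' := by rw [hl]; field_simp
  have hxt : f x' - θ ≠ 0 := by
    intro h0
    have h1 := cur _ _ h'
    have : f y' ^ 2 = 0 := by
      rw [h1]
      have : f x' = θ := sub_eq_zero.1 h0
      rw [this]; exact hθ
    have h2 : f y' = 0 := by simpa using this
    exact hy' (by simpa using h2)
  have key : (f x - θ) * (f x' - θ) * (f x3 - θ) = (f l * (θ - f x) + f y) ^ 2 := by
    have e1 : f l * (f x - f x') = f y - f y' := by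
      have := congrArg f hl'
      simpa using this
    have e3 : f x3 = f l ^ 2 - f x - f x' := by
      have := congrArg f h3
      simpa using this
    have c1 := cur _ _ h
    have c2 := cur _ _ h'
    have hne : f x - f x' ≠ 0 := by
      have : f (x - x') ≠ 0 := (map_ne_zero f).2 hx0
      rw [← map_sub]; exact this
    have hsum : f l * (f y + f y') = f x ^ 2 + f x * f x' + f x' ^ 2 + f a := by
      apply mul_left_cancel₀ hne
      linear_combination (f y + f y') * e1 + c1 - c2
    rw [e3]
    linear_combination -hθ + (θ - f x) * (f l * e1 - hsum) - c1
  obtain ⟨g, hg⟩ := AdjoinRoot.mk_surjective ((f l * (θ - f x) + f y) / (s * (f x' - θ)))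
  refine ⟨g, ?_⟩
  rw [← AdjoinRoot.mk_eq_zero]
  rw [map_sub, map_sub, map_pow, hg, AdjoinRoot.mk_C, AdjoinRoot.mk_X, div_pow, ← key, hs']
  change f x3 - θ - _ = 0
  field_simp
  ring

lemma fac_set {a b : ℚ} (hd : dsc a b ≠ 0) : ∃ S : Finset ℚ[X], (∀ p ∈ S, Irreducible p ∧ p ∣ cub a b) ∧
    ∀ p, Irreducible p → p ∣ cub a b → ∃ q ∈ S, p ∣ q := by
  classical
  refine ⟨(UniqueFactorizationMonoid.normalizedFactors (cub a b)).toFinset, ?_, ?_⟩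
  · intro p hp
    rw [Multiset.mem_toFinset] at hp
    exact ⟨UniqueFactorizationMonoid.irreducible_of_normalized_factor _ hp,
      UniqueFactorizationMonoid.dvd_of_mem_normalizedFactors hp⟩
  · intro p hp hpd
    obtain ⟨q, hq, hpq⟩ := UniqueFactorizationMonoid.exists_mem_normalizedFactors_of_dvd (cub_monic a b).ne_zero hp hpd
    exact ⟨q, Multiset.mem_toFinset.2 hq, hpq.dvd⟩

variable {Γ : Type*} [AddCommGroup Γ] {a b : ℚ} {Pt : Γ → ℚ → ℚ → Prop} (E : EC a b Pt)
include E

lemma EC.weakMW (hd : dsc a b ≠ 0) : ∃ (D : Type) (_ : Finite D) (c : Γ → D),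
    ∀ P Q, c P = c Q → ∃ R, P - Q = R + R := by
  classical
  obtain ⟨S, h1, h2⟩ := fac_set hd
  choose m c hc using fun p : S => col_poly hd p.1 (h1 p.1 p.2).1 (h1 p.1 p.2).2
  have hx : ∀ P : Γ, ∃ x : ℚ, P ≠ 0 → ∃ y, Pt P x y := by
    intro P
    by_cases h : P = 0
    · exact ⟨0, fun h' => absurd h h'⟩
    · obtain ⟨x, y, hy⟩ := E.ex P h
      exact ⟨x, fun _ => ⟨y, hy⟩⟩
  choose ξ hξ using hx
  let cr : ℚ → Option (cub a b).roots.toFinset := fun x => if h : x ∈ (cub a b).roots.toFinset then some ⟨x, h⟩ else none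
  have hroot : ∀ x, x ∈ (cub a b).roots.toFinset ↔ x ^ 3 + a * x + b = 0 := by
    intro x
    rw [Multiset.mem_toFinset, mem_roots (cub_monic a b).ne_zero]
    simp [cub]
  refine ⟨Option (Option (cub a b).roots.toFinset × (∀ p, Fin (m p))), inferInstance,
    fun P => if P = 0 then none else some (cr (ξ P), fun p => c p (ξ P)), ?_⟩
  intro P Q e
  beta_reduce at e
  by_cases hP : P = 0
  · by_cases hQ : Q = 0
    · exact ⟨0, by rw [hP, hQ]; simp⟩
    · rw [if_pos hP, if_neg hQ] at e; simp at e
  by_cases hQ : Q = 0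
  · rw [if_neg hP, if_pos hQ] at e; simp at e
  rw [if_neg hP, if_neg hQ, Option.some_inj, Prod.mk.injEq] at e
  obtain ⟨e1, e2⟩ := e
  obtain ⟨y, hy⟩ := hξ P hP
  obtain ⟨y', hy'⟩ := hξ Q hQ
  have same : ξ P = ξ Q → ∃ R, P - Q = R + R := by
    intro h
    rw [h] at hy
    rcases E.eq_or_neg hy hy' with h' | h'
    · exact ⟨0, by rw [h']; simp⟩
    · exact ⟨P, by rw [h']; abel⟩
  by_cases hpp : ξ P = ξ Q
  · exact same hpp
  have c1 := E.curve hy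
  have c2 := E.curve hy'
  have hn1 : ξ P ∉ (cub a b).roots.toFinset := by
    intro h
    by_cases h' : ξ Q ∈ (cub a b).roots.toFinset
    · simp only [cr, dif_pos h, dif_pos h'] at e1
      apply hpp
      simpa using e1
    · simp only [cr, dif_pos h, dif_neg h'] at e1; cases e1
  have hn2 : ξ Q ∉ (cub a b).roots.toFinset := by
    intro h
    simp only [cr, dif_pos h, dif_neg hn1] at e1; cases e1
  rw [hroot] at hn1 hn2
  have hy0 : y ≠ 0 := by rintro rfl; apply hn1; rw [← c1]; ring
  have hy0' : y' ≠ 0 := by rintro rfl; apply hn2; rw [← c2]; ring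
  have hadd := E.add hy hy' hpp
  set x3 := ((y - y') / (ξ P - ξ Q)) ^ 2 - ξ P - ξ Q with hx3
  obtain ⟨g, hg⟩ := sq_mod (C x3 - X) (cub a b) (cub_sqf hd) (by
    intro p hp hpd
    obtain ⟨q, hq, hpq⟩ := h2 p hp hpd
    obtain ⟨g, hg⟩ := hc ⟨q, hq⟩ (ξ P) y (ξ Q) y' x3 c1 c2 hy0 hy0' (congrFun e2 _) hpp hx3
    exact ⟨g, hpq.trans hg⟩)
  obtain ⟨R, hR⟩ := E.halving hadd hg
  exact ⟨R - Q, by rw [sub_add_sub_comm, ← hR]; abel⟩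

lemma EC.fg {j : ℚ} (G : GD a b j) : AddGroup.FG Γ := by
  have H := E.htD G
  obtain ⟨D, hD, c, hc⟩ := E.weakMW G.d0
  have : Northcott (ht a b Pt) := by
    refine ⟨fun t => ?_⟩
    by_contra hinf
    obtain ⟨s, hs, hcard⟩ := (show Set.Infinite _ from hinf).exists_subset_card_eq (⌊100 * Real.exp (12 * max t 0)⌋₊ + 1)
    have h1 := H.count s (t := max t 0) (le_max_right _ _) (fun P hP => (hs hP).trans (le_max_left _ _))
    have h2 := Nat.lt_floor_add_one (100 * Real.exp (12 * max t 0))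
    rw [hcard] at h1
    push_cast at h1
    linarith
  have hfi : (nsmulAddMonoidHom (α := Γ) 2).range.FiniteIndex := by
    have : Finite (Γ ⧸ (nsmulAddMonoidHom (α := Γ) 2).range) := by
      apply Finite.of_injective (fun q : Γ ⧸ (nsmulAddMonoidHom (α := Γ) 2).range => c q.out)
      intro q q' h
      obtain ⟨R, hR⟩ := hc _ _ h
      rw [← QuotientAddGroup.out_eq' q, ← QuotientAddGroup.out_eq' q', eq_comm, QuotientAddGroup.eq]
      refine ⟨R, ?_⟩
      simp only [nsmulAddMonoidHom_apply, two_nsmul]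
      rw [← hR]; abel
    exact AddSubgroup.finiteIndex_of_finite_quotient
  refine AddCommGroup.fg_of_descent (n := 2) (h := ht a b Pt) (a := 3) (b := 4) (c₀ := 200 * TT j)
    (c := fun g => 3 * ht a b Pt g + 200 * TT j) (by norm_num) (by norm_num) hfi ?_ ?_
  · intro g x
    have := H.sub_le (g + x) g
    rw [add_sub_cancel_left] at this
    linarith
  · intro x
    have := H.le_dbl x
    rw [two_nsmul]
    linarith
end
end APRank

namespace APRank
set_option linter.unusedVariables false
set_option linter.unusedSectionVars false
set_option linter.unusedSimpArgs false

/-! ### Passage to the short Weierstrass form -/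

section
open WeierstrassCurve

/-- coordinates on the short Weierstrass model -/
def WPt (W : WeierstrassCurve ℚ) (P : W.toAffine.Point) (X Y : ℚ) : Prop :=
  ∃ (x y : ℚ) (h : W.toAffine.Nonsingular x y), P = Affine.Point.some x y h ∧
    X = x + W.b₂ / 12 ∧ Y = y + (W.a₁ * x + W.a₃) / 2

lemma wpt_some (W : WeierstrassCurve ℚ) {x y : ℚ} (h : W.toAffine.Nonsingular x y) :
    WPt W (Affine.Point.some x y h) (x + W.b₂ / 12) (y + (W.a₁ * x + W.a₃) / 2) :=
  ⟨x, y, h, rfl, rfl, rfl⟩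

lemma wpt_some' (W : WeierstrassCurve ℚ) {x y X Y : ℚ} (h : W.toAffine.Nonsingular x y)
    (hX : X = x + W.b₂ / 12) (hY : Y = y + (W.a₁ * x + W.a₃) / 2) :
    WPt W (Affine.Point.some x y h) X Y := ⟨x, y, h, rfl, hX, hY⟩

lemma wec_zero (W : WeierstrassCurve ℚ) [W.IsElliptic] : ∀ x y, ¬ WPt W 0 x y := by
  rintro x y ⟨x', y', h, e, -⟩
  exact Affine.Point.some_ne_zero h e.symm

lemma wec_ex (W : WeierstrassCurve ℚ) [W.IsElliptic] : ∀ P, P ≠ 0 → ∃ x y, WPt W P x y := by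
  rintro (_ | ⟨x, y, h⟩) hP
  · exact absurd rfl hP
  · exact ⟨_, _, wpt_some W h⟩

lemma wec_uniq (W : WeierstrassCurve ℚ) [W.IsElliptic] : ∀ {P x y x' y'}, WPt W P x y → WPt W P x' y' → x = x' ∧ y = y' := by
  rintro P x y x' y' ⟨u, v, h, rfl, rfl, rfl⟩ ⟨u', v', h', e, rfl, rfl⟩
  rw [Affine.Point.some.injEq] at e
  obtain ⟨rfl, rfl⟩ := e
  exact ⟨rfl, rfl⟩

lemma wec_inj (W : WeierstrassCurve ℚ) [W.IsElliptic] : ∀ {P Q x y}, WPt W P x y → WPt W Q x y → P = Q := by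
  rintro P Q x y ⟨u, v, h, rfl, rfl, rfl⟩ ⟨u', v', h', rfl, e1, e2⟩
  have hu : u = u' := by linarith
  subst hu
  have hv : v = v' := by linarith
  subst hv
  rfl

lemma wec_curve (W : WeierstrassCurve ℚ) [W.IsElliptic] : ∀ {P x y}, WPt W P x y → y ^ 2 = x ^ 3 + -W.c₄ / 48 * x + -W.c₆ / 864 := by
  rintro P x y ⟨u, v, h, rfl, rfl, rfl⟩
  have := (Affine.equation_iff _ _).1 h.1
  simp only [WeierstrassCurve.c₄, WeierstrassCurve.c₆, WeierstrassCurve.b₂, WeierstrassCurve.b₄,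
    WeierstrassCurve.b₆]
  linear_combination this

lemma wec_surj (W : WeierstrassCurve ℚ) [W.IsElliptic] : ∀ {x y}, y ^ 2 = x ^ 3 + -W.c₄ / 48 * x + -W.c₆ / 864 → ∃ P, WPt W P x y := by
  intro x y h
  have hns : W.toAffine.Nonsingular (x - W.b₂ / 12) (y - (W.a₁ * (x - W.b₂ / 12) + W.a₃) / 2) := by
    rw [← Affine.equation_iff_nonsingular, Affine.equation_iff]
    simp only [WeierstrassCurve.c₄, WeierstrassCurve.c₆, WeierstrassCurve.b₂, WeierstrassCurve.b₄,
      WeierstrassCurve.b₆] at h ⊢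
    linear_combination h
  exact ⟨_, wpt_some' W hns (by ring) (by ring)⟩

lemma wec_neg (W : WeierstrassCurve ℚ) [W.IsElliptic] : ∀ {P x y}, WPt W P x y → WPt W (-P) x (-y) := by
  rintro P x y ⟨u, v, h, rfl, rfl, rfl⟩
  rw [Affine.Point.neg_some]
  refine wpt_some' W _ rfl ?_
  simp only [Affine.negY]
  ring

lemma wec_add (W : WeierstrassCurve ℚ) [W.IsElliptic] : ∀ {P Q x y x' y'}, WPt W P x y → WPt W Q x' y' → x ≠ x' →
    WPt W (P + Q) (((y - y') / (x - x')) ^ 2 - x - x')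
      (-(((y - y') / (x - x')) * ((((y - y') / (x - x')) ^ 2 - x - x') - x) + y)) := by
  rintro P Q x y x' y' ⟨u, v, h, rfl, rfl, rfl⟩ ⟨u', v', h', rfl, rfl, rfl⟩ hx
  have hu : u ≠ u' := by rintro rfl; exact hx rfl
  have hu0 : u - u' ≠ 0 := sub_ne_zero.2 hu
  rw [Affine.Point.add_of_X_ne hu]
  have hs := Affine.slope_of_X_ne (W := W.toAffine) (y₁ := v) (y₂ := v') hu
  have hsl : (v + (W.a₁ * u + W.a₃) / 2 - (v' + (W.a₁ * u' + W.a₃) / 2)) / (u + W.b₂ / 12 - (u' + W.b₂ / 12)) = W.toAffine.slope u u' v v' + W.a₁ / 2 := by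
    rw [hs, add_sub_add_right_eq_sub]
    field_simp
    ring
  rw [hsl]
  refine wpt_some' W _ ?_ ?_
  · generalize W.toAffine.slope u u' v v' = l
    simp only [Affine.addX, WeierstrassCurve.b₂]
    ring
  · generalize W.toAffine.slope u u' v v' = l
    simp only [Affine.addX, Affine.addY, Affine.negY, Affine.negAddY, WeierstrassCurve.b₂]
    ring

lemma wec_dbl (W : WeierstrassCurve ℚ) [W.IsElliptic] : ∀ {P x y}, WPt W P x y → y ≠ 0 →
    WPt W (P + P) (((3 * x ^ 2 + -W.c₄ / 48) / (2 * y)) ^ 2 - 2 * x)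
      (-(((3 * x ^ 2 + -W.c₄ / 48) / (2 * y)) * ((((3 * x ^ 2 + -W.c₄ / 48) / (2 * y)) ^ 2 - 2 * x) - x) + y)) := by
  rintro P x y ⟨u, v, h, rfl, rfl, rfl⟩ hy
  have hv : v ≠ W.toAffine.negY u v := by
    intro e
    apply hy
    simp only [Affine.negY] at e
    linarith
  rw [Affine.Point.add_self_of_Y_ne hv]
  have hs := Affine.slope_of_Y_ne (W := W.toAffine) (x₁ := u) (x₂ := u) (y₁ := v) (y₂ := v) rfl hv
  have hsl : (3 * (u + W.b₂ / 12) ^ 2 + -W.c₄ / 48) / (2 * (v + (W.a₁ * u + W.a₃) / 2)) = W.toAffine.slope u u v v + W.a₁ / 2 := by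
    have e0 : v - W.toAffine.negY u v = 2 * (v + (W.a₁ * u + W.a₃) / 2) := by
      simp only [Affine.negY]; ring
    rw [hs, e0, div_add' _ _ _ (by simpa using hy)]
    congr 1
    simp only [WeierstrassCurve.c₄, WeierstrassCurve.b₂, WeierstrassCurve.b₄]
    ring
  rw [hsl]
  refine wpt_some' W _ ?_ ?_
  · generalize W.toAffine.slope u u v v = l
    simp only [Affine.addX, WeierstrassCurve.b₂]
    ring
  · generalize W.toAffine.slope u u v v = l
    simp only [Affine.addX, Affine.addY, Affine.negY, Affine.negAddY, WeierstrassCurve.b₂]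
    ring

lemma WEC (W : WeierstrassCurve ℚ) [W.IsElliptic] :
    EC (-W.c₄ / 48) (-W.c₆ / 864) (WPt W) where
  zero := wec_zero W
  ex := wec_ex W
  uniq := wec_uniq W
  inj := wec_inj W
  curve := wec_curve W
  surj := wec_surj W
  neg := wec_neg W
  add := wec_add W
  dbl := wec_dbl W

lemma WGD (W : WeierstrassCurve ℚ) [W.IsElliptic] : GD (-W.c₄ / 48) (-W.c₆ / 864) W.j := by
  have h1 : dsc (-W.c₄ / 48) (-W.c₆ / 864) = -W.Δ / 16 := by
    have := W.c_relation
    unfold dsc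
    linear_combination (1 / 27648 : ℚ) * this
  have h2 : W.Δ ≠ 0 := W.coe_Δ' ▸ W.Δ'.ne_zero
  refine ⟨?_, ?_⟩
  · rw [h1]
    simpa using h2
  · rw [h1]
    have h3 : W.j * W.Δ = W.c₄ ^ 3 := by
      rw [WeierstrassCurve.j, ← W.coe_Δ', mul_right_comm, Units.inv_mul, one_mul]
    linear_combination (-1 / 16 : ℚ) * h3

end

section
open scoped TensorProduct

lemma exists_phi (Γ : Type*) [AddCommGroup Γ] [AddGroup.FG Γ] :
    ∃ (n : ℕ) (φ : Γ →+ (Fin n → ℤ)), Function.Surjective φ ∧ (φ.ker : Set Γ).Finite ∧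
      n ≤ Module.finrank ℚ (ℚ ⊗[ℤ] Γ) := by
  classical
  obtain ⟨n, ι, hι, p, hp, e, ⟨f⟩⟩ := AddCommGroup.equiv_free_prod_directSum_zmod Γ
  let g : ((Fin n →₀ ℤ) × (DirectSum ι fun i => ZMod (p i ^ e i))) →+ (Fin n → ℤ) :=
    (Finsupp.linearEquivFunOnFinite ℤ ℤ (Fin n)).toLinearMap.toAddMonoidHom.comp (AddMonoidHom.fst _ _)
  let φ : Γ →+ (Fin n → ℤ) := g.comp f.toAddMonoidHom
  have hs : Function.Surjective φ := by
    intro w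
    refine ⟨f.symm ((Finsupp.linearEquivFunOnFinite ℤ ℤ (Fin n)).symm w, 0), ?_⟩
    simp [φ, g]
  refine ⟨n, φ, hs, ?_, ?_⟩
  · have hfin : Finite (DirectSum ι fun i => ZMod (p i ^ e i)) := by
      have : ∀ i, NeZero (p i ^ e i) := fun i => ⟨pow_ne_zero _ (hp i).ne_zero⟩
      have : ∀ i, Finite (ZMod (p i ^ e i)) := fun i => inferInstance
      exact Finite.of_injective (fun q : (DirectSum ι fun i => ZMod (p i ^ e i)) => fun i => q i) DFunLike.coe_injective
    apply Set.Finite.of_injOn (f := fun P : Γ => (f P).2) (t := Set.univ) (fun _ _ => Set.mem_univ _) ?_ Set.finite_univ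
    intro P hP Q hQ h
    apply f.injective
    have h1 : ∀ P ∈ (φ.ker : Set Γ), (f P).1 = 0 := by
      intro P hP
      have : φ P = 0 := hP
      simpa [φ, g] using this
    exact Prod.ext ((h1 P hP).trans (h1 Q hQ).symm) h
  · have : Module.Finite ℤ Γ := Module.Finite.iff_addGroup_fg.2 inferInstance
    have h1 := LinearMap.finrank_le_finrank_of_surjective (f := LinearMap.baseChange ℚ φ.toIntLinearMap)
      (LinearMap.lTensor_surjective ℚ (g := φ.toIntLinearMap) hs)
    rw [Module.finrank_baseChange] at h1
    simpa using h1
end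

lemma main_bound (W : WeierstrassCurve ℚ) [W.IsElliptic] {N : ℕ} (hN : 1 ≤ N) {x y : Fin N → ℚ}
    (hns : ∀ i, W.toAffine.Nonsingular (x i) (y i))
    (hAP : (∃ a b : ℚ, b ≠ 0 ∧ ∀ i : Fin N, x i = a + (((i : ℕ) + 1 : ℕ) : ℚ) * b) ∨
      (∃ a b : ℚ, b ≠ 0 ∧ ∀ i : Fin N, y i = a + (((i : ℕ) + 1 : ℕ) : ℚ) * b)) :
    Real.log N ≤ (20000 * TT W.j + 41) *
      (1 + (Module.finrank ℚ (TensorProduct ℤ ℚ W.toAffine.Point) : ℝ)) := by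
  have E := WEC W
  have G := WGD W
  have hT := G.TT_nonneg
  have hfg := E.fg G
  obtain ⟨n, φ, hφ, hker, hn⟩ := exists_phi W.toAffine.Point
  have hn' : (n : ℝ) ≤ (Module.finrank ℚ (TensorProduct ℤ ℚ W.toAffine.Point) : ℝ) := by exact_mod_cast hn
  suffices hb : (N : ℝ) ≤ 205 * (2 ^ 18) ^ n * Real.exp ((Real.log N + (20000 * TT W.j + 1)) / 2) by
    refine (final_bound E G φ hφ hker hN hb).trans ?_
    gcongr
  -- indexing
  let ix : ℤ → Fin N := fun k => ⟨min (k.toNat - 1) (N - 1), by omega⟩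
  have hix : ∀ k ∈ Finset.Icc (1 : ℤ) N, ((((ix k : ℕ) + 1 : ℕ)) : ℚ) = k := by
    intro k hk
    rw [Finset.mem_Icc] at hk
    have : (((ix k : ℕ) + 1 : ℕ) : ℤ) = k := by
      simp only [ix]; omega
    exact_mod_cast this
  let P : ℤ → W.toAffine.Point := fun k => WeierstrassCurve.Affine.Point.some _ _ (hns (ix k))
  let X : ℤ → ℚ := fun k => x (ix k) + W.b₂ / 12
  let Y : ℤ → ℚ := fun k => y (ix k) + (W.a₁ * x (ix k) + W.a₃) / 2
  have hP : ∀ k ∈ Finset.Icc (1 : ℤ) N, WPt W (P k) (X k) (Y k) := fun k _ => wpt_some W _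
  rcases hAP with ⟨u, v, hv, h⟩ | ⟨u, v, hv, h⟩
  · have h1 := propX E G φ hφ hker hN (Finset.Subset.refl _) hP (α := u + W.b₂ / 12) hv (by
      intro k hk
      simp only [X]
      rw [h, hix k hk]; ring) rfl
    rw [Int.card_Icc] at h1
    have e : (((N : ℤ) + 1 - 1).toNat : ℝ) = N := by simp
    rw [e] at h1
    refine h1.trans ?_
    gcongr <;> norm_num
  · exact propY E G φ hφ hker hN hP (l := W.a₁ / 2) (μ := u + W.a₃ / 2 - W.a₁ / 2 * (W.b₂ / 12)) hv (by
      intro k hk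
      simp only [X, Y]
      rw [h, hix k hk]; ring) rfl
end APRank


/-- For every `j₀ ∈ ℚ` there is a constant `c > 0` such that for every elliptic curve `E/ℚ`
with `j`-invariant `j₀`, any non-trivial arithmetic progression of length `N ≥ 1` in the
`x`-coordinates (or `y`-coordinates) of rational points forces
`1 + rank E(ℚ) ≥ c · log N`. -/
theorem rank_ge_of_arithmetic_progression (j₀ : ℚ) :
    ∃ c : ℝ, 0 < c ∧
      ∀ (W : WeierstrassCurve ℚ) [W.IsElliptic], W.j = j₀ →
        ∀ (N : ℕ), 1 ≤ N →
          ∀ x y : Fin N → ℚ,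
            (∀ i, W.toAffine.Nonsingular (x i) (y i)) →
            (IsNontrivAP x ∨ IsNontrivAP y) →
            1 + (grpRank W.toAffine.Point : ℝ) ≥ c * Real.log N := by
  by_cases hC : 0 < 20000 * APRank.TT j₀ + 41
  · refine ⟨1 / (20000 * APRank.TT j₀ + 41), by positivity, ?_⟩
    intro W _ hj N hN x y hns hAP
    subst hj
    have h := APRank.main_bound W hN hns hAP
    rw [ge_iff_le, one_div, inv_mul_le_iff₀ hC]
    exact h
  · refine ⟨1, one_pos, ?_⟩
    intro W _ hj
    subst hj
    have := (APRank.WGD W).TT_nonneg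
    exact absurd (by positivity) hC
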